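/- arXiv:1604.00316 — 11 statements merged into one kernel-verified Lean document; each statement's English description precedes it below -/
import Mathlib

section
/- Let p be a positive rational number with √p irrational, and let x₁ = a₁ + b₁√p, …, xₙ = aₙ + bₙ√p where each xᵢ > 0 and all aᵢ, bᵢ are rational. Suppose there exist indices i, j ∈ {1, …, n} such that (aᵢ − bᵢ√p)(aⱼ − bⱼ√p) < 0. Then a positive real number z belongs to B(x₁, …, xₙ) if and only if z = e + f√p for some rational numbers e, f (i.e., z ∈ ℚ[√p] and z > 0). -/
/-- `R` is an axis-parallel closed rectangle with side lengths `w` (horizontal)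
and `h` (vertical), both positive. -/
def IsRect (R : Set (ℝ × ℝ)) (w h : ℝ) : Prop :=
  0 < w ∧ 0 < h ∧ ∃ x y : ℝ, R = Set.Icc x (x + w) ×ˢ Set.Icc y (y + h)

/-- The rectangle `R` is tiled by finitely many axis-parallel rectangles, each of
whose side ratios belongs to `ratios`: the tiles cover `R` and have pairwise
disjoint interiors. -/
def TiledBy (R : Set (ℝ × ℝ)) (ratios : Set ℝ) : Prop :=
  ∃ (m : ℕ) (T : Fin m → Set (ℝ × ℝ)) (w h : Fin m → ℝ),
    (∀ i, IsRect (T i) (w i) (h i)) ∧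
    (∀ i, w i / h i ∈ ratios ∨ h i / w i ∈ ratios) ∧
    (⋃ i, T i) = R ∧
    Pairwise fun i j => Disjoint (interior (T i)) (interior (T j))

/-- `BSet ratios` is the set of positive reals `z` such that some axis-parallel
rectangle with side ratio `z` can be tiled by finitely many axis-parallel
rectangles each of whose side ratio belongs to `ratios`. -/
def BSet (ratios : Set ℝ) : Set ℝ :=
  {z | ∃ (W H : ℝ) (R : Set (ℝ × ℝ)),
    IsRect R W H ∧ (z = W / H ∨ z = H / W) ∧ TiledBy R ratios}


open MeasureTheory in
theorem tiling_sum_poly {m : ℕ} (x y w h : Fin m → ℝ) (X Y W H : ℝ)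
    (hw : ∀ i, 0 < w i) (hh : ∀ i, 0 < h i) (hW : 0 < W) (hH : 0 < H)
    (hU : (⋃ i, Set.Icc (x i) (x i + w i) ×ˢ Set.Icc (y i) (y i + h i)) =
      Set.Icc X (X + W) ×ˢ Set.Icc Y (Y + H))
    (hd : Pairwise fun i j => Disjoint
      (interior (Set.Icc (x i) (x i + w i) ×ˢ Set.Icc (y i) (y i + h i)))
      (interior (Set.Icc (x j) (x j + w j) ×ˢ Set.Icc (y j) (y j + h j))))
    (F G : Polynomial ℝ) :
    ∑ i, (F.eval (x i + w i) - F.eval (x i)) * (G.eval (y i + h i) - G.eval (y i)) =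
      (F.eval (X + W) - F.eval X) * (G.eval (Y + H) - G.eval Y) := by
  have key : ∀ X Y W H : ℝ, 0 < W → 0 < H →
      ∫ q in Set.Icc X (X + W) ×ˢ Set.Icc Y (Y + H),
        F.derivative.eval q.1 * G.derivative.eval q.2 =
      (F.eval (X + W) - F.eval X) * (G.eval (Y + H) - G.eval Y) := by
    intro X Y W H hW hH
    have one : ∀ (F : Polynomial ℝ) (X W : ℝ), 0 < W →
        ∫ q in Set.Icc X (X + W), F.derivative.eval q = F.eval (X + W) - F.eval X := by
      intro F X W hW
      rw [integral_Icc_eq_integral_Ioc, ← intervalIntegral.integral_of_le (by linarith)]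
      refine intervalIntegral.integral_eq_sub_of_hasDerivAt (f := fun t => F.eval t)
        (f' := fun t => F.derivative.eval t) ?_ ?_
      · intro t _; exact F.hasDerivAt t
      · exact F.derivative.continuous.intervalIntegrable _ _
    rw [← one F X W hW, ← one G Y H hH]
    exact setIntegral_prod_mul (μ := volume) (ν := volume) (fun q => F.derivative.eval q)
      (fun q => G.derivative.eval q) _ _
  rw [← key X Y W H hW hH, ← hU, integral_iUnion_ae, tsum_fintype]
  · exact Finset.sum_congr rfl fun i _ => (key _ _ _ _ (hw i) (hh i)).symm
  · intro i
    exact (measurableSet_Icc.prod measurableSet_Icc).nullMeasurableSet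
  · intro i j hne
    have e : ∀ i, (interior (Set.Icc (x i) (x i + w i) ×ˢ Set.Icc (y i) (y i + h i)) : Set (ℝ × ℝ))
        =ᵐ[volume] (Set.Icc (x i) (x i + w i) ×ˢ Set.Icc (y i) (y i + h i) : Set (ℝ × ℝ)) := by
      intro i
      apply interior_ae_eq_of_null_frontier
      exact ((convex_Icc _ _).prod (convex_Icc _ _)).addHaar_frontier volume
    exact (AEDisjoint.congr (hd hne).aedisjoint (e i).symm (e j).symm)
  · rw [hU]
    apply ContinuousOn.integrableOn_compact (isCompact_Icc.prod isCompact_Icc)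
    have h1 := F.derivative.continuous
    have h2 := G.derivative.continuous
    exact ((h1.comp continuous_fst).mul (h2.comp continuous_snd)).continuousOn

theorem interp_exists (s : Finset ℝ) (F : ℝ → ℝ) :
    ∃ P : Polynomial ℝ, ∀ t ∈ s, P.eval t = F t :=
  ⟨Lagrange.interpolate s id F, fun _ ht =>
    Lagrange.eval_interpolate_at_node (v := id) F (Function.injective_id.injOn) ht⟩

theorem tiling_sum {m : ℕ} (x y w h : Fin m → ℝ) (X Y W H : ℝ)
    (hw : ∀ i, 0 < w i) (hh : ∀ i, 0 < h i) (hW : 0 < W) (hH : 0 < H)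
    (hU : (⋃ i, Set.Icc (x i) (x i + w i) ×ˢ Set.Icc (y i) (y i + h i)) =
      Set.Icc X (X + W) ×ˢ Set.Icc Y (Y + H))
    (hd : Pairwise fun i j => Disjoint
      (interior (Set.Icc (x i) (x i + w i) ×ˢ Set.Icc (y i) (y i + h i)))
      (interior (Set.Icc (x j) (x j + w j) ×ˢ Set.Icc (y j) (y j + h j))))
    (F G : ℝ → ℝ) :
    ∑ i, (F (x i + w i) - F (x i)) * (G (y i + h i) - G (y i)) =
      (F (X + W) - F X) * (G (Y + H) - G Y) := by
  classical
  obtain ⟨P, hP⟩ := interp_exists ({X, X + W} ∪ (Finset.univ.image x ∪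
    Finset.univ.image fun i => x i + w i)) F
  obtain ⟨Q, hQ⟩ := interp_exists ({Y, Y + H} ∪ (Finset.univ.image y ∪
    Finset.univ.image fun i => y i + h i)) G
  have := tiling_sum_poly x y w h X Y W H hw hh hW hH hU hd P Q
  rw [hP X (by simp), hP (X + W) (by simp), hQ Y (by simp), hQ (Y + H) (by simp)] at this
  rw [← this]
  refine Finset.sum_congr rfl fun i _ => ?_
  rw [hP (x i) (by simp), hP (x i + w i) (by simp), hQ (y i) (by simp), hQ (y i + h i) (by simp)]

theorem ratio_mem (K : Subfield ℝ) {ratios : Set ℝ} (hK : ratios ⊆ K) {R : Set (ℝ × ℝ)} {W H : ℝ}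
    (hR : IsRect R W H) (hT : TiledBy R ratios) : W / H ∈ K := by
  obtain ⟨hW, hH, X, Y, rfl⟩ := hR
  obtain ⟨m, T, w, h, hr, hrat, hU, hd⟩ := hT
  choose hw hh x y hxy using hr
  obtain rfl : T = fun i => Set.Icc (x i) (x i + w i) ×ˢ Set.Icc (y i) (y i + h i) := funext hxy
  by_contra hn
  have h1 : W ∉ Submodule.span K {H} := by
    intro hm
    obtain ⟨c, hc⟩ := Submodule.mem_span_singleton.1 hm
    apply hn
    rw [← hc]
    have : (c • H) / H = (c : ℝ) := by
      rw [Subfield.smul_def, smul_eq_mul]; field_simp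
    rw [this]; exact c.2
  obtain ⟨φ, hφ, hφ'⟩ := Submodule.exists_le_ker_of_notMem h1
  have h2 : H ∉ (⊥ : Submodule K ℝ) := by simpa using hH.ne'
  obtain ⟨ψ, hψ, -⟩ := Submodule.exists_le_ker_of_notMem h2
  have hφH : φ H = 0 := hφ' (Submodule.mem_span_singleton_self H)
  have key := fun F G => tiling_sum x y w h X Y W H hw hh hW hH hU hd F G
  have k1 := key (fun t => φ t) (fun t => ψ t)
  have k2 := key (fun t => ψ t) (fun t => φ t)
  simp only [map_add, Subfield.coe_add, add_sub_cancel_left, hφH] at k1 k2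
  have : ∀ i, ((φ (w i) : ℝ) * ψ (h i)) = ψ (w i) * φ (h i) := by
    intro i
    have hmem : w i / h i ∈ K := by
      rcases hrat i with h | h
      · exact hK h
      · have := K.inv_mem (hK h); rwa [inv_div] at this
    have e : w i = (⟨w i / h i, hmem⟩ : K) • h i := by
      have := (hh i).ne'
      rw [Subfield.smul_def, smul_eq_mul]; field_simp
    have e1 : φ (w i) = ⟨w i / h i, hmem⟩ * φ (h i) := by
      conv_lhs => rw [e, map_smul, smul_eq_mul]
    have e2 : ψ (w i) = ⟨w i / h i, hmem⟩ * ψ (h i) := by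
      conv_lhs => rw [e, map_smul, smul_eq_mul]
    rw [e1, e2]; push_cast; ring
  rw [Finset.sum_congr rfl fun i _ => this i, k2] at k1
  simp only [ZeroMemClass.coe_zero, mul_zero] at k1
  rcases mul_eq_zero.1 k1.symm with h | h
  · exact hφ (by exact_mod_cast h)
  · exact hψ (by exact_mod_cast h)

/-- the field of all `e + f √p` -/
def quadField (p : ℚ) (hp : 0 < p) (hirr : Irrational (Real.sqrt p)) : Subfield ℝ where
  carrier := {z | ∃ e f : ℚ, z = (e : ℝ) + (f : ℝ) * Real.sqrt p}
  mul_mem' := by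
    rintro _ _ ⟨a, b, rfl⟩ ⟨c, d, rfl⟩
    refine ⟨a * c + b * d * p, a * d + b * c, ?_⟩
    have : Real.sqrt p * Real.sqrt p = p := Real.mul_self_sqrt (by exact_mod_cast hp.le)
    push_cast
    linear_combination (b * d : ℝ) * this
  one_mem' := ⟨1, 0, by simp⟩
  add_mem' := by
    rintro _ _ ⟨a, b, rfl⟩ ⟨c, d, rfl⟩
    exact ⟨a + c, b + d, by push_cast; ring⟩
  zero_mem' := ⟨0, 0, by simp⟩
  neg_mem' := by
    rintro _ ⟨a, b, rfl⟩
    exact ⟨-a, -b, by push_cast; ring⟩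
  inv_mem' := by
    rintro _ ⟨a, b, rfl⟩
    have hs : Real.sqrt p * Real.sqrt p = p := Real.mul_self_sqrt (by exact_mod_cast hp.le)
    by_cases h0 : (a : ℝ) + b * Real.sqrt p = 0
    · exact ⟨0, 0, by simp [h0]⟩
    have hc : (a : ℝ) - b * Real.sqrt p ≠ 0 := by
      intro hc
      by_cases hb : b = 0
      · subst hb; simp at hc h0; exact h0 hc
      · apply hirr
        refine ⟨a / b, ?_⟩
        have : (b : ℝ) ≠ 0 := by exact_mod_cast hb
        push_cast; field_simp; linarith
    have hN : ((a : ℝ) ^ 2 - p * b ^ 2) ≠ 0 := by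
      have : ((a : ℝ) ^ 2 - p * b ^ 2) = (a + b * Real.sqrt p) * (a - b * Real.sqrt p) := by
        linear_combination (b ^ 2 : ℝ) * hs
      rw [this]; exact mul_ne_zero h0 hc
    refine ⟨a / (a ^ 2 - p * b ^ 2), -b / (a ^ 2 - p * b ^ 2), ?_⟩
    push_cast
    symm
    apply eq_inv_of_mul_eq_one_left
    field_simp
    linear_combination (-b ^ 2 : ℝ) * hs

/-- guillotine-tileable boxes -/
inductive Guil (ratios : Set ℝ) : ℝ → ℝ → Prop
  | base (w h : ℝ) : 0 < w → 0 < h → (w / h ∈ ratios ∨ h / w ∈ ratios) → Guil ratios w h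
  | hcat (w₁ w₂ h : ℝ) : Guil ratios w₁ h → Guil ratios w₂ h → Guil ratios (w₁ + w₂) h
  | vcat (w h₁ h₂ : ℝ) : Guil ratios w h₁ → Guil ratios w h₂ → Guil ratios w (h₁ + h₂)

theorem Guil.pos {r : Set ℝ} {w h : ℝ} (g : Guil r w h) : 0 < w ∧ 0 < h := by
  induction g with
  | base w h hw hh _ => exact ⟨hw, hh⟩
  | hcat w₁ w₂ h _ _ i1 i2 => exact ⟨by linarith [i1.1, i2.1], i1.2⟩
  | vcat w h₁ h₂ _ _ i1 i2 => exact ⟨i1.1, by linarith [i1.2, i2.2]⟩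

theorem Guil.symm {r : Set ℝ} {w h : ℝ} (g : Guil r w h) : Guil r h w := by
  induction g with
  | base w h hw hh k => exact .base _ _ hh hw k.symm
  | hcat w₁ w₂ h _ _ i1 i2 => exact .vcat _ _ _ i1 i2
  | vcat w h₁ h₂ _ _ i1 i2 => exact .hcat _ _ _ i1 i2

theorem Guil.scale {r : Set ℝ} {w h : ℝ} (g : Guil r w h) {c : ℝ} (hc : 0 < c) :
    Guil r (c * w) (c * h) := by
  induction g with
  | base w h hw hh k =>
    refine .base _ _ (by positivity) (by positivity) ?_
    rwa [mul_div_mul_left _ _ hc.ne', mul_div_mul_left _ _ hc.ne']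
  | hcat w₁ w₂ h _ _ i1 i2 => rw [mul_add]; exact .hcat _ _ _ i1 i2
  | vcat w h₁ h₂ _ _ i1 i2 => rw [mul_add]; exact .vcat _ _ _ i1 i2

theorem TiledBy.union {r : Set ℝ} {R₁ R₂ : Set (ℝ × ℝ)} (t₁ : TiledBy R₁ r) (t₂ : TiledBy R₂ r)
    (hd : Disjoint (interior R₁) (interior R₂)) : TiledBy (R₁ ∪ R₂) r := by
  obtain ⟨m₁, T₁, w₁, h₁, a₁, b₁, rfl, d₁⟩ := t₁
  obtain ⟨m₂, T₂, w₂, h₂, a₂, b₂, rfl, d₂⟩ := t₂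
  have hcross : ∀ i j, Disjoint (interior (T₁ i)) (interior (T₂ j)) := fun i j =>
    hd.mono (interior_mono (Set.subset_iUnion T₁ i)) (interior_mono (Set.subset_iUnion T₂ j))
  refine ⟨m₁ + m₂, Fin.append T₁ T₂, Fin.append w₁ w₂, Fin.append h₁ h₂, ?_, ?_, ?_, ?_⟩
  · intro i
    refine Fin.addCases (fun i => ?_) (fun i => ?_) i
    · simpa using a₁ i
    · simpa using a₂ i
  · intro i
    refine Fin.addCases (fun i => ?_) (fun i => ?_) i
    · simpa using b₁ i
    · simpa using b₂ i
  · ext q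
    simp only [Set.mem_union, Set.mem_iUnion]
    constructor
    · rintro ⟨i, hi⟩
      revert hi
      refine Fin.addCases (fun i hi => ?_) (fun i hi => ?_) i
      · exact Or.inl ⟨i, by simpa using hi⟩
      · exact Or.inr ⟨i, by simpa using hi⟩
    · rintro (⟨i, hi⟩ | ⟨i, hi⟩)
      · exact ⟨Fin.castAdd _ i, by simpa using hi⟩
      · exact ⟨Fin.natAdd _ i, by simpa using hi⟩
  · intro i j
    refine Fin.addCases (fun i => ?_) (fun i => ?_) i <;>
    refine Fin.addCases (fun j => ?_) (fun j => ?_) j <;> intro hne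
    · simpa using d₁ (fun e => hne (by rw [e]))
    · simpa using hcross i j
    · simpa using (hcross j i).symm
    · simpa using d₂ (fun e => hne (by rw [e]))

theorem Guil.tiled {r : Set ℝ} {w h : ℝ} (g : Guil r w h) :
    ∀ x y : ℝ, TiledBy (Set.Icc x (x + w) ×ˢ Set.Icc y (y + h)) r := by
  induction g with
  | base w h hw hh k =>
    intro x y
    refine ⟨1, fun _ => Set.Icc x (x + w) ×ˢ Set.Icc y (y + h), fun _ => w, fun _ => h,
      fun _ => ⟨hw, hh, x, y, rfl⟩, fun _ => k, by simp [Set.iUnion_const], ?_⟩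
    intro i j hne
    exact absurd (Subsingleton.elim i j) hne
  | hcat w₁ w₂ h g1 g2 i1 i2 =>
    intro x y
    have p1 := g1.pos.1
    have p2 := g2.pos.1
    have := (i1 x y).union (i2 (x + w₁) y) (by
      simp only [interior_prod_eq, interior_Icc]
      rw [Set.disjoint_left]
      rintro ⟨a, b⟩ ⟨h1, _⟩ ⟨h2, _⟩
      simp only [Set.mem_Ioo] at h1 h2
      linarith)
    rwa [← Set.union_prod, Set.Icc_union_Icc_eq_Icc (by linarith) (by linarith), add_assoc] at this
  | vcat w h₁ h₂ g1 g2 i1 i2 =>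
    intro x y
    have p1 := g1.pos.2
    have p2 := g2.pos.2
    have := (i1 x y).union (i2 x (y + h₁)) (by
      simp only [interior_prod_eq, interior_Icc]
      rw [Set.disjoint_left]
      rintro ⟨a, b⟩ ⟨_, h1⟩ ⟨_, h2⟩
      simp only [Set.mem_Ioo] at h1 h2
      linarith)
    rwa [← Set.prod_union, Set.Icc_union_Icc_eq_Icc (by linarith) (by linarith), add_assoc] at this

theorem Guil.inv {r : Set ℝ} {z : ℝ} (g : Guil r z 1) : Guil r z⁻¹ 1 := by
  have hz := g.pos.1
  have := g.symm.scale (inv_pos.2 hz)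
  rwa [mul_one, inv_mul_cancel₀ hz.ne'] at this

theorem Guil.nat {r : Set ℝ} {z : ℝ} (g : Guil r z 1) (k : ℕ) : Guil r (((k + 1 : ℕ) : ℝ) * z) 1 := by
  induction k with
  | zero => simpa using g
  | succ k ih =>
    have := Guil.hcat _ _ _ ih g
    convert this using 1
    push_cast; ring

theorem Guil.natpos {r : Set ℝ} {z : ℝ} (g : Guil r z 1) {k : ℕ} (hk : 0 < k) :
    Guil r ((k : ℝ) * z) 1 := by
  obtain ⟨j, rfl⟩ : ∃ j, k = j + 1 := ⟨k - 1, by omega⟩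
  exact g.nat j

theorem Guil.rat {r : Set ℝ} {z : ℝ} (g : Guil r z 1) {q : ℚ} (hq : 0 < q) :
    Guil r ((q : ℝ) * z) 1 := by
  have hn : 0 < q.num.toNat := by have := Rat.num_pos.2 hq; omega
  have h1 := ((g.inv.natpos q.den_pos).inv).natpos hn
  convert h1 using 1
  have e : (q : ℝ) = (q.num.toNat : ℝ) / q.den := by
    have : ((q.num.toNat : ℕ) : ℝ) = (q.num : ℝ) := by
      have : ((q.num.toNat : ℕ) : ℤ) = q.num := Int.toNat_of_nonneg (Rat.num_pos.2 hq).le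
      exact_mod_cast this
    rw [this]; exact Rat.cast_def q
  have hz := g.pos.1.ne'
  rw [e, mul_inv, inv_inv]; ring

section cone
variable {r : Set ℝ} {s : ℝ}

/-- slope of `e + f s` -/
noncomputable def slp (s : ℝ) (e f : ℚ) : ℝ := ((e : ℝ) - f * s) / (e + f * s)

theorem slp_lt {s : ℝ} (hs : 0 < s) {a b c d : ℚ} (h1 : 0 < (a : ℝ) + b * s)
    (h2 : 0 < (c : ℝ) + d * s) (h : slp s a b < slp s c d) : 0 < c * b - a * d := by
  unfold slp at h
  rw [div_lt_div_iff₀ h1 h2] at h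
  have : 0 < s * ((c : ℝ) * b - a * d) := by nlinarith
  have := pos_of_mul_pos_right this hs.le
  exact_mod_cast this

theorem Guil.interp (hs : 0 < s) {a b c d e f : ℚ} (gu : Guil r (a + b * s) 1)
    (gv : Guil r (c + d * s) 1) (hz : 0 < (e : ℝ) + f * s)
    (h1 : slp s a b < slp s e f) (h2 : slp s e f < slp s c d) : Guil r (e + f * s) 1 := by
  have d1 := slp_lt hs gu.pos.1 hz h1
  have d2 := slp_lt hs hz gv.pos.1 h2
  have d3 := slp_lt hs gu.pos.1 gv.pos.1 (h1.trans h2)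
  have := Guil.hcat _ _ _ (gu.rat (div_pos d2 d3)) (gv.rat (div_pos d1 d3))
  convert this using 1
  have d3' : ((c : ℝ) * b - a * d) ≠ 0 := by exact_mod_cast d3.ne'
  push_cast
  rw [div_mul_eq_mul_div, div_mul_eq_mul_div, ← add_div, eq_div_iff d3']
  ring

theorem slp_inv {p : ℚ} (hs : s * s = p) {a b : ℚ} (h1 : (a : ℝ) + b * s ≠ 0)
    (h2 : (a : ℝ) - b * s ≠ 0) : ∃ c d : ℚ, ((a : ℝ) + b * s)⁻¹ = c + d * s ∧
      slp s c d = (slp s a b)⁻¹ := by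
  have hN : ((a : ℝ) ^ 2 - p * b ^ 2) = (a + b * s) * (a - b * s) := by
    linear_combination (b ^ 2 : ℝ) * hs
  have e1 : ((a : ℝ) + b * s)⁻¹ = ((a / (a ^ 2 - p * b ^ 2) : ℚ) : ℝ) +
      ((-b / (a ^ 2 - p * b ^ 2) : ℚ) : ℝ) * s := by
    push_cast
    rw [hN]; field_simp; ring
  refine ⟨_, _, e1, ?_⟩
  unfold slp
  rw [← e1, inv_div]
  have : ((a / (a ^ 2 - p * b ^ 2) : ℚ) : ℝ) -
      ((-b / (a ^ 2 - p * b ^ 2) : ℚ) : ℝ) * s = ((a : ℝ) - b * s)⁻¹ := by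
    push_cast
    rw [hN]; field_simp; ring
  rw [this]; field_simp

theorem exists_neg (hs : 0 < s) {δ : ℝ} (hδ : 0 < δ) :
    ∃ a : ℚ, 0 < (a : ℝ) + (1 : ℚ) * s ∧ -δ < slp s a 1 ∧ slp s a 1 < 0 := by
  obtain ⟨a, h1, h2⟩ := exists_rat_btwn (show max 0 (s * (1 - δ)) < s from
    max_lt hs (by nlinarith [mul_pos hs hδ]))
  have h3 := (le_max_left _ _).trans_lt h1
  have h4 := (le_max_right _ _).trans_lt h1
  have h5 : 0 < (a : ℝ) + (1 : ℚ) * s := by push_cast; linarith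
  refine ⟨a, h5, ?_, ?_⟩
  · unfold slp
    rw [lt_div_iff₀ h5]; push_cast
    nlinarith [mul_pos h3 hδ]
  · unfold slp
    apply div_neg_of_neg_of_pos _ h5
    push_cast; linarith

theorem exists_pos' (hs : 0 < s) {δ : ℝ} (hδ : 0 < δ) :
    ∃ a : ℚ, 0 < (a : ℝ) + (1 : ℚ) * s ∧ 0 < slp s a 1 ∧ slp s a 1 < δ := by
  obtain ⟨a, h1, h2⟩ := exists_rat_btwn (show s < s * (1 + δ) by nlinarith [mul_pos hs hδ])
  have h5 : 0 < (a : ℝ) + (1 : ℚ) * s := by push_cast; linarith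
  refine ⟨a, h5, ?_, ?_⟩
  · unfold slp
    apply div_pos _ h5
    push_cast; linarith
  · unfold slp
    rw [div_lt_iff₀ h5]; push_cast
    nlinarith [mul_pos (hs.trans h1) hδ]

theorem Guil.all {p : ℚ} (hs : 0 < s) (hsp : s * s = p) {a b c d : ℚ} (gu : Guil r (a + b * s) 1)
    (gv : Guil r (c + d * s) 1) (hu : slp s a b < 0) (hv : 0 < slp s c d)
    {e f : ℚ} (hz : 0 < (e : ℝ) + f * s) : Guil r (e + f * s) 1 := by
  set M := |slp s e f| + 1 with hM
  have hMp : 0 < M := by positivity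
  have hle := le_abs_self (slp s e f)
  have hge := neg_abs_le (slp s e f)
  obtain ⟨k, hk, hk1, hk2⟩ := exists_neg hs
    (show 0 < min M⁻¹ (-slp s a b) from lt_min (by positivity) (by linarith))
  obtain ⟨l, hl, hl1, hl2⟩ := exists_pos' hs
    (show 0 < min M⁻¹ (slp s c d) from lt_min (by positivity) (by linarith))
  have m1 := min_le_left M⁻¹ (-slp s a b)
  have m2 := min_le_right M⁻¹ (-slp s a b)
  have m3 := min_le_left M⁻¹ (slp s c d)
  have m4 := min_le_right M⁻¹ (slp s c d)
  have gk := (gu.interp hs gv hk (by linarith) (by linarith)).inv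
  have gl := (gu.interp hs gv hl (by linarith) (by linarith)).inv
  have nk : (k : ℝ) - (1 : ℚ) * s ≠ 0 := by
    intro h; unfold slp at hk2; rw [h, zero_div] at hk2; exact lt_irrefl _ hk2
  have nl : (l : ℝ) - (1 : ℚ) * s ≠ 0 := by
    intro h; unfold slp at hl1; rw [h, zero_div] at hl1; exact lt_irrefl _ hl1
  obtain ⟨k1, k2, ek, sk⟩ := slp_inv hsp hk.ne' nk
  obtain ⟨l1, l2, el, sl⟩ := slp_inv hsp hl.ne' nl
  rw [ek] at gk
  rw [el] at gl
  refine gk.interp hs gl hz ?_ ?_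
  · rw [sk]
    have : M < (-slp s k 1)⁻¹ := (lt_inv_comm₀ hMp (by linarith)).2 (by linarith)
    rw [inv_neg] at this
    linarith
  · rw [sl]
    have : M < (slp s l 1)⁻¹ := (lt_inv_comm₀ hMp hl1).2 (by linarith)
    linarith

end cone

/-- Theorem 1(1): if some conjugate pair has opposite signs, then
`B(x₁, …, xₙ)` consists exactly of the positive elements of `ℚ[√p]`. -/
theorem stmt_0 (p : ℚ) (hp : 0 < p) (hirr : Irrational (Real.sqrt p))
    (n : ℕ) (hn : 0 < n) (a b : Fin n → ℚ) (x : Fin n → ℝ)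
    (hx : ∀ i, x i = (a i : ℝ) + (b i : ℝ) * Real.sqrt p)
    (hxpos : ∀ i, 0 < x i)
    (hij : ∃ i j : Fin n,
      ((a i : ℝ) - (b i : ℝ) * Real.sqrt p) * ((a j : ℝ) - (b j : ℝ) * Real.sqrt p) < 0)
    (z : ℝ) (hz : 0 < z) :
    z ∈ BSet (Set.range x) ↔ ∃ e f : ℚ, z = (e : ℝ) + (f : ℝ) * Real.sqrt p := by
  have hs : 0 < Real.sqrt p := Real.sqrt_pos.2 (by exact_mod_cast hp)
  have hsp : Real.sqrt p * Real.sqrt p = p := Real.mul_self_sqrt (by exact_mod_cast hp.le)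
  constructor
  · rintro ⟨W, H, R, hR, hzW, hT⟩
    have hK : Set.range x ⊆ quadField p hp hirr := by
      rintro _ ⟨i, rfl⟩
      exact ⟨a i, b i, hx i⟩
    have hm := ratio_mem (quadField p hp hirr) hK hR hT
    have : z ∈ quadField p hp hirr := by
      rcases hzW with h | h
      · rwa [h]
      · rw [h, ← inv_div]; exact Subfield.inv_mem _ hm
    exact this
  · rintro ⟨e, f, rfl⟩
    have hg : ∀ i, Guil (Set.range x) ((a i : ℝ) + (b i : ℝ) * Real.sqrt p) 1 := by
      intro i
      rw [← hx i]
      exact .base _ _ (hxpos i) one_pos (Or.inl ⟨i, by simp⟩)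
    have key : ∀ i j : Fin n, ((a i : ℝ) - (b i : ℝ) * Real.sqrt p) < 0 →
        0 < ((a j : ℝ) - (b j : ℝ) * Real.sqrt p) →
        Guil (Set.range x) ((e : ℝ) + (f : ℝ) * Real.sqrt p) 1 := by
      intro i j hi hj
      exact Guil.all hs hsp (hg i) (hg j) (div_neg_of_neg_of_pos hi (hg i).pos.1)
        (div_pos hj (hg j).pos.1) hz
    have g : Guil (Set.range x) ((e : ℝ) + (f : ℝ) * Real.sqrt p) 1 := by
      obtain ⟨i, j, h⟩ := hij
      rcases mul_neg_iff.1 h with ⟨h1, h2⟩ | ⟨h1, h2⟩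
      · exact key j i h2 h1
      · exact key i j h1 h2
    exact ⟨_, 1, _, ⟨hz, one_pos, 0, 0, rfl⟩, Or.inl (by simp), g.tiled 0 0⟩
end

section
/- Let p be a positive rational number with √p irrational, and let x₁ = a₁ + b₁√p, …, xₙ = aₙ + bₙ√p where each xᵢ > 0 and all aᵢ, bᵢ are rational. Suppose aᵢ − bᵢ√p > 0 for every i ∈ {1, …, n} (so each aᵢ > 0). Then a positive real number z belongs to B(x₁, …, xₙ) if and only if z = e + f√p with e, f ∈ ℚ, e > 0, and |f|/e ≤ max_{1 ≤ i ≤ n} |bᵢ|/aᵢ. -/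
open Set Filter Topology in
lemma aux_eventually (a b s : ℝ) (_hab : a < b) :
    ∀ᶠ ε in 𝓝[>] (0:ℝ), (s + ε ∈ Icc a b → s ∈ Ico a b) ∧ (s ∈ Ico a b → s + ε ∈ Ioo a b) := by
  have hpos : ∀ᶠ ε in 𝓝[>] (0:ℝ), 0 < ε := eventually_mem_nhdsWithin
  have hlt : ∀ c : ℝ, s < c → ∀ᶠ ε in 𝓝[>] (0:ℝ), s + ε < c := by
    intro c hc
    have : ∀ᶠ ε in 𝓝 (0:ℝ), ε < c - s := eventually_lt_nhds (by linarith)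
    filter_upwards [mem_nhdsWithin_of_mem_nhds this] with ε h
    have : ε < c - s := h
    linarith
  have h1 : ∀ᶠ ε in 𝓝[>] (0:ℝ), s < a → s + ε < a := by
    by_cases h : s < a
    · filter_upwards [hlt a h] with ε h' _ using h'
    · exact Eventually.of_forall fun ε h' => absurd h' h
  have h2 : ∀ᶠ ε in 𝓝[>] (0:ℝ), s < b → s + ε < b := by
    by_cases h : s < b
    · filter_upwards [hlt b h] with ε h' _ using h'
    · exact Eventually.of_forall fun ε h' => absurd h' h
  filter_upwards [hpos, h1, h2] with ε e0 e1 e2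
  refine ⟨fun h => ⟨?_, by linarith [h.2]⟩, fun h => ⟨by linarith [h.1], e2 h.2⟩⟩
  by_contra hc
  push Not at hc
  linarith [e1 hc, h.1]

/-- step function -/
noncomputable def stp (t e : ℝ) : ℝ := if t < e then 1 else 0

lemma aux_jump {ι : Type*} [Fintype ι] (d e : ι → ℝ)
    (h : ∀ t : ℝ, ∑ j, d j * stp t (e j) = 0) (φ : ℝ → ℝ) :
    ∑ j, d j * φ (e j) = 0 := by
  classical
  have key : ∀ c : ℝ, ∑ j with e j = c, d j = 0 := by
    intro c
    have : ∃ t < c, ∀ j, e j < c → e j ≤ t := by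
      by_cases hne : (Finset.univ.filter fun j => e j < c).Nonempty
      · obtain ⟨j0, hj0, hm⟩ := Finset.exists_max_image _ e hne
        refine ⟨e j0, (Finset.mem_filter.mp hj0).2, fun j hj => hm j (by simp [hj])⟩
      · refine ⟨c - 1, by linarith, fun j hj => absurd ⟨j, by simp [hj]⟩ hne⟩
    obtain ⟨t, htc, ht⟩ := this
    have h3 := h t
    have h4 := h c
    simp only [stp] at h3 h4
    have : ∑ j with e j = c, d j = ∑ j, d j * (if t < e j then 1 else 0)
        - ∑ j, d j * (if c < e j then 1 else 0) := by
      rw [← Finset.sum_sub_distrib, Finset.sum_filter]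
      refine Finset.sum_congr rfl fun j _ => ?_
      rcases lt_trichotomy (e j) c with hj | hj | hj
      · have := ht j hj
        rw [if_neg hj.ne, if_neg (by linarith), if_neg (by linarith)]; ring
      · rw [if_pos hj, if_pos (by linarith), if_neg (by linarith)]; ring
      · rw [if_neg hj.ne', if_pos (by linarith), if_pos (by linarith)]; ring
    rw [this, h3, h4]; ring
  rw [← Finset.sum_fiberwise_of_maps_to (s := Finset.univ) (t := Finset.univ.image e) (g := e)
    (fun i _ => Finset.mem_image_of_mem _ (Finset.mem_univ i))]
  refine Finset.sum_eq_zero fun c _ => ?_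
  have : ∑ j with e j = c, d j * φ (e j) = (∑ j with e j = c, d j) * φ c := by
    rw [Finset.sum_mul]
    refine Finset.sum_congr rfl fun j hj => ?_
    rw [(Finset.mem_filter.mp hj).2]
  rw [this, key, zero_mul]

lemma aux_int {ι : Type*} [Fintype ι] (c a b : ι → ℝ) (hab : ∀ i, a i < b i)
    (C A B : ℝ) (hAB : A < B)
    (h : ∀ t : ℝ, ∑ j, c j * (if t ∈ Set.Ico (a j) (b j) then 1 else 0)
      = C * (if t ∈ Set.Ico A B then 1 else 0)) (φ : ℝ → ℝ) :
    ∑ j, c j * (φ (b j) - φ (a j)) = C * (φ B - φ A) := by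
  have ind : ∀ (t x y : ℝ), x < y → (if t ∈ Set.Ico x y then (1:ℝ) else 0)
      = stp t y - stp t x := by
    intro t x y hxy
    simp only [Set.mem_Ico, stp]
    split_ifs <;> first | (exfalso; grind) | norm_num
  have := aux_jump (ι := (ι ⊕ ι) ⊕ (Unit ⊕ Unit))
    (Sum.elim (Sum.elim c (fun i => - c i)) (Sum.elim (fun _ => -C) (fun _ => C)))
    (Sum.elim (Sum.elim b a) (Sum.elim (fun _ => B) (fun _ => A))) ?_ φ
  · simp only [Fintype.sum_sum_type, Sum.elim_inl, Sum.elim_inr, Finset.univ_unique,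
      Finset.sum_singleton] at this
    simp only [mul_sub, Finset.sum_sub_distrib]
    simp only [neg_mul, Finset.sum_neg_distrib] at this
    linarith
  · intro t
    have h1 := h t
    rw [ind t A B hAB] at h1
    rw [Finset.sum_congr rfl (fun j _ => by rw [ind t (a j) (b j) (hab j)])] at h1
    simp only [mul_sub, Finset.sum_sub_distrib] at h1
    simp only [Fintype.sum_sum_type, Sum.elim_inl, Sum.elim_inr, Finset.univ_unique,
      Finset.sum_singleton, neg_mul, Finset.sum_neg_distrib]
    linarith

open Set Filter Topology in
lemma aux_area {m : ℕ} (X Y W H : ℝ) (hW : 0 < W) (hH : 0 < H)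
    (x y w h : Fin m → ℝ) (hw : ∀ i, 0 < w i) (hh : ∀ i, 0 < h i)
    (hU : (⋃ i, Icc (x i) (x i + w i) ×ˢ Icc (y i) (y i + h i))
      = Icc X (X + W) ×ˢ Icc Y (Y + H))
    (hD : Pairwise fun i j => Disjoint (interior (Icc (x i) (x i + w i) ×ˢ Icc (y i) (y i + h i)))
      (interior (Icc (x j) (x j + w j) ×ˢ Icc (y j) (y j + h j))))
    (φ ψ : ℝ → ℝ) :
    ∑ i, (φ (x i + w i) - φ (x i)) * (ψ (y i + h i) - ψ (y i))
      = (φ (X + W) - φ X) * (ψ (Y + H) - ψ Y) := by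
  have step : ∀ s t : ℝ, ∑ i, (if s ∈ Ico (x i) (x i + w i) then (1:ℝ) else 0) *
      (if t ∈ Ico (y i) (y i + h i) then 1 else 0) =
      (if s ∈ Ico X (X + W) then 1 else 0) * (if t ∈ Ico Y (Y + H) then 1 else 0) := by
    intro s t
    have e1 := aux_eventually X (X + W) s (by linarith)
    have e2 := aux_eventually Y (Y + H) t (by linarith)
    have e3 := eventually_all.mpr
      fun i => aux_eventually (x i) (x i + w i) s (by linarith [hw i])
    have e4 := eventually_all.mpr
      fun i => aux_eventually (y i) (y i + h i) t (by linarith [hh i])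
    obtain ⟨ε, ⟨⟨h1, h2⟩, h3⟩, h4⟩ := (((e1.and e2).and e3).and e4).exists
    have toIcc : ∀ {a b c : ℝ}, c ∈ Ioo a b → c ∈ Icc a b := fun h => Ioo_subset_Icc_self h
    have mem : (∃ i, s ∈ Ico (x i) (x i + w i) ∧ t ∈ Ico (y i) (y i + h i)) ↔
        (s ∈ Ico X (X + W) ∧ t ∈ Ico Y (Y + H)) := by
      constructor
      · rintro ⟨i, hs, ht⟩
        have : (s + ε, t + ε) ∈ Icc X (X + W) ×ˢ Icc Y (Y + H) := by
          rw [← hU]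
          exact mem_iUnion.mpr ⟨i, toIcc ((h3 i).2 hs), toIcc ((h4 i).2 ht)⟩
        exact ⟨h1.1 this.1, h2.1 this.2⟩
      · rintro ⟨hs, ht⟩
        have : (s + ε, t + ε) ∈ Icc X (X + W) ×ˢ Icc Y (Y + H) :=
          ⟨toIcc (h1.2 hs), toIcc (h2.2 ht)⟩
        rw [← hU] at this
        obtain ⟨i, hi⟩ := mem_iUnion.mp this
        exact ⟨i, (h3 i).1 hi.1, (h4 i).1 hi.2⟩
    have conv : ∀ (P Q : Prop) [Decidable P] [Decidable Q], (if P then (1:ℝ) else 0) * (if Q then 1 else 0)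
        = if P ∧ Q then 1 else 0 := by
      intro P Q _ _; by_cases hP : P <;> by_cases hQ : Q <;> simp [hP, hQ]
    simp only [conv]
    by_cases hE : s ∈ Ico X (X + W) ∧ t ∈ Ico Y (Y + H)
    · rw [if_pos hE]
      obtain ⟨i, hi⟩ := mem.mpr hE
      rw [Finset.sum_eq_single i, if_pos hi]
      · intro j _ hji
        rw [if_neg]
        intro hj
        have := hD hji
        dsimp only at this
        rw [interior_prod_eq, interior_prod_eq, interior_Icc, interior_Icc, interior_Icc,
          interior_Icc] at this
        have m1 : (s + ε, t + ε) ∈ Ioo (x j) (x j + w j) ×ˢ Ioo (y j) (y j + h j) :=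
          ⟨(h3 j).2 hj.1, (h4 j).2 hj.2⟩
        exact Set.disjoint_left.mp this m1 ⟨(h3 i).2 hi.1, (h4 i).2 hi.2⟩
      · intro h; exact absurd (Finset.mem_univ i) h
    · rw [if_neg hE]
      refine Finset.sum_eq_zero fun i _ => if_neg fun hi => hE (mem.mp ⟨i, hi⟩)
  have s2 := fun s => aux_int (fun i => (if s ∈ Ico (x i) (x i + w i) then (1:ℝ) else 0))
    y (fun i => y i + h i) (fun i => by linarith [hh i])
    (if s ∈ Ico X (X + W) then 1 else 0) Y (Y + H) (by linarith) (step s) ψ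
  have s3 := aux_int (fun i => ψ (y i + h i) - ψ (y i)) x (fun i => x i + w i)
    (fun i => by linarith [hw i]) (ψ (Y + H) - ψ Y) X (X + W) (by linarith)
    (fun s => by
      rw [mul_comm, ← s2 s]
      exact Finset.sum_congr rfl fun i _ => mul_comm _ _) φ
  rw [mul_comm, ← s3]
  exact Finset.sum_congr rfl fun i _ => mul_comm _ _

/-- symmetric form -/
noncomputable def qf (r A B C : ℝ) (v : ℝ →ₗ[ℚ] ℚ) (w h : ℝ) : ℝ :=
  A * ((v (r * w) : ℝ) * (v (r * h) : ℝ)) + B * ((v (r * w) : ℝ) * (v h : ℝ))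
   + B * ((v w : ℝ) * (v (r * h) : ℝ)) + C * ((v w : ℝ) * (v h : ℝ))

lemma qf_symm (r A B C : ℝ) (v : ℝ →ₗ[ℚ] ℚ) (w h : ℝ) : qf r A B C v w h = qf r A B C v h w := by
  unfold qf; ring

lemma aux_forms (S : Set ℝ) (z : ℝ) (hz : z ∈ BSet S) :
    ∃ H : ℝ, 0 < H ∧ ∀ (r A B C : ℝ) (v : ℝ →ₗ[ℚ] ℚ),
      (∀ s ∈ S, ∀ h, 0 ≤ qf r A B C v (s * h) h) → 0 ≤ qf r A B C v (z * H) H := by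
  obtain ⟨W, H, R, ⟨hW, hH, X, Y, rfl⟩, hzz, m, T, w, h, hT, hr, hU, hD⟩ := hz
  have main : ∀ (r A B C : ℝ) (v : ℝ →ₗ[ℚ] ℚ),
      (∀ s ∈ S, ∀ h, 0 ≤ qf r A B C v (s * h) h) → 0 ≤ qf r A B C v W H := by
    intro r A B C v hv
    choose hw hh x y hxy using hT
    obtain rfl : T = fun i => _ := funext hxy
    have add : ∀ φ ψ : ℝ →ₗ[ℚ] ℚ, ∑ i, (φ (w i) : ℝ) * (ψ (h i) : ℝ) = φ W * ψ H := by
      intro φ ψ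
      have := aux_area X Y W H hW hH x y w h hw hh hU hD (fun t => (φ t : ℝ)) (fun t => (ψ t : ℝ))
      simpa using this
    let u : ℝ →ₗ[ℚ] ℚ := v.comp (LinearMap.mulLeft ℚ r)
    have hu : ∀ t, u t = v (r * t) := fun t => rfl
    have : qf r A B C v W H = ∑ i, qf r A B C v (w i) (h i) := by
      simp only [qf, Finset.sum_add_distrib, ← Finset.mul_sum, ← hu, add]
    rw [this]
    refine Finset.sum_nonneg fun i _ => ?_
    rcases hr i with h1 | h1
    · have := hv _ h1 (h i)
      rwa [div_mul_cancel₀ _ (hh i).ne'] at this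
    · have := hv _ h1 (w i)
      rwa [div_mul_cancel₀ _ (hw i).ne', qf_symm] at this
  rcases hzz with rfl | rfl
  · refine ⟨H, hH, fun r A B C v hv => ?_⟩
    rw [div_mul_cancel₀ _ hH.ne']
    exact main r A B C v hv
  · refine ⟨W, hW, fun r A B C v hv => ?_⟩
    rw [div_mul_cancel₀ _ hW.ne', qf_symm]
    exact main r A B C v hv

lemma aux_lin (v : ℝ →ₗ[ℚ] ℚ) (a b : ℚ) (s t : ℝ) :
    v ((a:ℝ) * s + (b:ℝ) * t) = a * v s + b * v t := by
  rw [← Rat.smul_def, ← Rat.smul_def, map_add, map_smul, map_smul]; rfl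

lemma qf_eval (p : ℚ) (hp : 0 < p) (A B C : ℝ) (v : ℝ →ₗ[ℚ] ℚ) (a b : ℚ) (h : ℝ) :
    qf (Real.sqrt p) A B C v (((a:ℝ) + (b:ℝ) * Real.sqrt p) * h) h =
    A * ((a * v (Real.sqrt p * h) + b * p * v h) * v (Real.sqrt p * h))
    + B * ((a * v (Real.sqrt p * h) + b * p * v h) * v h)
    + B * ((a * v h + b * v (Real.sqrt p * h)) * v (Real.sqrt p * h))
    + C * ((a * v h + b * v (Real.sqrt p * h)) * v h) := by
  have hs : Real.sqrt p * Real.sqrt p = p := Real.mul_self_sqrt (by exact_mod_cast hp.le)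
  have h1 : Real.sqrt p * (((a:ℝ) + (b:ℝ) * Real.sqrt p) * h)
      = (a:ℝ) * (Real.sqrt p * h) + ((b * p : ℚ) : ℝ) * h := by
    push_cast; linear_combination (b:ℝ) * h * hs
  have h2 : (((a:ℝ) + (b:ℝ) * Real.sqrt p) * h)
      = (a:ℝ) * h + (b : ℝ) * (Real.sqrt p * h) := by ring
  unfold qf
  rw [h1, h2, aux_lin, aux_lin]
  push_cast
  ring

lemma aux_dual (P : Submodule ℚ ℝ) (t : ℝ) (ht : t ∉ P) :
    ∃ v : ℝ →ₗ[ℚ] ℚ, v t = 1 ∧ ∀ s ∈ P, v s = 0 := by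
  obtain ⟨f, hf, hP⟩ := Submodule.exists_le_ker_of_notMem ht
  refine ⟨(f t)⁻¹ • f, ?_, fun s hs => ?_⟩
  · simp [hf]
  · have : f s = 0 := hP hs
    simp [this]

lemma aux_only_if (p : ℚ) (hp : 0 < p) (hirr : Irrational (Real.sqrt p))
    (n : ℕ) (a b : Fin n → ℚ) (x : Fin n → ℝ)
    (hx : ∀ i, x i = (a i : ℝ) + (b i : ℝ) * Real.sqrt p)
    (hxpos : ∀ i, 0 < x i)
    (hconj : ∀ i, 0 < (a i : ℝ) - (b i : ℝ) * Real.sqrt p)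
    (z : ℝ) (hz : z ∈ BSet (Set.range x)) :
    ∃ e f : ℚ, z = (e : ℝ) + (f : ℝ) * Real.sqrt p ∧
      ∀ m : ℚ, 0 < m → m ^ 2 * p < 1 → (∀ i, |b i| ≤ m * a i) → |f| ≤ m * e := by
  obtain ⟨H, hH, hF⟩ := aux_forms _ z hz
  set r := Real.sqrt p with hr
  have hs : r * r = p := Real.mul_self_sqrt (by exact_mod_cast hp.le)
  have hr0 : 0 < r := Real.sqrt_pos.mpr (by exact_mod_cast hp)
  have hspan : r * H ∉ Submodule.span ℚ {H} := by
    rw [Submodule.mem_span_singleton]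
    rintro ⟨q, hq⟩
    rw [Rat.smul_def] at hq
    exact hirr ⟨q, mul_right_cancel₀ hH.ne' hq⟩
  obtain ⟨v1, h1, h1'⟩ := aux_dual _ _ hspan
  have h1H : v1 H = 0 := h1' _ (Submodule.mem_span_singleton_self H)
  have hK : r * (z * H) ∈ Submodule.span ℚ {H, r * H} := by
    by_contra hcon
    obtain ⟨v2, h2, h2'⟩ := aux_dual _ _ hcon
    have h2H : v2 H = 0 := h2' _ (Submodule.subset_span (by simp))
    have h2r : v2 (r * H) = 0 := h2' _ (Submodule.subset_span (by simp))
    have := hF r 1 0 p (v1 - (v1 (r * (z * H)) + 1) • v2) ?_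
    · simp [qf, h1, h1H, h2, h2H, h2r] at this
      norm_num at this
    · rintro _ ⟨i, rfl⟩ h
      rw [hx, qf_eval p hp]
      generalize ((v1 - (v1 (r * (z * H)) + 1) • v2) h : ℚ) = V
      rw [← hr]
      generalize ((v1 - (v1 (r * (z * H)) + 1) • v2) (r * h) : ℚ) = U
      have hxp := hxpos i
      rw [hx] at hxp
      have := mul_nonneg hxp.le (sq_nonneg ((U:ℝ) + r * V))
      have := mul_nonneg (hconj i).le (sq_nonneg ((U:ℝ) - r * V))
      rw [← hs]
      nlinarith
  rw [Submodule.mem_span_pair] at hK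
  obtain ⟨q1, q2, hq⟩ := hK
  rw [Rat.smul_def, Rat.smul_def] at hq
  have hz : z = ((q2 : ℚ) : ℝ) + ((q1 / p : ℚ) : ℝ) * r := by
    have hp' : (p:ℝ) ≠ 0 := by exact_mod_cast hp.ne'
    have : (q1:ℝ) + q2 * r = r * z := by
      apply mul_right_cancel₀ hH.ne'
      linarith
    apply mul_left_cancel₀ hr0.ne'
    rw [← this]
    push_cast
    field_simp
    rw [← hs]; ring
  refine ⟨q2, q1 / p, hz, ?_⟩
  generalize q1 / p = f at hz
  intro m hm hmp hb
  have hmR : (0:ℝ) < m := by exact_mod_cast hm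
  have hmpR : (m:ℝ) ^ 2 * p < 1 := by exact_mod_cast hmp
  have hC : 0 ≤ 1 / (m:ℝ)^2 - p := by
    rw [sub_nonneg, le_div_iff₀ (by positivity)]; linarith
  have hab : ∀ i, (0:ℝ) ≤ m * a i - b i ∧ (0:ℝ) ≤ m * a i + b i := by
    intro i
    have := abs_le.mp (hb i)
    constructor
    · have : 0 ≤ m * a i - b i := by linarith
      exact_mod_cast this
    · have : 0 ≤ m * a i + b i := by linarith
      exact_mod_cast this
  have c1 := hF r m (-1) ((2 - m^2 * p)/m) v1 ?_
  have c2 := hF r m 1 ((2 - m^2 * p)/m) v1 ?_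
  · rw [hz, qf_eval p hp, ← hr, h1, h1H] at c1 c2
    norm_num at c1 c2
    rw [abs_le]
    constructor
    · have : (0:ℝ) ≤ m * q2 + f := by linarith
      have : 0 ≤ m * q2 + f := by exact_mod_cast this
      linarith
    · have : (0:ℝ) ≤ m * q2 - f := by linarith
      have : 0 ≤ m * q2 - f := by exact_mod_cast this
      linarith
  · rintro _ ⟨i, rfl⟩ h
    rw [hx, qf_eval p hp, ← hr]
    generalize v1 h = V
    generalize v1 (r * h) = U
    have e1 := mul_nonneg (hab i).2 (sq_nonneg ((U:ℝ) + V / m))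
    have e2 := mul_nonneg (mul_nonneg (hab i).1 hC) (sq_nonneg (V:ℝ))
    refine le_of_le_of_eq (add_nonneg e1 e2) ?_
    field_simp
    ring
  · rintro _ ⟨i, rfl⟩ h
    rw [hx, qf_eval p hp, ← hr]
    generalize v1 h = V
    generalize v1 (r * h) = U
    have e1 := mul_nonneg (hab i).1 (sq_nonneg ((U:ℝ) - V / m))
    have e2 := mul_nonneg (mul_nonneg (hab i).2 hC) (sq_nonneg (V:ℝ))
    refine le_of_le_of_eq (add_nonneg e1 e2) ?_
    field_simp
    ring

lemma aux_union (S : Set ℝ) (R1 R2 : Set (ℝ × ℝ)) (h1 : TiledBy R1 S) (h2 : TiledBy R2 S)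
    (hd : Disjoint (interior R1) (interior R2)) : TiledBy (R1 ∪ R2) S := by
  obtain ⟨m1, T1, w1, k1, a1, b1, c1, d1⟩ := h1
  obtain ⟨m2, T2, w2, k2, a2, b2, c2, d2⟩ := h2
  have s1 : ∀ i, interior (T1 i) ⊆ interior R1 := fun i =>
    interior_mono (c1 ▸ Set.subset_iUnion T1 i)
  have s2 : ∀ i, interior (T2 i) ⊆ interior R2 := fun i =>
    interior_mono (c2 ▸ Set.subset_iUnion T2 i)
  refine ⟨m1 + m2, Fin.append T1 T2, Fin.append w1 w2, Fin.append k1 k2, ?_, ?_, ?_, ?_⟩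
  · intro i
    refine Fin.addCases (fun i => ?_) (fun i => ?_) i
    · simpa using a1 i
    · simpa using a2 i
  · intro i
    refine Fin.addCases (fun i => ?_) (fun i => ?_) i
    · simpa using b1 i
    · simpa using b2 i
  · rw [← c1, ← c2]
    ext q
    simp only [Set.mem_iUnion, Set.mem_union]
    constructor
    · rintro ⟨i, hi⟩
      revert hi
      refine Fin.addCases (fun i => ?_) (fun i => ?_) i
      · intro hi; left; exact ⟨i, by simpa using hi⟩
      · intro hi; right; exact ⟨i, by simpa using hi⟩
    · rintro (⟨i, hi⟩ | ⟨i, hi⟩)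
      · exact ⟨Fin.castAdd _ i, by simpa using hi⟩
      · exact ⟨Fin.natAdd _ i, by simpa using hi⟩
  · intro i j
    refine Fin.addCases (fun i => ?_) (fun i => ?_) i <;>
    refine Fin.addCases (fun j => ?_) (fun j => ?_) j <;> intro hij <;>
    simp only [Fin.append_left, Fin.append_right]
    · exact d1 (fun h => hij (by rw [h]))
    · exact hd.mono (s1 i) (s2 j)
    · exact hd.symm.mono (s2 i) (s1 j)
    · exact d2 (fun h => hij (by rw [h]))

/-- every rectangle of ratio `z` can be tiled -/
def GoodR (S : Set ℝ) (z : ℝ) : Prop :=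
  0 < z ∧ ∀ X Y H : ℝ, 0 < H →
    TiledBy (Set.Icc X (X + z * H) ×ˢ Set.Icc Y (Y + H)) S ∧
    TiledBy (Set.Icc X (X + H) ×ˢ Set.Icc Y (Y + z * H)) S

lemma aux_single (S : Set ℝ) (X Y w h : ℝ) (hw : 0 < w) (hh : 0 < h)
    (hr : w / h ∈ S ∨ h / w ∈ S) : TiledBy (Set.Icc X (X + w) ×ˢ Set.Icc Y (Y + h)) S := by
  refine ⟨1, fun _ => _, fun _ => w, fun _ => h, fun _ => ⟨hw, hh, X, Y, rfl⟩, fun _ => hr, ?_, ?_⟩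
  · exact Set.iUnion_const _
  · intro i j hij
    exact absurd (Subsingleton.elim i j) hij

lemma good_base (S : Set ℝ) (z : ℝ) (hz : 0 < z) (h : z ∈ S) : GoodR S z := by
  refine ⟨hz, fun X Y H hH => ⟨?_, ?_⟩⟩
  · exact aux_single S X Y _ _ (by positivity) hH (Or.inl (by rwa [mul_div_cancel_right₀ _ hH.ne']))
  · exact aux_single S X Y _ _ hH (by positivity) (Or.inr (by rwa [mul_div_cancel_right₀ _ hH.ne']))

lemma good_inv (S : Set ℝ) (z : ℝ) (h : GoodR S z) : GoodR S z⁻¹ := by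
  obtain ⟨hz, h⟩ := h
  refine ⟨inv_pos.mpr hz, fun X Y H hH => ?_⟩
  have := h X Y (z⁻¹ * H) (by positivity)
  rw [mul_inv_cancel_left₀ hz.ne'] at this
  exact this.symm

lemma good_add (S : Set ℝ) (z w : ℝ) (hz : GoodR S z) (hw : GoodR S w) : GoodR S (z + w) := by
  obtain ⟨hz0, hz⟩ := hz
  obtain ⟨hw0, hw⟩ := hw
  refine ⟨by positivity, fun X Y H hH => ?_⟩
  have p1 : 0 < z * H := by positivity
  have p2 : 0 < w * H := by positivity
  have sp : ∀ X : ℝ, Set.Icc X (X + (z + w) * H)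
      = Set.Icc X (X + z * H) ∪ Set.Icc (X + z * H) (X + z * H + w * H) := by
    intro X
    rw [Set.Icc_union_Icc_eq_Icc (by linarith) (by linarith)]
    congr 1; ring
  have dj : ∀ X : ℝ, Disjoint (Set.Ioo X (X + z * H)) (Set.Ioo (X + z * H) (X + z * H + w * H)) := by
    intro X
    rw [Set.disjoint_left]
    intro t h1 h2
    linarith [h1.2, h2.1]
  constructor
  · rw [sp, Set.union_prod]
    refine aux_union S _ _ (hz X Y H hH).1 (hw _ Y H hH).1 ?_
    rw [interior_prod_eq, interior_prod_eq, interior_Icc, interior_Icc, interior_Icc]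
    exact Set.Disjoint.set_prod_left (dj X) _ _
  · rw [sp, Set.prod_union]
    refine aux_union S _ _ (hz X Y H hH).2 (hw X _ H hH).2 ?_
    rw [interior_prod_eq, interior_prod_eq, interior_Icc, interior_Icc, interior_Icc]
    exact Set.Disjoint.set_prod_right (dj Y) _ _

lemma good_nat (S : Set ℝ) (z : ℝ) (hz : GoodR S z) (k : ℕ) : GoodR S (((k + 1 : ℕ) : ℝ) * z) := by
  induction k with
  | zero => simpa using hz
  | succ k ih =>
    have := good_add S _ _ ih hz
    convert this using 1
    push_cast; ring

lemma good_rat (S : Set ℝ) (z : ℝ) (hz : GoodR S z) (q : ℚ) (hq : 0 < q) :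
    GoodR S ((q : ℝ) * z) := by
  have hn : ∀ k : ℕ, 0 < k → ∀ y, GoodR S y → GoodR S ((k : ℝ) * y) := by
    intro k hk y hy
    obtain ⟨j, rfl⟩ := Nat.exists_eq_succ_of_ne_zero hk.ne'
    exact good_nat S y hy j
  have h1 := good_inv S _ (hn q.den q.den_pos _ (good_inv S z hz))
  have hnum : 0 < q.num := Rat.num_pos.mpr hq
  have h2 := hn q.num.toNat (by omega) _ h1
  convert h2 using 1
  have e : ((q.num.toNat : ℕ) : ℝ) = (q.num : ℝ) := by
    have : ((q.num.toNat : ℕ) : ℤ) = q.num := Int.toNat_of_nonneg hnum.le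
    exact_mod_cast congrArg (Int.cast (R := ℝ)) this
  rw [e, mul_inv, inv_inv, ← mul_assoc]
  congr 1
  conv_lhs => rw [Rat.cast_def]
  rw [div_eq_mul_inv]

lemma good_comb (S : Set ℝ) (y z : ℝ) (hy : GoodR S y) (hz : GoodR S z) (s t : ℚ)
    (hs : 0 ≤ s) (ht : 0 ≤ t) (hst : 0 < s + t) : GoodR S ((s : ℝ) * y + (t : ℝ) * z) := by
  rcases hs.eq_or_lt with rfl | hs
  · simpa using good_rat S z hz t (by linarith)
  · rcases ht.eq_or_lt with rfl | ht
    · simpa using good_rat S y hy s hs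
    · exact good_add S _ _ (good_rat S y hy s hs) (good_rat S z hz t ht)

/-- Theorem 1(2): if all conjugates are positive, then `B(x₁, …, xₙ)` is the set
`M(x₁, …, xₙ)` of numbers `e + f√p` with `e > 0` and `|f|/e ≤ max |bᵢ|/aᵢ`. -/
theorem stmt_1 (p : ℚ) (hp : 0 < p) (hirr : Irrational (Real.sqrt p))
    (n : ℕ) (hn : 0 < n) (a b : Fin n → ℚ) (x : Fin n → ℝ)
    (hx : ∀ i, x i = (a i : ℝ) + (b i : ℝ) * Real.sqrt p)
    (hxpos : ∀ i, 0 < x i)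
    (hconj : ∀ i, 0 < (a i : ℝ) - (b i : ℝ) * Real.sqrt p)
    (z : ℝ) (hz : 0 < z) :
    z ∈ BSet (Set.range x) ↔
      ∃ e f : ℚ, z = (e : ℝ) + (f : ℝ) * Real.sqrt p ∧ 0 < e ∧
        |f| / e ≤ Finset.univ.sup' (Finset.univ_nonempty_iff.mpr
          (Fin.pos_iff_nonempty.mp hn)) (fun i => |b i| / a i) := by
  have hr0 : 0 < Real.sqrt p := Real.sqrt_pos.mpr (by exact_mod_cast hp)
  have hs : Real.sqrt p * Real.sqrt p = p := Real.mul_self_sqrt (by exact_mod_cast hp.le)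
  have ha : ∀ i, 0 < a i := by
    intro i
    have h1 := hxpos i
    rw [hx] at h1
    have : (0:ℝ) < a i := by linarith [hconj i]
    exact_mod_cast this
  have hne : (Finset.univ : Finset (Fin n)).Nonempty :=
    Finset.univ_nonempty_iff.mpr (Fin.pos_iff_nonempty.mp hn)
  obtain ⟨k, -, hk⟩ := Finset.exists_mem_eq_sup' hne (fun i => |b i| / a i)
  have hle : ∀ i, |b i| / a i ≤ |b k| / a k := by
    intro i
    rw [← hk]
    exact Finset.le_sup' (fun i => |b i| / a i) (Finset.mem_univ i)
  rw [hk]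
  constructor
  · intro hzB
    obtain ⟨e, f, hef, hm⟩ := aux_only_if p hp hirr n a b x hx hxpos hconj z hzB
    set M := |b k| / a k with hM
    have hM0 : 0 ≤ M := div_nonneg (abs_nonneg _) (ha k).le
    have hMr : (M:ℝ) < 1 / Real.sqrt p := by
      have hak : (0:ℝ) < a k := by exact_mod_cast ha k
      rw [hM]
      push_cast
      rw [div_lt_div_iff₀ hak hr0]
      have h1 := hxpos k
      rw [hx] at h1
      have h2 := hconj k
      rcases abs_cases (b k : ℝ) with h | h <;> rw [h.1] <;> linarith
    have key : ∀ c : ℝ, (M:ℝ) < c → ∃ m : ℚ, (m:ℝ) < c ∧ |f| ≤ m * e ∧ 0 < m := by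
      intro c hc
      obtain ⟨m, hm1, hm2⟩ := exists_rat_btwn (lt_min hc hMr)
      have hMm : M < m := by exact_mod_cast hm1
      have hmR : (0:ℝ) < m := by exact_mod_cast hM0.trans_lt hMm
      have hm0 : 0 < m := hM0.trans_lt hMm
      refine ⟨m, hm2.trans_le (min_le_left _ _), hm m hm0 ?_ ?_, hm0⟩
      · have h1 := hm2.trans_le (min_le_right _ _)
        rw [lt_div_iff₀ hr0] at h1
        have h2 : (m:ℝ)^2 * p < 1 := by
          have : 0 < (m:ℝ) * Real.sqrt p := by positivity
          have h5 : (m:ℝ)^2 * p = (m * Real.sqrt p)^2 := by linear_combination -(m:ℝ)^2 * hs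
          rw [h5]
          nlinarith
        exact_mod_cast h2
      · intro i
        have := (hle i).trans hMm.le
        rwa [div_le_iff₀ (ha i)] at this
    have he : 0 < e := by
      obtain ⟨m, -, h1, h2⟩ := key (M + 1) (by linarith)
      have h3 : 0 ≤ e := by
        by_contra hc
        push Not at hc
        nlinarith [abs_nonneg f]
      rcases h3.eq_or_lt with h | h
      · exfalso
        rw [← h, mul_zero] at h1
        have hf : f = 0 := abs_eq_zero.mp (le_antisymm h1 (abs_nonneg f))
        rw [← h, hf] at hef
        simp at hef
        linarith
      · exact h
    refine ⟨e, f, hef, he, ?_⟩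
    by_contra hc
    push Not at hc
    obtain ⟨m, h1, h2, -⟩ := key ((|f| / e : ℚ) : ℝ) (by exact_mod_cast hc)
    have h3 : m < |f| / e := by exact_mod_cast h1
    rw [lt_div_iff₀ he] at h3
    linarith
  · rintro ⟨e, f, hef, he, hfe⟩
    have g1 : GoodR (Set.range x) (x k) := good_base _ _ (hxpos k) ⟨k, rfl⟩
    have hxk := hxpos k
    rw [hx] at hxk
    have hN : (0:ℝ) < ((a k ^ 2 - p * b k ^ 2 : ℚ) : ℝ) := by
      have := mul_pos hxk (hconj k)
      push_cast
      linear_combination this - (b k : ℝ)^2 * hs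
    have g2 := good_rat _ _ (good_inv _ _ g1) (a k ^ 2 - p * b k ^ 2) (by exact_mod_cast hN)
    have e2 : ((a k ^ 2 - p * b k ^ 2 : ℚ) : ℝ) * (x k)⁻¹ = a k - b k * Real.sqrt p := by
      rw [← div_eq_mul_inv, div_eq_iff (hxpos k).ne', hx]
      push_cast
      linear_combination (b k : ℝ)^2 * hs
    rw [e2] at g2
    rw [hx] at g1
    have hfin : GoodR (Set.range x) z := by
      rw [div_le_div_iff₀ he (ha k)] at hfe
      by_cases hb : b k = 0
      · have hf : f = 0 := by
          rw [hb] at hfe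
          simp at hfe
          have : |f| ≤ 0 := by
            by_contra hc
            push Not at hc
            have := mul_pos hc (ha k)
            linarith
          exact abs_eq_zero.mp (le_antisymm this (abs_nonneg f))
        have := good_rat _ _ g1 (e / a k) (div_pos he (ha k))
        convert this using 1
        have hak : (a k : ℝ) ≠ 0 := by exact_mod_cast (ha k).ne'
        rw [hef, hf, hb]
        push_cast
        field_simp
        ring
      · have habs : |f / b k| ≤ e / a k := by
          rw [abs_div, div_le_div_iff₀ (abs_pos.mpr hb) (ha k)]
          linarith
        have h3 := abs_le.mp habs
        have h4 : 0 < e / a k := div_pos he (ha k)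
        have := good_comb _ _ _ g1 g2 ((e / a k + f / b k) / 2) ((e / a k - f / b k) / 2)
          (by linarith) (by linarith) (by linarith)
        convert this using 1
        have hak : (a k : ℝ) ≠ 0 := by exact_mod_cast (ha k).ne'
        have hbk : (b k : ℝ) ≠ 0 := by exact_mod_cast hb
        rw [hef]
        push_cast
        field_simp
        ring
    refine ⟨z * 1, 1, _, ⟨by linarith, one_pos, 0, 0, rfl⟩, Or.inl (by simp), ?_⟩
    exact (hfin.2 0 0 1 one_pos).1
end

section
/- Let p be a positive rational number with √p irrational, and let x₁ = a₁ + b₁√p, …, xₙ = aₙ + bₙ√p where each xᵢ > 0 and all aᵢ, bᵢ are rational. Suppose aᵢ − bᵢ√p < 0 for every i ∈ {1, …, n} (so each bᵢ > 0). Then a positive real number z belongs to B(x₁, …, xₙ) if and only if z = e + f√p with e, f ∈ ℚ, f > 0, and |e|/f ≤ max_{1 ≤ i ≤ n} |aᵢ|/bᵢ. -/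
lemma step_li : LinearIndependent ℚ (fun a : ℝ => (Set.Ioi a).indicator (fun _ => (1:ℚ))) := by
  classical
  rw [linearIndependent_iff']
  intro s g hg i hi
  have hev : ∀ᶠ b in nhdsWithin i (Set.Ioi i), ∀ a ∈ s, i < a → b ≤ a := by
    rw [Filter.eventually_all_finset]
    intro a _
    by_cases h : i < a
    · have : ∀ᶠ b in nhdsWithin i (Set.Ioi i), b < a :=
        nhdsWithin_le_nhds (Iio_mem_nhds h)
      filter_upwards [this] with b hb _ using hb.le
    · exact Filter.Eventually.of_forall fun _ h' => absurd h' h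
  obtain ⟨b, hb, hib⟩ := (hev.and self_mem_nhdsWithin).exists
  have h1 := congrFun hg b
  have h2 := congrFun hg i
  simp only [Finset.sum_apply, Pi.smul_apply, Set.indicator_apply, Set.mem_Ioi, smul_eq_mul,
    Pi.zero_apply] at h1 h2
  have h3 : ∑ a ∈ s, ((g a * if a < b then (1:ℚ) else 0) - (g a * if a < i then (1:ℚ) else 0))
      = ∑ a ∈ s, if a = i then g a else 0 := by
    apply Finset.sum_congr rfl
    intro a ha
    have hib' : i < b := hib
    rcases lt_trichotomy a i with h | h | h
    · simp [h, h.trans hib', h.ne]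
    · subst h; simp [hib']
    · simp [h.not_gt, (hb a ha h).not_gt, h.ne']
  rw [Finset.sum_sub_distrib, h1, h2] at h3
  simpa [hi] using h3.symm

lemma exists_ext {ι V : Type*} [AddCommGroup V] [Module ℚ V] (v : ι → V)
    (hv : LinearIndependent ℚ v) (c : ι → ℚ) : ∃ F : V →ₗ[ℚ] ℚ, ∀ i, F (v i) = c i := by
  obtain ⟨F, hF⟩ := LinearMap.exists_extend
    ((Finsupp.linearCombination ℚ c).comp hv.repr)
  refine ⟨F, fun i => ?_⟩
  have h := LinearMap.congr_fun hF ⟨v i, Submodule.subset_span ⟨i, rfl⟩⟩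
  simp only [LinearMap.comp_apply, Submodule.subtype_apply] at h
  rw [h]
  have : hv.repr ⟨v i, Submodule.subset_span ⟨i, rfl⟩⟩ = Finsupp.single i 1 :=
    hv.repr_eq_single i _ rfl
  simp [this]

lemma exF (f : ℝ → ℚ) : ∃ F : (ℝ → ℚ) →ₗ[ℚ] ℚ, ∀ a b, a ≤ b →
    F ((Set.Ioc a b).indicator (fun _ => (1:ℚ))) = f b - f a := by
  obtain ⟨F, hF⟩ := exists_ext _ step_li (fun a => - f a)
  refine ⟨F, fun a b hab => ?_⟩
  have : (Set.Ioc a b).indicator (fun _ => (1:ℚ)) =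
      (Set.Ioi a).indicator (fun _ => (1:ℚ)) - (Set.Ioi b).indicator (fun _ => (1:ℚ)) := by
    ext t
    simp only [Set.indicator_apply, Set.mem_Ioc, Set.mem_Ioi, Pi.sub_apply]
    by_cases h1 : a < t <;> by_cases h2 : b < t
    · simp [h1, h2, h2.not_ge]
    · simp [h1, h2, not_lt.mp h2]
    · exact absurd (hab.trans_lt h2) h1
    · simp [h1, h2]
  rw [this, map_sub, hF, hF]; ring

lemma ho_in {x w t : ℝ} (h : t ∈ Set.Ioc x (x + w)) :
    ∀ᶠ ε in nhdsWithin (0:ℝ) (Set.Ioi 0), t - ε ∈ Set.Ioo x (x + w) := by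
  have h1 : ∀ᶠ ε in nhdsWithin (0:ℝ) (Set.Ioi 0), ε < t - x :=
    nhdsWithin_le_nhds (Iio_mem_nhds (by linarith [h.1]))
  filter_upwards [h1, self_mem_nhdsWithin] with ε h2 h3
  have h3' : 0 < ε := h3
  exact ⟨by linarith, by linarith [h.2]⟩

lemma ho_out {x w t : ℝ} (h : t ∉ Set.Ioc x (x + w)) :
    ∀ᶠ ε in nhdsWithin (0:ℝ) (Set.Ioi 0), t - ε ∉ Set.Icc x (x + w) := by
  by_cases hx : x < t
  · have hw : x + w < t := by
      by_contra hc
      exact h ⟨hx, not_lt.mp hc⟩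
    have h1 : ∀ᶠ ε in nhdsWithin (0:ℝ) (Set.Ioi 0), ε < t - (x + w) :=
      nhdsWithin_le_nhds (Iio_mem_nhds (by linarith))
    filter_upwards [h1] with ε h2 h3
    linarith [h3.2]
  · filter_upwards [self_mem_nhdsWithin] with ε h3 h4
    have h3' : 0 < ε := h3
    linarith [h4.1]

/-- half-open rectangle -/
def HO (x w y h : ℝ) : Set (ℝ × ℝ) := Set.Ioc x (x + w) ×ˢ Set.Ioc y (y + h)

lemma HO_in {x w y h u v : ℝ} (H : (u, v) ∈ HO x w y h) :
    ∀ᶠ ε in nhdsWithin (0:ℝ) (Set.Ioi 0),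
      (u - ε, v - ε) ∈ interior (Set.Icc x (x + w) ×ˢ Set.Icc y (y + h)) := by
  rw [interior_prod_eq, interior_Icc, interior_Icc]
  filter_upwards [ho_in H.1, ho_in H.2] with ε h1 h2 using ⟨h1, h2⟩

lemma HO_out {x w y h u v : ℝ} (H : (u, v) ∉ HO x w y h) :
    ∀ᶠ ε in nhdsWithin (0:ℝ) (Set.Ioi 0),
      (u - ε, v - ε) ∉ (Set.Icc x (x + w) ×ˢ Set.Icc y (y + h)) := by
  by_cases h1 : u ∈ Set.Ioc x (x + w)
  · have h2 : v ∉ Set.Ioc y (y + h) := fun h2 => H ⟨h1, h2⟩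
    filter_upwards [ho_out h2] with ε h3 h4 using h3 h4.2
  · filter_upwards [ho_out h1] with ε h3 h4 using h3 h4.1

lemma indicator_sum {m : ℕ} (x w y h : Fin m → ℝ) (X W Y H : ℝ)
    (hU : (⋃ i, Set.Icc (x i) (x i + w i) ×ˢ Set.Icc (y i) (y i + h i)) =
      Set.Icc X (X + W) ×ˢ Set.Icc Y (Y + H))
    (hd : Pairwise fun i j =>
      Disjoint (interior (Set.Icc (x i) (x i + w i) ×ˢ Set.Icc (y i) (y i + h i)))
       (interior (Set.Icc (x j) (x j + w j) ×ˢ Set.Icc (y j) (y j + h j)))) (q : ℝ × ℝ) :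
    ∑ i, (HO (x i) (w i) (y i) (h i)).indicator (fun _ => (1:ℚ)) q =
      (HO X W Y H).indicator (fun _ => (1:ℚ)) q := by
  classical
  obtain ⟨u, v⟩ := q
  by_cases hq : (u, v) ∈ HO X W Y H
  · rw [Set.indicator_of_mem hq]
    have hex : ∃ i, (u, v) ∈ HO (x i) (w i) (y i) (h i) := by
      by_contra hc
      push Not at hc
      have h1 := Filter.eventually_all.mpr (fun i => HO_out (hc i))
      obtain ⟨ε, h2, h3⟩ := (h1.and (HO_in hq)).exists
      have h4 := interior_subset h3
      rw [← hU, Set.mem_iUnion] at h4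
      obtain ⟨i, h4⟩ := h4
      exact h2 i h4
    obtain ⟨i, hi⟩ := hex
    rw [Finset.sum_eq_single i]
    · rw [Set.indicator_of_mem hi]
    · intro j _ hj
      apply Set.indicator_of_notMem
      intro hj'
      obtain ⟨ε, h2, h3⟩ := ((HO_in hi).and (HO_in hj')).exists
      exact Set.disjoint_left.mp (hd hj) h3 h2
    · simp
  · rw [Set.indicator_of_notMem hq]
    apply Finset.sum_eq_zero
    intro i _
    apply Set.indicator_of_notMem
    intro hi
    obtain ⟨ε, h2, h3⟩ := ((HO_out hq).and (HO_in hi)).exists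
    apply h2
    rw [← hU]
    exact Set.mem_iUnion.mpr ⟨i, interior_subset h3⟩

lemma bilin {m : ℕ} (x w y h : Fin m → ℝ) (X W Y H : ℝ)
    (hw : ∀ i, 0 < w i) (hh : ∀ i, 0 < h i) (hW : 0 < W) (hH : 0 < H)
    (hU : (⋃ i, Set.Icc (x i) (x i + w i) ×ˢ Set.Icc (y i) (y i + h i)) =
      Set.Icc X (X + W) ×ˢ Set.Icc Y (Y + H))
    (hd : Pairwise fun i j =>
      Disjoint (interior (Set.Icc (x i) (x i + w i) ×ˢ Set.Icc (y i) (y i + h i)))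
       (interior (Set.Icc (x j) (x j + w j) ×ˢ Set.Icc (y j) (y j + h j))))
    (f g : ℝ →ₗ[ℚ] ℚ) : ∑ i, f (w i) * g (h i) = f W * g H := by
  obtain ⟨F, hF⟩ := exF f
  obtain ⟨G, hG⟩ := exF g
  have key := indicator_sum x w y h X W Y H hU hd
  have hprod : ∀ (x w y h u v : ℝ), (HO x w y h).indicator (fun _ => (1:ℚ)) (u, v) =
      (Set.Ioc y (y + h)).indicator (fun _ => (1:ℚ)) v *
      (Set.Ioc x (x + w)).indicator (fun _ => (1:ℚ)) u := by
    intro x w y h u v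
    simp only [Set.indicator_apply, HO, Set.mem_prod]
    split_ifs <;> simp_all
  have hF' : ∀ x w, 0 < w → F ((Set.Ioc x (x + w)).indicator (fun _ => (1:ℚ))) = f w := by
    intro x w hw; rw [hF _ _ (by linarith), map_add]; ring
  have hG' : ∀ x w, 0 < w → G ((Set.Ioc x (x + w)).indicator (fun _ => (1:ℚ))) = g w := by
    intro x w hw; rw [hG _ _ (by linarith), map_add]; ring
  have s1 : ∀ v, ∑ i, (Set.Ioc (y i) (y i + h i)).indicator (fun _ => (1:ℚ)) v * f (w i) =
      (Set.Ioc Y (Y + H)).indicator (fun _ => (1:ℚ)) v * f W := by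
    intro v
    have e : ∑ i, (Set.Ioc (y i) (y i + h i)).indicator (fun _ => (1:ℚ)) v •
        (Set.Ioc (x i) (x i + w i)).indicator (fun _ => (1:ℚ)) =
        (Set.Ioc Y (Y + H)).indicator (fun _ => (1:ℚ)) v •
        (Set.Ioc X (X + W)).indicator (fun _ => (1:ℚ)) := by
      ext u
      have := key (u, v)
      simp only [hprod] at this
      simpa [Finset.sum_apply] using this
    have := congrArg F e
    simpa only [map_sum, map_smul, smul_eq_mul, hF' _ _ (hw _), hF' _ _ hW] using this
  have e : ∑ i, f (w i) • (Set.Ioc (y i) (y i + h i)).indicator (fun _ => (1:ℚ)) =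
      f W • (Set.Ioc Y (Y + H)).indicator (fun _ => (1:ℚ)) := by
    ext v
    have := s1 v
    simp only [Finset.sum_apply, Pi.smul_apply, smul_eq_mul]
    rw [mul_comm (f W), ← this]
    exact Finset.sum_congr rfl fun i _ => mul_comm _ _
  have := congrArg G e
  simpa only [map_sum, map_smul, smul_eq_mul, hG' _ _ (hh _), hG' _ _ hH] using this

lemma tiled_fintype {ι : Type*} [Fintype ι] {R : Set (ℝ × ℝ)} {S : Set ℝ}
    (T : ι → Set (ℝ × ℝ)) (w h : ι → ℝ) (h1 : ∀ i, IsRect (T i) (w i) (h i))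
    (h2 : ∀ i, w i / h i ∈ S ∨ h i / w i ∈ S) (h3 : (⋃ i, T i) = R)
    (h4 : Pairwise fun i j => Disjoint (interior (T i)) (interior (T j))) : TiledBy R S := by
  let e := (Fintype.equivFin ι).symm
  refine ⟨Fintype.card ι, T ∘ e, w ∘ e, h ∘ e, fun i => h1 _, fun i => h2 _, ?_, ?_⟩
  · rw [← h3]; exact e.surjective.iUnion_comp T
  · intro i j hij
    exact h4 (e.injective.ne hij)

lemma tiled_union {R₁ R₂ : Set (ℝ × ℝ)} {S : Set ℝ} (H₁ : TiledBy R₁ S) (H₂ : TiledBy R₂ S)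
    (hd : Disjoint (interior R₁) (interior R₂)) : TiledBy (R₁ ∪ R₂) S := by
  obtain ⟨m, T, w, h, a1, a2, a3, a4⟩ := H₁
  obtain ⟨m', T', w', h', b1, b2, b3, b4⟩ := H₂
  have sub1 : ∀ i, interior (T i) ⊆ interior R₁ := fun i =>
    interior_mono (a3 ▸ Set.subset_iUnion T i)
  have sub2 : ∀ i, interior (T' i) ⊆ interior R₂ := fun i =>
    interior_mono (b3 ▸ Set.subset_iUnion T' i)
  refine tiled_fintype (Sum.elim T T') (Sum.elim w w') (Sum.elim h h') ?_ ?_ ?_ ?_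
  · rintro (i | i)
    · exact a1 i
    · exact b1 i
  · rintro (i | i)
    · exact a2 i
    · exact b2 i
  · rw [Set.iUnion_sum]; simp only [Sum.elim_inl, Sum.elim_inr]; rw [a3, b3]
  · rintro (i | i) (j | j) hij
    · exact a4 (fun h => hij (by rw [h]))
    · exact hd.mono (sub1 i) (sub2 j)
    · exact (hd.mono (sub1 j) (sub2 i)).symm
    · exact b4 (fun h => hij (by rw [h]))

lemma tiled_image {R : Set (ℝ × ℝ)} {S : Set ℝ} (H : TiledBy R S) (e : (ℝ × ℝ) ≃ₜ (ℝ × ℝ))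
    (he : ∀ T w h, IsRect T w h → ∃ w' h', IsRect (e '' T) w' h' ∧
      (w' / h' = w / h ∧ h' / w' = h / w ∨ w' / h' = h / w ∧ h' / w' = w / h)) :
    TiledBy (e '' R) S := by
  obtain ⟨m, T, w, h, a1, a2, a3, a4⟩ := H
  choose w' h' k1 k2 using fun i => he _ _ _ (a1 i)
  refine ⟨m, fun i => e '' T i, w', h', k1, ?_, ?_, ?_⟩
  · intro i
    rcases k2 i with ⟨h1, h2⟩ | ⟨h1, h2⟩ <;> rw [h1, h2]
    · exact a2 i
    · exact (a2 i).symm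
  · rw [← a3, Set.image_iUnion]
  · intro i j hij
    show Disjoint (interior (e '' T i)) (interior (e '' T j))
    rw [← e.image_interior, ← e.image_interior]
    exact (Set.disjoint_image_iff e.injective).mpr (a4 hij)

/-- standard rectangle tiled -/
def PT (S : Set ℝ) (w h : ℝ) : Prop :=
  0 < w ∧ 0 < h ∧ ∀ x y : ℝ, TiledBy (Set.Icc x (x + w) ×ˢ Set.Icc y (y + h)) S

lemma aff_rect (c d d' : ℝ) (hc : 0 < c) (x y w h : ℝ) :
    ((affineHomeomorph c d hc.ne').prodCongr (affineHomeomorph c d' hc.ne')) ''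
      (Set.Icc x (x + w) ×ˢ Set.Icc y (y + h)) =
    Set.Icc (c * x + d) (c * x + d + c * w) ×ˢ Set.Icc (c * y + d') (c * y + d' + c * h) := by
  have : ⇑((affineHomeomorph c d hc.ne').prodCongr (affineHomeomorph c d' hc.ne')) =
      Prod.map (fun t => c * t + d) (fun t => c * t + d') := rfl
  rw [this, Set.prodMap_image_prod, Set.image_affine_Icc' hc, Set.image_affine_Icc' hc]
  congr 2 <;> ring

lemma tiled_aff {S : Set ℝ} {x y w h : ℝ}
    (H : TiledBy (Set.Icc x (x + w) ×ˢ Set.Icc y (y + h)) S) (c d d' : ℝ) (hc : 0 < c) :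
    TiledBy (Set.Icc (c * x + d) (c * x + d + c * w) ×ˢ
      Set.Icc (c * y + d') (c * y + d' + c * h)) S := by
  rw [← aff_rect c d d' hc]
  apply tiled_image H
  rintro T w h ⟨hw, hh, x, y, rfl⟩
  refine ⟨c * w, c * h, ⟨by positivity, by positivity, _, _, aff_rect c d d' hc x y w h⟩, Or.inl ?_⟩
  constructor <;> field_simp

lemma PT_of {S : Set ℝ} {x y w h : ℝ} (hw : 0 < w) (hh : 0 < h)
    (H : TiledBy (Set.Icc x (x + w) ×ˢ Set.Icc y (y + h)) S) (c : ℝ) (hc : 0 < c) :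
    PT S (c * w) (c * h) := by
  refine ⟨by positivity, by positivity, fun x' y' => ?_⟩
  have := tiled_aff H c (x' - c * x) (y' - c * y) hc
  simpa using this

lemma PT_scale {S : Set ℝ} {w h : ℝ} (H : PT S w h) (c : ℝ) (hc : 0 < c) :
    PT S (c * w) (c * h) := PT_of H.1 H.2.1 (H.2.2 0 0) c hc

lemma swap_rect (x y w h : ℝ) : (Homeomorph.prodComm ℝ ℝ) ''
      (Set.Icc x (x + w) ×ˢ Set.Icc y (y + h)) =
      (Set.Icc y (y + h) ×ˢ Set.Icc x (x + w)) := by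
  exact Set.image_swap_prod _ _

lemma PT_swap {S : Set ℝ} {w h : ℝ} (H : PT S w h) : PT S h w := by
  refine ⟨H.2.1, H.1, fun x y => ?_⟩
  rw [← swap_rect]
  apply tiled_image (H.2.2 y x)
  rintro T w h ⟨hw, hh, x, y, rfl⟩
  exact ⟨h, w, ⟨hh, hw, _, _, swap_rect x y w h⟩, Or.inr ⟨rfl, rfl⟩⟩

lemma PT_glue {S : Set ℝ} {w w' h : ℝ} (H : PT S w h) (H' : PT S w' h) : PT S (w + w') h := by
  refine ⟨add_pos H.1 H'.1, H.2.1, fun x y => ?_⟩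
  have h1 := H.1
  have h2 := H'.1
  have : Set.Icc x (x + (w + w')) ×ˢ Set.Icc y (y + h) =
      Set.Icc x (x + w) ×ˢ Set.Icc y (y + h) ∪
      Set.Icc (x + w) (x + w + w') ×ˢ Set.Icc y (y + h) := by
    rw [← Set.union_prod, Set.Icc_union_Icc_eq_Icc (by linarith) (by linarith), add_assoc]
  rw [this]
  refine tiled_union (H.2.2 _ _) (H'.2.2 _ _) ?_
  simp only [interior_prod_eq, interior_Icc]
  refine Set.disjoint_left.mpr ?_
  rintro ⟨u, v⟩ ⟨⟨_, k1⟩, _⟩ ⟨⟨k2, _⟩, _⟩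
  exact lt_asymm k1 k2

lemma PT_inv {S : Set ℝ} {z : ℝ} (H : PT S z 1) : PT S z⁻¹ 1 := by
  have h := PT_scale (PT_swap H) z⁻¹ (inv_pos.mpr H.1)
  rwa [mul_one, inv_mul_cancel₀ H.1.ne'] at h

lemma PT_nat {S : Set ℝ} {z : ℝ} (H : PT S z 1) (n : ℕ) : PT S ((n + 1 : ℕ) * z) 1 := by
  induction n with
  | zero => simpa using H
  | succ n ih =>
    have := PT_glue ih H
    convert this using 1
    push_cast; ring

lemma PT_nat' {S : Set ℝ} {z : ℝ} (H : PT S z 1) (n : ℕ) (hn : 0 < n) : PT S (n * z) 1 := by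
  obtain ⟨k, rfl⟩ := Nat.exists_eq_succ_of_ne_zero hn.ne'
  exact PT_nat H k

lemma PT_rat {S : Set ℝ} {z : ℝ} (H : PT S z 1) (q : ℚ) (hq : 0 < q) : PT S (q * z) 1 := by
  have h1 := PT_nat' H q.num.toNat (by have := Rat.num_pos.mpr hq; omega)
  have h2 := PT_inv (PT_nat' (PT_inv h1) q.den q.den_pos)
  convert h2 using 1
  have h3 : ((q.num.toNat : ℕ) : ℝ) = ((q.num : ℤ) : ℝ) := by
    have := Int.toNat_of_nonneg (Rat.num_pos.mpr hq).le
    exact_mod_cast congrArg (Int.cast : ℤ → ℝ) this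
  rw [mul_inv, inv_inv, h3]
  conv_lhs => rw [← Rat.num_div_den q]
  push_cast
  ring

lemma PT_basic {S : Set ℝ} {z : ℝ} (hz : 0 < z) (hS : z ∈ S) : PT S z 1 := by
  refine ⟨hz, one_pos, fun x y => ?_⟩
  refine tiled_fintype (ι := Unit) (fun _ => Set.Icc x (x + z) ×ˢ Set.Icc y (y + 1)) (fun _ => z)
    (fun _ => 1) (fun _ => ⟨hz, one_pos, x, y, rfl⟩) (fun _ => Or.inl (by simpa using hS)) ?_ ?_
  · exact Set.iUnion_const _
  · intro i j hij; exact absurd (Subsingleton.elim i j) hij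

lemma PT_mem {S : Set ℝ} {z : ℝ} (H : PT S z 1) : z ∈ BSet S :=
  ⟨z, 1, _, ⟨H.1, one_pos, 0, 0, rfl⟩, Or.inl (by simp), H.2.2 0 0⟩

/-- the bilinear form -/
noncomputable def phi (p A : ℚ) (s : ℝ) (l : ℝ →ₗ[ℚ] ℚ) (u v : ℝ) : ℚ :=
  A * (l u * l v) + (l u * l (s * v) + l (s * u) * l v) / p - A * (l (s * u) * l (s * v)) / p

lemma lin_mul (l : ℝ →ₗ[ℚ] ℚ) (q : ℚ) (u : ℝ) : l (q * u) = q * l u := by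
  have := l.map_smul q u
  rwa [Rat.smul_def, smul_eq_mul] at this

lemma phi_comm (p A : ℚ) (s : ℝ) (l : ℝ →ₗ[ℚ] ℚ) (u v : ℝ) :
    phi p A s l u v = phi p A s l v u := by unfold phi; ring

lemma phi_K (p A : ℚ) (hp : 0 < p) (s : ℝ) (hs : s * s = p) (l : ℝ →ₗ[ℚ] ℚ) (a b : ℚ) (u : ℝ) :
    phi p A s l ((a + b * s) * u) u = (b + A * a) * l u ^ 2 + 2 * a * l u * (l (s * u) / p) +
      p * (b - A * a) * (l (s * u) / p) ^ 2 := by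
  have h1 : l ((a + b * s) * u) = a * l u + b * l (s * u) := by
    rw [add_mul, map_add, mul_assoc, lin_mul, lin_mul]
  have h2 : l (s * ((a + b * s) * u)) = a * l (s * u) + b * (p * l u) := by
    have : s * ((a + b * s) * u) = a * (s * u) + b * (p * u) := by
      rw [← hs]; ring
    rw [this, map_add, lin_mul, lin_mul, lin_mul]
  unfold phi
  rw [h1, h2]
  field_simp
  ring

lemma quad_nonneg (p A a b : ℚ) (hp : 0 < p) (hb : 0 < b)
    (h : (A ^ 2 + 1 / p) * a ^ 2 ≤ b ^ 2) (w v : ℚ) :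
    0 ≤ (b + A * a) * w ^ 2 + 2 * a * w * v + p * (b - A * a) * v ^ 2 := by
  have h0 : A ^ 2 * a ^ 2 + a ^ 2 / p ≤ b ^ 2 := by
    calc _ = (A ^ 2 + 1 / p) * a ^ 2 := by ring
      _ ≤ _ := h
  have hap : 0 ≤ a ^ 2 / p := by positivity
  have h1 : |A * a| ≤ b := by
    apply abs_le_of_sq_le_sq _ hb.le
    nlinarith
  have h2 := abs_le.mp h1
  have h3 : a ^ 2 ≤ p * (b ^ 2 - A ^ 2 * a ^ 2) := by
    have : a ^ 2 / p ≤ b ^ 2 - A ^ 2 * a ^ 2 := by linarith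
    rw [div_le_iff₀ hp] at this
    linarith
  rcases (by linarith : 0 ≤ b + A * a).eq_or_lt with h4 | h4
  · exfalso
    have h5 : A * a = - b := by linarith
    have h6 : a ^ 2 ≤ 0 := by
      have : A ^ 2 * a ^ 2 = b ^ 2 := by rw [← mul_pow, h5]; ring
      rw [this] at h3; linarith
    have : a = 0 := by nlinarith
    rw [this] at h5; linarith
  · have : 0 ≤ (b + A * a) * ((b + A * a) * w ^ 2 + 2 * a * w * v + p * (b - A * a) * v ^ 2) := by
      have e : (b + A * a) * ((b + A * a) * w ^ 2 + 2 * a * w * v + p * (b - A * a) * v ^ 2) =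
        ((b + A * a) * w + a * v) ^ 2 + (p * (b ^ 2 - A ^ 2 * a ^ 2) - a ^ 2) * v ^ 2 := by ring
      rw [e]
      have : 0 ≤ p * (b ^ 2 - A ^ 2 * a ^ 2) - a ^ 2 := by linarith
      positivity
    exact nonneg_of_mul_nonneg_right this h4

lemma phi_nonneg (p A : ℚ) (hp : 0 < p) (s : ℝ) (hs : s * s = p)
    (n : ℕ) (a b : Fin n → ℚ) (hb : ∀ i, 0 < b i)
    (hA : ∀ i, (A ^ 2 + 1 / p) * a i ^ 2 ≤ b i ^ 2) (z : ℝ)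
    (hz : z ∈ BSet (Set.range fun i => (a i : ℝ) + b i * s)) (μ : ℝ →ₗ[ℚ] ℚ) :
    0 ≤ phi p A s μ z 1 := by
  obtain ⟨W, H, R, ⟨hW, hH, X, Y, rfl⟩, hzr, m, T, w, h, t1, t2, t3, t4⟩ := hz
  choose hw hh x y hT using t1
  have main : ∀ l : ℝ →ₗ[ℚ] ℚ, 0 ≤ phi p A s l W H := by
    intro l
    simp only [hT] at t3 t4
    have B := bilin x w y h X W Y H hw hh hW hH t3 t4
    let ls : ℝ →ₗ[ℚ] ℚ := l.comp (LinearMap.mulLeft ℚ s)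
    have hls : ∀ u, ls u = l (s * u) := fun u => rfl
    have e : phi p A s l W H = ∑ i, phi p A s l (w i) (h i) := by
      unfold phi
      simp only [← hls]
      rw [Finset.sum_sub_distrib, Finset.sum_add_distrib, ← Finset.mul_sum, ← Finset.sum_div,
        Finset.sum_add_distrib, ← Finset.sum_div, ← Finset.mul_sum, B, B, B, B]
    rw [e]
    apply Finset.sum_nonneg
    intro i _
    have q : ∀ j u, 0 ≤ phi p A s l (((a j : ℝ) + b j * s) * u) u := by
      intro j u
      rw [phi_K p A hp s hs]
      exact quad_nonneg p A (a j) (b j) hp (hb j) (hA j) _ _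
    rcases t2 i with ⟨j, hj⟩ | ⟨j, hj⟩
    · have := q j (h i)
      simp only at hj
      rwa [hj, div_mul_cancel₀ _ (hh i).ne'] at this
    · have := q j (w i)
      simp only at hj
      rwa [hj, div_mul_cancel₀ _ (hw i).ne', phi_comm] at this
  have sc : ∀ t : ℝ, t ≠ 0 → (∀ l : ℝ →ₗ[ℚ] ℚ, 0 ≤ phi p A s l (z * t) t) →
      0 ≤ phi p A s μ z 1 := by
    intro t ht hl
    have := hl (μ.comp (LinearMap.mulLeft ℚ t⁻¹))
    unfold phi at this ⊢
    simp only [LinearMap.comp_apply, LinearMap.mulLeft_apply] at this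
    have e1 : t⁻¹ * (z * t) = z := by field_simp
    have e2 : t⁻¹ * t = 1 := by field_simp
    have e3 : t⁻¹ * (s * t) = s * 1 := by field_simp
    have e4 : t⁻¹ * (s * (z * t)) = s * z := by field_simp
    rwa [e1, e2, e3, e4] at this
  rcases hzr with rfl | rfl
  · apply sc H hH.ne'
    intro l
    rw [div_mul_cancel₀ _ hH.ne']; exact main l
  · apply sc W hW.ne'
    intro l
    rw [div_mul_cancel₀ _ hW.ne', phi_comm]; exact main l

lemma irr_zero {s : ℝ} (hirr : Irrational s) {c d : ℚ} (h : (c : ℝ) + d * s = 0) :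
    c = 0 ∧ d = 0 := by
  have hd : d = 0 := by
    by_contra hd
    apply hirr
    refine ⟨-c / d, ?_⟩
    have : (d : ℝ) ≠ 0 := by exact_mod_cast hd
    push_cast
    field_simp
    linarith
  subst hd
  simp at h
  exact ⟨by exact_mod_cast h, rfl⟩

lemma mem_K (p : ℚ) (s : ℝ) (hs : s * s = p) (hirr : Irrational s) (c d c' d' : ℚ) (z : ℝ)
    (h : (c : ℝ) + d * s + (c' + d' * s) * z = 0) (hz : ¬ ∃ e f : ℚ, z = e + f * s) :
    c = 0 ∧ d = 0 ∧ c' = 0 ∧ d' = 0 := by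
  by_cases h0 : (c' : ℝ) + d' * s = 0
  · have h1 := irr_zero hirr h0
    rw [h0, zero_mul, add_zero] at h
    have h2 := irr_zero hirr h
    exact ⟨h2.1, h2.2, h1.1, h1.2⟩
  · exfalso
    apply hz
    have h1 : (c' : ℝ) - d' * s ≠ 0 := by
      intro h1
      have : (c' : ℝ) + (-d' : ℚ) * s = 0 := by push_cast; linarith
      obtain ⟨k1, k2⟩ := irr_zero hirr this
      apply h0
      rw [k1, neg_eq_zero.mp k2]; simp
    have hN : ((c' ^ 2 - d' ^ 2 * p : ℚ) : ℝ) = (c' + d' * s) * (c' - d' * s) := by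
      push_cast; rw [← hs]; ring
    have hN0 : ((c' ^ 2 - d' ^ 2 * p : ℚ) : ℝ) ≠ 0 := by rw [hN]; exact mul_ne_zero h0 h1
    refine ⟨-(c * c' - d * d' * p) / (c' ^ 2 - d' ^ 2 * p),
      -(d * c' - c * d') / (c' ^ 2 - d' ^ 2 * p), ?_⟩
    have : z * ((c' ^ 2 - d' ^ 2 * p : ℚ) : ℝ) =
        (-(c * c' - d * d' * p) : ℚ) + (-(d * c' - c * d') : ℚ) * s := by
      rw [hN]
      push_cast
      rw [← hs]
      linear_combination (c' - d' * s) * h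
    rw [Rat.cast_div, Rat.cast_div, div_mul_eq_mul_div, ← add_div, ← this,
      mul_div_cancel_right₀ _ hN0]

lemma forward (p : ℚ) (hp : 0 < p) (s : ℝ) (hs : s * s = p) (hirr : Irrational s)
    (n : ℕ) (a b : Fin n → ℚ) (hb : ∀ i, 0 < b i)
    (hab : ∀ i, a i ^ 2 ≤ p * b i ^ 2) (z : ℝ) (hz : 0 < z)
    (hzB : z ∈ BSet (Set.range fun i => (a i : ℝ) + b i * s)) (M : ℚ) (hM0 : 0 ≤ M)
    (hM : ∀ i, |a i| ≤ M * b i) (hMp : M ^ 2 < p) :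
    ∃ e f : ℚ, z = e + f * s ∧ 0 < f ∧ |e| / f ≤ M := by
  have P := fun A hA => phi_nonneg p A hp s hs n a b hb hA z hzB
  have hA0 : ∀ i, ((0:ℚ) ^ 2 + 1 / p) * a i ^ 2 ≤ b i ^ 2 := by
    intro i
    have := hab i
    have : a i ^ 2 / p ≤ b i ^ 2 := by rw [div_le_iff₀ hp]; linarith
    calc _ = a i ^ 2 / p := by ring
      _ ≤ _ := this
  have hzK : ∃ e f : ℚ, z = e + f * s := by
    by_contra hc
    have li : LinearIndependent ℚ ![1, s, z, s * z] := by
      rw [Fintype.linearIndependent_iff]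
      intro g hg
      simp only [Fin.sum_univ_four, Rat.smul_def] at hg
      simp at hg
      have := mem_K p s hs hirr (g 0) (g 1) (g 2) (g 3) z (by linarith) hc
      intro i
      fin_cases i
      · exact this.1
      · exact this.2.1
      · exact this.2.2.1
      · exact this.2.2.2
    obtain ⟨F, hF⟩ := exists_ext _ li ![1, 0, 0, -1]
    have f0 := hF 0
    have f1 := hF 1
    have f2 := hF 2
    have f3 := hF 3
    simp at f0 f1 f2 f3
    have := P 0 hA0 F
    unfold phi at this
    rw [mul_one, f0, f1, f2, f3] at this
    have h2 : 0 < 1 / p := by positivity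
    have h3 : (0:ℚ) ≤ -(1 / p) := by
      calc (0:ℚ) ≤ _ := this
        _ = _ := by ring
    linarith
  obtain ⟨e, f, rfl⟩ := hzK
  have Q : ∀ A : ℚ, (∀ i, (A ^ 2 + 1 / p) * a i ^ 2 ≤ b i ^ 2) → ∀ w v : ℚ,
      0 ≤ (f + A * e) * w ^ 2 + 2 * e * w * v + p * (f - A * e) * v ^ 2 := by
    intro A hA w v
    have li : LinearIndependent ℚ ![1, s] := by
      rw [Fintype.linearIndependent_iff]
      intro g hg
      simp only [Fin.sum_univ_two, Rat.smul_def] at hg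
      simp at hg
      have := irr_zero hirr hg
      intro i
      fin_cases i
      · exact this.1
      · exact this.2
    obtain ⟨F, hF⟩ := exists_ext _ li ![w, p * v]
    have f0 := hF 0
    have f1 := hF 1
    simp at f0 f1
    have := P A hA F
    rw [← mul_one ((e : ℝ) + f * s), phi_K p A hp s hs, mul_one, f0, f1,
      mul_div_cancel_left₀ _ hp.ne'] at this
    exact this
  have D : ∀ A : ℚ, (∀ i, (A ^ 2 + 1 / p) * a i ^ 2 ≤ b i ^ 2) →
      e ^ 2 ≤ p * (f ^ 2 - A ^ 2 * e ^ 2) := by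
    intro A hA
    have := discrim_le_zero (a := f + A * e) (b := 2 * e) (c := p * (f - A * e)) (by
      intro t
      calc _ ≤ _ := Q A hA t 1
        _ = _ := by ring)
    unfold discrim at this
    nlinarith
  have hf0 : 0 ≤ f := by simpa using Q 0 hA0 1 0
  have hD0 := D 0 hA0
  have hf : 0 < f := by
    rcases hf0.eq_or_lt with h | h
    · exfalso
      have he : e = 0 := by
        rw [← h] at hD0
        nlinarith
      rw [← h, he] at hz
      simp at hz
    · exact h
  refine ⟨e, f, rfl, hf, ?_⟩
  by_contra hc
  push Not at hc
  rw [lt_div_iff₀ hf] at hc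
  have he0 : 0 < |e| := lt_of_le_of_lt (by positivity) hc
  have hee : 0 < e ^ 2 := by rw [← sq_abs]; positivity
  -- find A with (A^2 + 1/p) M^2 ≤ 1 and f^2 < (A^2 + 1/p) e^2
  have hsq : M ^ 2 * f ^ 2 < e ^ 2 := by
    rw [← mul_pow, ← sq_abs e]
    exact pow_lt_pow_left₀ hc (by positivity) two_ne_zero
  have : ∃ A : ℚ, (A ^ 2 + 1 / p) * M ^ 2 ≤ 1 ∧ f ^ 2 < (A ^ 2 + 1 / p) * e ^ 2 := by
    have hL : 0 ≤ f ^ 2 / e ^ 2 - 1 / p := by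
      rw [sub_nonneg, div_le_div_iff₀ hp hee]; linarith
    rcases hM0.eq_or_lt with h | h
    · obtain ⟨q, q1, q2, q3⟩ := exists_rat_pow_btwn (n := 2) two_ne_zero
        (show f ^ 2 / e ^ 2 - 1 / p < f ^ 2 / e ^ 2 - 1 / p + 1 by linarith) (by linarith)
      refine ⟨q, by rw [← h]; norm_num, ?_⟩
      rw [← div_lt_iff₀ hee]
      simp at q3 q2 q1 ⊢
      linarith
    · have hm : 0 < M ^ 2 := by positivity
      have hlt : f ^ 2 / e ^ 2 < 1 / M ^ 2 := by
        rw [div_lt_div_iff₀ hee hm]; linarith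
      have hp1 : 1 / p < 1 / M ^ 2 := one_div_lt_one_div_of_lt hm hMp
      obtain ⟨q, q1, q2, q3⟩ := exists_rat_pow_btwn (n := 2) two_ne_zero
        (show f ^ 2 / e ^ 2 - 1 / p < 1 / M ^ 2 - 1 / p by linarith) (by linarith)
      refine ⟨q, ?_, ?_⟩
      · rw [← le_div_iff₀ hm]
        simp at q3 q2 q1 ⊢
        linarith
      · rw [← div_lt_iff₀ hee]
        simp at q3 q2 q1 ⊢
        linarith
  obtain ⟨A, A1, A2⟩ := this
  have hA : ∀ i, (A ^ 2 + 1 / p) * a i ^ 2 ≤ b i ^ 2 := by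
    intro i
    have h1 : a i ^ 2 ≤ M ^ 2 * b i ^ 2 := by
      rw [← mul_pow, ← sq_abs (a i)]
      exact pow_le_pow_left₀ (abs_nonneg _) (hM i) 2
    calc (A ^ 2 + 1 / p) * a i ^ 2 ≤ (A ^ 2 + 1 / p) * (M ^ 2 * b i ^ 2) := by gcongr
      _ = ((A ^ 2 + 1 / p) * M ^ 2) * b i ^ 2 := by ring
      _ ≤ 1 * b i ^ 2 := by gcongr
      _ = _ := one_mul _
  have := D A hA
  have h5 : e ^ 2 / p ≤ f ^ 2 - A ^ 2 * e ^ 2 := by rw [div_le_iff₀ hp]; linarith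
  have h6 : (A ^ 2 + 1 / p) * e ^ 2 = A ^ 2 * e ^ 2 + e ^ 2 / p := by ring
  linarith

lemma backward (p : ℚ) (s : ℝ) (hs : s * s = p) (S : Set ℝ)
    (a b : ℚ) (hb : 0 < b) (hx : 0 < (a : ℝ) + b * s) (hc : (a : ℝ) - b * s < 0)
    (hS : (a : ℝ) + b * s ∈ S) (e f : ℚ) (hf : 0 < f) (h : |e| / f ≤ |a| / b) :
    (e : ℝ) + f * s ∈ BSet S := by
  apply PT_mem
  have h0 := PT_basic hx hS
  rw [div_le_div_iff₀ hf hb] at h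
  by_cases ha : a = 0
  · subst ha
    have he : e = 0 := by
      have : |e| ≤ 0 := by
        by_contra hh
        push Not at hh
        simp at h
        nlinarith
      exact abs_nonpos_iff.mp this
    subst he
    convert PT_rat h0 (f / b) (by positivity) using 1
    have : (b : ℝ) ≠ 0 := by exact_mod_cast hb.ne'
    push_cast
    field_simp
    ring
  · have hNr : 0 < ((p * b ^ 2 - a ^ 2 : ℚ) : ℝ) := by
      push_cast; rw [← hs]; nlinarith
    have hN : 0 < p * b ^ 2 - a ^ 2 := by exact_mod_cast hNr
    have h1 : PT S (-a + b * s) 1 := by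
      convert PT_rat (PT_inv h0) _ hN using 1
      push_cast
      rw [← hs]
      field_simp
      ring
    have hk : |e / a| ≤ f / b := by
      rw [abs_div, div_le_div_iff₀ (abs_pos.mpr ha) hb]; linarith
    obtain ⟨k1, k2⟩ := abs_le.mp hk
    have hbr : (b : ℝ) ≠ 0 := by exact_mod_cast hb.ne'
    have har : (a : ℝ) ≠ 0 := by exact_mod_cast ha
    have hfb : 0 < f / b := by positivity
    have id : (e : ℝ) + f * s = (((f / b + e / a) / 2 : ℚ) : ℝ) * (a + b * s) +
        (((f / b - e / a) / 2 : ℚ) : ℝ) * (-a + b * s) := by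
      push_cast
      field_simp
      ring
    rw [id]
    rcases k1.eq_or_lt with j | j
    · have z1 : (f / b + e / a) / 2 = 0 := by linarith
      rw [z1, Rat.cast_zero, zero_mul, zero_add]
      exact PT_rat h1 _ (by linarith)
    · rcases k2.eq_or_lt with j' | j'
      · have z1 : (f / b - e / a) / 2 = 0 := by linarith
        rw [z1, Rat.cast_zero, zero_mul, add_zero]
        exact PT_rat h0 _ (by linarith)
      · exact PT_glue (PT_rat h0 _ (by linarith)) (PT_rat h1 _ (by linarith))

/-- Theorem 1(3): if all conjugates are negative, then `B(x₁, …, xₙ)` is the set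
`N(x₁, …, xₙ)` of numbers `e + f√p` with `f > 0` and `|e|/f ≤ max |aᵢ|/bᵢ`. -/
theorem stmt_2 (p : ℚ) (hp : 0 < p) (hirr : Irrational (Real.sqrt p))
    (n : ℕ) (hn : 0 < n) (a b : Fin n → ℚ) (x : Fin n → ℝ)
    (hx : ∀ i, x i = (a i : ℝ) + (b i : ℝ) * Real.sqrt p)
    (hxpos : ∀ i, 0 < x i)
    (hconj : ∀ i, (a i : ℝ) - (b i : ℝ) * Real.sqrt p < 0)
    (z : ℝ) (hz : 0 < z) :
    z ∈ BSet (Set.range x) ↔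
      ∃ e f : ℚ, z = (e : ℝ) + (f : ℝ) * Real.sqrt p ∧ 0 < f ∧
        |e| / f ≤ Finset.univ.sup' (Finset.univ_nonempty_iff.mpr
          (Fin.pos_iff_nonempty.mp hn)) (fun i => |a i| / b i) := by
  have hpr : (0:ℝ) < p := by exact_mod_cast hp
  have hs : Real.sqrt p * Real.sqrt p = p := Real.mul_self_sqrt hpr.le
  have hs0 : 0 < Real.sqrt p := Real.sqrt_pos.mpr hpr
  obtain rfl : x = fun i => (a i : ℝ) + (b i : ℝ) * Real.sqrt p := funext hx
  have hb : ∀ i, 0 < b i := by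
    intro i
    have h1 := hxpos i
    have h2 := hconj i
    have : (0:ℝ) < b i * Real.sqrt p := by simp only at h1; linarith
    exact_mod_cast pos_of_mul_pos_left this hs0.le
  have hab : ∀ i, a i ^ 2 < p * b i ^ 2 := by
    intro i
    have h1 := hxpos i
    have h2 := hconj i
    simp only at h1
    have : (0:ℝ) < p * b i ^ 2 - a i ^ 2 := by rw [← hs]; nlinarith
    have : (a i : ℝ) ^ 2 < p * b i ^ 2 := by linarith
    exact_mod_cast this
  obtain ⟨k, -, hk⟩ := Finset.exists_mem_eq_sup' (Finset.univ_nonempty_iff.mpr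
          (Fin.pos_iff_nonempty.mp hn)) (fun i => |a i| / b i)
  constructor
  · intro hzB
    refine forward p hp _ hs hirr n a b hb (fun i => (hab i).le) z hz hzB _ ?_ ?_ ?_
    · rw [hk]; exact div_nonneg (abs_nonneg _) (hb k).le
    · intro i
      rw [← div_le_iff₀ (hb i)]
      exact Finset.le_sup' (fun i => |a i| / b i) (Finset.mem_univ i)
    · rw [hk, div_pow, sq_abs, div_lt_iff₀ (pow_pos (hb k) 2)]
      exact hab k
  · rintro ⟨e, f, rfl, hf, h⟩
    rw [hk] at h
    exact backward p _ hs _ (a k) (b k) (hb k) (hxpos k) (hconj k) (Set.mem_range_self k) e f hf h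
end

section
/- Let x₁, …, xₙ be positive real numbers. If a ∈ B(x₁, …, xₙ) and b ∈ B(x₁, …, xₙ), then a + b ∈ B(x₁, …, xₙ). -/
theorem tiledBy_image (e : (ℝ × ℝ) ≃ₜ (ℝ × ℝ))
    (he : ∀ R w h, IsRect R w h → ∃ w' h', IsRect (e '' R) w' h' ∧
      ((w' / h' = w / h ∧ h' / w' = h / w) ∨ (w' / h' = h / w ∧ h' / w' = w / h)))
    {R : Set (ℝ × ℝ)} {S : Set ℝ} (hR : TiledBy R S) : TiledBy (e '' R) S := by
  obtain ⟨m, T, w, h, h1, h2, h3, h4⟩ := hR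
  choose w' h' ha hb using fun i => he _ _ _ (h1 i)
  refine ⟨m, fun i => e '' T i, w', h', ha, ?_, ?_, ?_⟩
  · intro i
    rcases hb i with ⟨p, q⟩ | ⟨p, q⟩ <;> rw [p, q]
    · exact h2 i
    · exact (h2 i).symm
  · rw [← h3, Set.image_iUnion]
  · intro i j hij
    have := h4 hij
    simp only [← e.image_interior]
    exact (Set.disjoint_image_iff e.injective).2 this

theorem tiledBy_union {R R' : Set (ℝ × ℝ)} {S : Set ℝ} (hR : TiledBy R S) (hR' : TiledBy R' S)
    (hd : Disjoint (interior R) (interior R')) : TiledBy (R ∪ R') S := by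
  obtain ⟨m, T, w, h, h1, h2, h3, h4⟩ := hR
  obtain ⟨m', T', w', h', h1', h2', h3', h4'⟩ := hR'
  have hx : ∀ i j, Disjoint (interior (T i)) (interior (T' j)) := fun i j =>
    hd.mono (interior_mono (h3 ▸ Set.subset_iUnion T i))
      (interior_mono (h3' ▸ Set.subset_iUnion T' j))
  refine ⟨m + m', fun i => Sum.elim T T' (finSumFinEquiv.symm i),
    fun i => Sum.elim w w' (finSumFinEquiv.symm i),
    fun i => Sum.elim h h' (finSumFinEquiv.symm i), ?_, ?_, ?_, ?_⟩
  · intro i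
    beta_reduce
    rcases finSumFinEquiv.symm i with k | k
    · exact h1 k
    · exact h1' k
  · intro i
    beta_reduce
    rcases finSumFinEquiv.symm i with k | k
    · exact h2 k
    · exact h2' k
  · rw [finSumFinEquiv.symm.surjective.iUnion_comp (Sum.elim T T'), Set.iUnion_sum]
    simp [h3, h3']
  · intro i j hij
    have hij' : finSumFinEquiv.symm i ≠ finSumFinEquiv.symm j :=
      fun h => hij (finSumFinEquiv.symm.injective h)
    revert hij'
    beta_reduce
    generalize finSumFinEquiv.symm i = k
    generalize finSumFinEquiv.symm j = l
    intro hij'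
    rcases k with k | k <;> rcases l with l | l
    · exact h4 (fun hkl => hij' (congrArg _ hkl))
    · exact hx k l
    · exact (hx l k).symm
    · exact h4' (fun hkl => hij' (congrArg _ hkl))

theorem tiledBy_swap {s t : Set ℝ} {S : Set ℝ}
    (hR : TiledBy (s ×ˢ t) S) : TiledBy (t ×ˢ s) S := by
  have := tiledBy_image (Homeomorph.prodComm ℝ ℝ) ?_ hR
  · simpa [Set.image_swap_prod] using this
  · rintro R w h ⟨hw, hh, x, y, rfl⟩
    exact ⟨h, w, ⟨hh, hw, y, x, Set.image_swap_prod _ _⟩, Or.inr ⟨rfl, rfl⟩⟩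

theorem tiledBy_affine {x y W H : ℝ} {S : Set ℝ}
    (hR : TiledBy (Set.Icc x (x + W) ×ˢ Set.Icc y (y + H)) S) (c p q : ℝ) (hc : 0 < c) :
    TiledBy (Set.Icc p (p + c * W) ×ˢ Set.Icc q (q + c * H)) S := by
  have key : ∀ x y W H : ℝ,
      ((affineHomeomorph c (p - c * x) hc.ne').prodCongr
        (affineHomeomorph c (q - c * y) hc.ne')) '' (Set.Icc x (x + W) ×ˢ Set.Icc y (y + H)) =
      Set.Icc p (p + c * W) ×ˢ Set.Icc q (q + c * H) := by
    intro x y W H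
    simp only [Homeomorph.coe_prodCongr, Set.prodMap_image_prod]
    congr 1
    · rw [show (affineHomeomorph c (p - c * x) hc.ne' : ℝ → ℝ) = (c * · + (p - c * x)) from rfl,
        Set.image_affine_Icc' hc]
      congr 1 <;> ring
    · rw [show (affineHomeomorph c (q - c * y) hc.ne' : ℝ → ℝ) = (c * · + (q - c * y)) from rfl,
        Set.image_affine_Icc' hc]
      congr 1 <;> ring
  rw [← key x y W H]
  refine tiledBy_image _ ?_ hR
  rintro R w h ⟨hw, hh, x', y', rfl⟩
  refine ⟨c * w, c * h, ⟨by positivity, by positivity, p - c * x + c * x', q - c * y + c * y', ?_⟩,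
    Or.inl ⟨mul_div_mul_left _ _ hc.ne', mul_div_mul_left _ _ hc.ne'⟩⟩
  simp only [Homeomorph.coe_prodCongr, Set.prodMap_image_prod]
  congr 1
  · rw [show (affineHomeomorph c (p - c * x) hc.ne' : ℝ → ℝ) = (c * · + (p - c * x)) from rfl,
      Set.image_affine_Icc' hc]
    congr 1 <;> ring
  · rw [show (affineHomeomorph c (q - c * y) hc.ne' : ℝ → ℝ) = (c * · + (q - c * y)) from rfl,
      Set.image_affine_Icc' hc]
    congr 1 <;> ring

theorem bset_normal {S : Set ℝ} {a : ℝ} (ha : a ∈ BSet S) :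
    0 < a ∧ ∀ p, TiledBy (Set.Icc p (p + a) ×ˢ Set.Icc 0 (0 + 1)) S := by
  obtain ⟨W, H, R, ⟨hW, hH, x, y, rfl⟩, hz, hT⟩ := ha
  rcases hz with rfl | rfl
  · refine ⟨by positivity, fun p => ?_⟩
    have := tiledBy_affine hT H⁻¹ p 0 (by positivity)
    rwa [inv_mul_cancel₀ hH.ne', inv_mul_eq_div] at this
  · refine ⟨by positivity, fun p => ?_⟩
    have := tiledBy_affine (tiledBy_swap hT) W⁻¹ p 0 (by positivity)
    rwa [inv_mul_cancel₀ hW.ne', inv_mul_eq_div] at this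

/-- Lemma 1: `B(x₁, …, xₙ)` is closed under addition. -/
theorem stmt_3 (n : ℕ) (x : Fin n → ℝ) (hxpos : ∀ i, 0 < x i)
    (a b : ℝ) (ha : a ∈ BSet (Set.range x)) (hb : b ∈ BSet (Set.range x)) :
    a + b ∈ BSet (Set.range x) := by
  obtain ⟨ha0, hA⟩ := bset_normal ha
  obtain ⟨hb0, hB⟩ := bset_normal hb
  refine ⟨a + b, 1, Set.Icc 0 (0 + (a + b)) ×ˢ Set.Icc 0 (0 + 1),
    ⟨by positivity, one_pos, 0, 0, rfl⟩, Or.inl (by simp), ?_⟩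
  have := tiledBy_union (hA 0) (hB (0 + a)) ?_
  · rwa [← Set.union_prod, Set.Icc_union_Icc_eq_Icc (by linarith) (by linarith), add_assoc] at this
  · simp only [interior_prod_eq, interior_Icc]
    rw [Set.disjoint_left]
    rintro ⟨u, v⟩ ⟨h1, _⟩ ⟨h2, _⟩
    exact lt_asymm h1.2 h2.1
end

section
/- Let x₁, …, xₙ be positive real numbers. If a ∈ B(x₁, …, xₙ) and q is a positive rational number, then q·a ∈ B(x₁, …, xₙ). -/
theorem aux_compose {ι : Type} [Fintype ι] (S : ι → Set (ℝ × ℝ)) (r : Set ℝ)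
    (hS : ∀ i, TiledBy (S i) r)
    (hd : Pairwise fun i j => Disjoint (interior (S i)) (interior (S j))) :
    TiledBy (⋃ i, S i) r := by
  choose m T w h h1 h2 h3 h4 using hS
  let e := Fintype.equivFin (Σ i, Fin (m i))
  refine ⟨Fintype.card (Σ i, Fin (m i)), fun k => T (e.symm k).1 (e.symm k).2,
    fun k => w (e.symm k).1 (e.symm k).2, fun k => h (e.symm k).1 (e.symm k).2,
    fun k => h1 _ _, fun k => h2 _ _, ?_, ?_⟩
  · rw [e.symm.surjective.iUnion_comp (fun s : (Σ i, Fin (m i)) => T s.1 s.2), Set.iUnion_sigma]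
    exact Set.iUnion_congr h3
  · intro a b hab
    have hne : e.symm a ≠ e.symm b := fun hh => hab (e.symm.injective hh)
    dsimp only
    generalize e.symm a = s at hne
    generalize e.symm b = t at hne
    obtain ⟨i, u⟩ := s
    obtain ⟨j, v⟩ := t
    by_cases hij : i = j
    · subst hij
      exact h4 i (fun huv => hne (congrArg (Sigma.mk i) huv))
    · refine (hd hij).mono (interior_mono ?_) (interior_mono ?_)
      · rw [← h3 i]; exact Set.subset_iUnion _ u
      · rw [← h3 j]; exact Set.subset_iUnion _ v

theorem aux_translate (R : Set (ℝ × ℝ)) (r : Set ℝ) (c : ℝ × ℝ) (hR : TiledBy R r) :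
    TiledBy ((Homeomorph.addRight c) ⁻¹' R) r := by
  obtain ⟨m, T, w, h, h1, h2, h3, h4⟩ := hR
  refine ⟨m, fun i => (Homeomorph.addRight c) ⁻¹' (T i), w, h, ?_, h2, ?_, ?_⟩
  · intro i
    obtain ⟨hw, hh, x, y, e⟩ := h1 i
    refine ⟨hw, hh, x - c.1, y - c.2, ?_⟩
    dsimp only
    rw [e]
    ext ⟨u, v⟩
    simp only [Set.mem_preimage, Homeomorph.coe_addRight, Set.mem_prod, Set.mem_Icc,
      Prod.fst_add, Prod.snd_add]
    constructor
    · rintro ⟨⟨_, _⟩, _, _⟩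
      refine ⟨⟨?_, ?_⟩, ?_, ?_⟩ <;> linarith
    · rintro ⟨⟨_, _⟩, _, _⟩
      refine ⟨⟨?_, ?_⟩, ?_, ?_⟩ <;> linarith
  · rw [← Set.preimage_iUnion, h3]
  · intro i j hij
    dsimp only
    rw [← Homeomorph.preimage_interior, ← Homeomorph.preimage_interior]
    exact (h4 hij).preimage _

theorem aux_cover (x W : ℝ) (hW : 0 < W) (p : ℕ) (hp : 0 < p) (u : ℝ) :
    u ∈ Set.Icc x (x + p * W) ↔
      ∃ i : Fin p, u ∈ Set.Icc (x + (i : ℕ) * W) (x + (i : ℕ) * W + W) := by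
  constructor
  · rintro ⟨h1, h2⟩
    by_cases hu : u = x + p * W
    · refine ⟨⟨p - 1, by omega⟩, ?_⟩
      have : ((p - 1 : ℕ) : ℝ) = p - 1 := by
        rw [Nat.cast_sub hp]; simp
      simp only [this, Set.mem_Icc]
      constructor <;> nlinarith
    · have hlt : u < x + p * W := lt_of_le_of_ne h2 hu
      have h0 : 0 ≤ (u - x) / W := div_nonneg (by linarith) hW.le
      have ha := Nat.floor_le h0
      have hb := Nat.lt_floor_add_one ((u - x) / W)
      rw [le_div_iff₀ hW] at ha
      rw [div_lt_iff₀ hW] at hb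
      refine ⟨⟨⌊(u - x) / W⌋₊, ?_⟩, ?_, ?_⟩
      · rw [Nat.floor_lt h0, div_lt_iff₀ hW]; linarith
      · dsimp only; linarith
      · dsimp only; linarith
  · rintro ⟨i, h1, h2⟩
    have hi : ((i : ℕ) : ℝ) + 1 ≤ p := by exact_mod_cast i.2
    have h0 : (0 : ℝ) ≤ (i : ℕ) := Nat.cast_nonneg _
    constructor <;> nlinarith

theorem aux_disj (x W : ℝ) (hW : 0 < W) (i j : ℕ) (hij : i ≠ j) :
    Disjoint (Set.Ioo (x + i * W) (x + i * W + W)) (Set.Ioo (x + j * W) (x + j * W + W)) := by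
  rw [Set.disjoint_left]
  rintro u ⟨h1, h2⟩ ⟨h3, h4⟩
  rcases lt_or_gt_of_ne hij with h | h
  · have : (i : ℝ) + 1 ≤ j := by exact_mod_cast h
    nlinarith
  · have : (j : ℝ) + 1 ≤ i := by exact_mod_cast h
    nlinarith

theorem aux_grid (R : Set (ℝ × ℝ)) (W H : ℝ) (r : Set ℝ) (hR : IsRect R W H)
    (hT : TiledBy R r) (p k : ℕ) (hp : 0 < p) (hk : 0 < k) :
    ∃ R', IsRect R' (p * W) (k * H) ∧ TiledBy R' r := by
  obtain ⟨hW, hH, x, y, rfl⟩ := hR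
  refine ⟨Set.Icc x (x + p * W) ×ˢ Set.Icc y (y + k * H),
    ⟨by positivity, by positivity, x, y, rfl⟩, ?_⟩
  have key : Set.Icc x (x + p * W) ×ˢ Set.Icc y (y + k * H) =
      ⋃ s : Fin p × Fin k, Set.Icc (x + (s.1 : ℕ) * W) (x + (s.1 : ℕ) * W + W) ×ˢ
        Set.Icc (y + (s.2 : ℕ) * H) (y + (s.2 : ℕ) * H + H) := by
    ext ⟨u, v⟩
    rw [Set.mem_prod, aux_cover x W hW p hp, aux_cover y H hH k hk, Set.mem_iUnion]
    constructor
    · rintro ⟨⟨i, hi⟩, j, hj⟩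
      exact ⟨(i, j), hi, hj⟩
    · rintro ⟨⟨i, j⟩, hi, hj⟩
      exact ⟨⟨i, hi⟩, j, hj⟩
  rw [key]
  apply aux_compose
  · rintro ⟨i, j⟩
    have := aux_translate _ r (-((i : ℕ) * W), -((j : ℕ) * H)) hT
    convert this using 1
    ext ⟨u, v⟩
    simp only [Set.mem_preimage, Homeomorph.coe_addRight, Set.mem_prod, Set.mem_Icc,
      Prod.mk_add_mk]
    constructor
    · rintro ⟨⟨_, _⟩, _, _⟩
      refine ⟨⟨?_, ?_⟩, ?_, ?_⟩ <;> linarith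
    · rintro ⟨⟨_, _⟩, _, _⟩
      refine ⟨⟨?_, ?_⟩, ?_, ?_⟩ <;> linarith
  · rintro ⟨i, j⟩ ⟨i', j'⟩ hne
    dsimp only
    simp only [interior_prod_eq, interior_Icc]
    rw [Set.disjoint_prod]
    by_cases h : i = i'
    · right
      apply aux_disj y H hH
      intro hh
      exact hne (Prod.ext h (Fin.ext hh))
    · left
      apply aux_disj x W hW
      intro hh
      exact h (Fin.ext hh)

/-- Lemma 3: `B(x₁, …, xₙ)` is closed under multiplication by positive rationals. -/
theorem stmt_5 (n : ℕ) (x : Fin n → ℝ) (hxpos : ∀ i, 0 < x i)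
    (a : ℝ) (ha : a ∈ BSet (Set.range x)) (q : ℚ) (hq : 0 < q) :
    (q : ℝ) * a ∈ BSet (Set.range x) := by
  obtain ⟨W, H, R, hR, hz, hT⟩ := ha
  have hW := hR.1
  have hH := hR.2.1
  have hnum : 0 < q.num.toNat := by
    have := Rat.num_pos.mpr hq
    omega
  have hqe : (q : ℝ) = (q.num.toNat : ℝ) / (q.den : ℝ) := by
    have h1 : ((q.num.toNat : ℤ)) = q.num := Int.toNat_of_nonneg (Rat.num_pos.mpr hq).le
    have h2 : ((q.num.toNat : ℕ) : ℝ) = ((q.num : ℤ) : ℝ) := by exact_mod_cast congrArg (Int.cast (R := ℝ)) h1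
    rw [h2]
    exact Rat.cast_def q
  have hd : (0 : ℝ) < q.den := by exact_mod_cast q.den_pos
  rcases hz with rfl | rfl
  · obtain ⟨R', h1, h2⟩ := aux_grid R W H _ hR hT q.num.toNat q.den hnum q.den_pos
    refine ⟨_, _, R', h1, Or.inl ?_, h2⟩
    rw [hqe]; field_simp
  · obtain ⟨R', h1, h2⟩ := aux_grid R W H _ hR hT q.den q.num.toNat q.den_pos hnum
    refine ⟨_, _, R', h1, Or.inr ?_, h2⟩
    rw [hqe]; field_simp
end

section
/- Let p be a positive rational number with √p irrational, let a, b be rational numbers, and set x = a + b√p. If x > 0 and a − b√p > 0, then a − b√p ∈ B(x). -/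
lemma exists_cell (m : ℕ) (hm : 0 < m) (u : ℝ) (h0 : 0 ≤ u) (h1 : u ≤ m) :
    ∃ i : Fin m, ((i : ℕ) : ℝ) ≤ u ∧ u ≤ ((i : ℕ) : ℝ) + 1 := by
  by_cases h : u < m
  · refine ⟨⟨⌊u⌋₊, (Nat.floor_lt h0).2 h⟩, Nat.floor_le h0, (Nat.lt_floor_add_one u).le⟩
  · have hu : u = m := le_antisymm h1 (not_lt.1 h)
    refine ⟨⟨m - 1, by omega⟩, ?_, ?_⟩
    · simp only [hu]; exact_mod_cast Nat.sub_le m 1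
    · simp only [hu]; exact_mod_cast (by omega : m ≤ m - 1 + 1)

lemma cell_eq (i j : ℕ) (u : ℝ) (h1 : (i : ℝ) < u) (h2 : u < i + 1) (h3 : (j : ℝ) < u)
    (h4 : u < j + 1) : i = j := by
  have a : i < j + 1 := by exact_mod_cast h1.trans h4
  have b : j < i + 1 := by exact_mod_cast h3.trans h2
  omega

lemma grid_mem (x : ℝ) (hx : 0 < x) (m n : ℕ) (hm : 0 < m) (hn : 0 < n) :
    (m : ℝ) / (n * x) ∈ BSet {x} := by
  have hm' : (0 : ℝ) < m := by exact_mod_cast hm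
  have hn' : (0 : ℝ) < n := by exact_mod_cast hn
  let e := (finProdFinEquiv (m := m) (n := n)).symm
  refine ⟨m, n * x, Set.Icc 0 (0 + (m : ℝ)) ×ˢ Set.Icc 0 (0 + n * x),
    ⟨hm', by positivity, 0, 0, rfl⟩, Or.inl rfl, m * n,
    fun k => Set.Icc (((e k).1 : ℕ) : ℝ) (((e k).1 : ℕ) + 1) ×ˢ
      Set.Icc (((e k).2 : ℕ) * x) (((e k).2 : ℕ) * x + x),
    fun _ => 1, fun _ => x, fun k => ⟨one_pos, hx, _, _, rfl⟩, fun k => Or.inr (by simp), ?_, ?_⟩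
  · ext ⟨u, v⟩
    simp only [Set.mem_iUnion, Set.mem_prod, Set.mem_Icc, zero_add]
    constructor
    · rintro ⟨k, ⟨h1, h2⟩, h3, h4⟩
      have a1 : (((e k).1 : ℕ) : ℝ) + 1 ≤ m := by exact_mod_cast (e k).1.2
      have a2 : (((e k).2 : ℕ) : ℝ) + 1 ≤ n := by exact_mod_cast (e k).2.2
      have a3 : (0 : ℝ) ≤ ((e k).1 : ℕ) := by positivity
      have a4 : (0 : ℝ) ≤ ((e k).2 : ℕ) * x := by positivity
      have a5 := mul_le_mul_of_nonneg_right a2 hx.le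
      refine ⟨⟨by linarith, by linarith⟩, by linarith, by linarith⟩
    · rintro ⟨⟨h1, h2⟩, h3, h4⟩
      obtain ⟨i, hi1, hi2⟩ := exists_cell m hm u h1 h2
      obtain ⟨j, hj1, hj2⟩ := exists_cell n hn (v / x) (by positivity) ((div_le_iff₀ hx).2 h4)
      rw [le_div_iff₀ hx] at hj1
      rw [div_le_iff₀ hx] at hj2
      refine ⟨e.symm (i, j), ?_⟩
      simp only [Equiv.apply_symm_apply]
      exact ⟨⟨hi1, hi2⟩, hj1, by linarith⟩
  · intro k l hkl
    rw [Set.disjoint_left]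
    rintro ⟨u, v⟩ h1 h2
    simp only [interior_prod_eq, interior_Icc, Set.mem_prod, Set.mem_Ioo] at h1 h2
    obtain ⟨⟨p1, p2⟩, p3, p4⟩ := h1
    obtain ⟨⟨q1, q2⟩, q3, q4⟩ := h2
    apply hkl
    apply e.injective
    apply Prod.ext
    · exact Fin.ext (cell_eq _ _ u p1 p2 q1 q2)
    · refine Fin.ext (cell_eq _ _ (v / x) ((lt_div_iff₀ hx).2 p3) ((div_lt_iff₀ hx).2 ?_)
        ((lt_div_iff₀ hx).2 q3) ((div_lt_iff₀ hx).2 ?_)) <;> linarith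

/-- Lemma 4, first part: if `x = a + b√p > 0` and its conjugate `a - b√p > 0`,
then `a - b√p ∈ B(x)`. -/
theorem stmt_6 (p : ℚ) (hp : 0 < p) (hirr : Irrational (Real.sqrt p))
    (a b : ℚ) (x : ℝ) (hx : x = (a : ℝ) + (b : ℝ) * Real.sqrt p)
    (hxpos : 0 < x) (hconj : 0 < (a : ℝ) - (b : ℝ) * Real.sqrt p) :
    (a : ℝ) - (b : ℝ) * Real.sqrt p ∈ BSet {x} := by
  have hs : Real.sqrt p * Real.sqrt p = p := Real.mul_self_sqrt (by exact_mod_cast hp.le)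
  have hN : ((a ^ 2 - b ^ 2 * p : ℚ) : ℝ) = (a - b * Real.sqrt p) * x := by
    rw [hx]; push_cast; linear_combination (b : ℝ) ^ 2 * hs
  have hpos : 0 < a ^ 2 - b ^ 2 * p := by
    have : (0 : ℝ) < ((a ^ 2 - b ^ 2 * p : ℚ) : ℝ) := by rw [hN]; positivity
    exact_mod_cast this
  generalize a ^ 2 - b ^ 2 * p = N at hN hpos
  have hnum : 0 < N.num := Rat.num_pos.2 hpos
  have key := grid_mem x hxpos N.num.toNat N.den (by omega) N.den_pos
  convert key using 1
  have h1 : ((N.num.toNat : ℕ) : ℝ) = (N.num : ℝ) := by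
    exact_mod_cast Int.toNat_of_nonneg hnum.le
  have h2 : (N : ℝ) = N.num / N.den := by exact_mod_cast (Rat.num_div_den N).symm
  rw [h1, ← div_div, ← h2, hN]
  field_simp
end

section
/- Let p be a positive rational number with √p irrational, let a, b be rational numbers, and set x = a + b√p. If x > 0 and a − b√p > 0, then every positive rational number q belongs to B(x). -/
theorem tiled_union_s7 {R S : Set (ℝ × ℝ)} {A : Set ℝ} (hR : TiledBy R A) (hS : TiledBy S A)
    (hd : Disjoint (interior R) (interior S)) : TiledBy (R ∪ S) A := by
  obtain ⟨m, T, w, h, h1, h2, h3, h4⟩ := hR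
  obtain ⟨n, U, w', h', g1, g2, g3, g4⟩ := hS
  have hT : ∀ i, interior (T i) ⊆ interior R := fun i =>
    interior_mono (h3 ▸ Set.subset_iUnion T i)
  have hU : ∀ i, interior (U i) ⊆ interior S := fun i =>
    interior_mono (g3 ▸ Set.subset_iUnion U i)
  refine ⟨m + n, Fin.append T U, Fin.append w w', Fin.append h h', ?_, ?_, ?_, ?_⟩
  · intro i
    refine Fin.addCases (fun i => ?_) (fun i => ?_) i
    · simpa using h1 i
    · simpa using g1 i
  · intro i
    refine Fin.addCases (fun i => ?_) (fun i => ?_) i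
    · simpa using h2 i
    · simpa using g2 i
  · rw [← h3, ← g3]
    ext z
    simp only [Set.mem_iUnion, Set.mem_union]
    constructor
    · rintro ⟨i, hi⟩
      revert hi
      refine Fin.addCases (fun i hi => ?_) (fun i hi => ?_) i
      · left; exact ⟨i, by simpa using hi⟩
      · right; exact ⟨i, by simpa using hi⟩
    · rintro (⟨i, hi⟩ | ⟨i, hi⟩)
      · exact ⟨Fin.castAdd n i, by simpa using hi⟩
      · exact ⟨Fin.natAdd m i, by simpa using hi⟩
  · intro i j
    refine Fin.addCases (fun i => ?_) (fun i => ?_) i <;>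
    refine Fin.addCases (fun j => ?_) (fun j => ?_) j <;> intro hij <;>
    simp only [Fin.append_left, Fin.append_right]
    · exact h4 (fun e => hij (by rw [e]))
    · exact hd.mono (hT i) (hU j)
    · exact hd.symm.mono (hU i) (hT j)
    · exact g4 (fun e => hij (by rw [e]))

def Tl (x w h : ℝ) : Prop :=
  ∀ u v : ℝ, TiledBy (Set.Icc u (u + w) ×ˢ Set.Icc v (v + h)) {x}

theorem Tl_base {x w h : ℝ} (hw : 0 < w) (hh : 0 < h) (e : w / h = x ∨ h / w = x) : Tl x w h := by
  intro u v
  refine ⟨1, fun _ => Set.Icc u (u + w) ×ˢ Set.Icc v (v + h), fun _ => w, fun _ => h,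
    fun _ => ⟨hw, hh, u, v, rfl⟩, fun _ => by simpa using e, Set.iUnion_const _, ?_⟩
  intro i j hij
  exact absurd (Subsingleton.elim i j) hij

theorem Tl_h {x w w' h : ℝ} (hw : 0 < w) (hw' : 0 < w') (h1 : Tl x w h) (h2 : Tl x w' h) :
    Tl x (w + w') h := by
  intro u v
  have := tiled_union_s7 (h1 u v) (h2 (u + w) v) (by
    rw [interior_prod_eq, interior_prod_eq, interior_Icc, interior_Icc, interior_Icc]
    refine Set.disjoint_left.2 ?_
    rintro ⟨s, t⟩ ⟨⟨_, h1⟩, _⟩ ⟨⟨h2, _⟩, _⟩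
    exact lt_asymm h1 h2)
  rwa [← Set.union_prod, Set.Icc_union_Icc_eq_Icc (by linarith) (by linarith), add_assoc] at this

theorem Tl_v {x w h h' : ℝ} (hw : 0 < h) (hw' : 0 < h') (h1 : Tl x w h) (h2 : Tl x w h') :
    Tl x w (h + h') := by
  intro u v
  have := tiled_union_s7 (h1 u v) (h2 u (v + h)) (by
    rw [interior_prod_eq, interior_prod_eq, interior_Icc, interior_Icc, interior_Icc]
    refine Set.disjoint_left.2 ?_
    rintro ⟨s, t⟩ ⟨_, ⟨_, h1⟩⟩ ⟨_, ⟨h2, _⟩⟩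
    exact lt_asymm h1 h2)
  rwa [← Set.prod_union, Set.Icc_union_Icc_eq_Icc (by linarith) (by linarith), add_assoc] at this

theorem Tl_hn {x w h : ℝ} (hw : 0 < w) (h1 : Tl x w h) (k : ℕ) : Tl x ((k + 1 : ℝ) * w) h := by
  induction k with
  | zero => simpa using h1
  | succ k ih =>
    have := Tl_h (by positivity) hw ih h1
    convert this using 1
    push_cast; ring

theorem Tl_vn {x w h : ℝ} (hw : 0 < h) (h1 : Tl x w h) (k : ℕ) : Tl x w ((k + 1 : ℝ) * h) := by
  induction k with
  | zero => simpa using h1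
  | succ k ih =>
    have := Tl_v (by positivity) hw ih h1
    convert this using 1
    push_cast; ring

theorem Tl_rat {x y : ℝ} (hy : 0 < y) (e : y = x ∨ 1 / y = x) (r : ℚ) (hr : 0 < r) :
    Tl x (r * y) 1 := by
  obtain ⟨k, hk⟩ : ∃ k : ℕ, r.num = k + 1 := by
    have := Rat.num_pos.2 hr
    exact ⟨(r.num - 1).toNat, by omega⟩
  obtain ⟨m, hm⟩ : ∃ m : ℕ, r.den = m + 1 := ⟨r.den - 1, by have := r.pos; omega⟩
  have hrr : (r : ℝ) = (k + 1 : ℝ) / (m + 1 : ℝ) := by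
    rw [Rat.cast_def, hk, hm]; push_cast; rfl
  have hm0 : (0 : ℝ) < (m : ℝ) + 1 := by positivity
  have hb : Tl x (y / (m + 1 : ℝ)) (1 / (m + 1 : ℝ)) := by
    apply Tl_base (by positivity) (by positivity)
    refine e.imp (fun e => ?_) (fun e => ?_)
    · rw [← e]; field_simp
    · rw [← e]; field_simp
  have := Tl_vn (by positivity) (Tl_hn (by positivity) hb k) m
  convert this using 1
  · rw [hrr]; field_simp
  · field_simp

/-- Lemma 4, second part: if `x = a + b√p > 0` and its conjugate `a - b√p > 0`,
then every positive rational belongs to `B(x)`. -/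
theorem stmt_7 (p : ℚ) (hp : 0 < p) (hirr : Irrational (Real.sqrt p))
    (a b : ℚ) (x : ℝ) (hx : x = (a : ℝ) + (b : ℝ) * Real.sqrt p)
    (hxpos : 0 < x) (hconj : 0 < (a : ℝ) - (b : ℝ) * Real.sqrt p)
    (q : ℚ) (hq : 0 < q) :
    (q : ℝ) ∈ BSet {x} := by
  have hs : Real.sqrt p * Real.sqrt p = p := Real.mul_self_sqrt (by exact_mod_cast hp.le)
  have hnr : ((a ^ 2 - b ^ 2 * p : ℚ) : ℝ) = x * ((a : ℝ) - (b : ℝ) * Real.sqrt p) := by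
    push_cast; rw [hx]; linear_combination (-(b : ℝ) ^ 2) * (-hs)
  have hn : 0 < a ^ 2 - b ^ 2 * p := by
    have : (0 : ℝ) < ((a ^ 2 - b ^ 2 * p : ℚ) : ℝ) := by rw [hnr]; positivity
    exact_mod_cast this
  have ha : 0 < a := by
    have : (0 : ℝ) < a := by linarith
    exact_mod_cast this
  have hr : 0 < q / (2 * a) := by positivity
  have har : (0 : ℝ) < a := by exact_mod_cast ha
  have t1 := Tl_rat hxpos (Or.inl rfl) _ hr
  have t2 := Tl_rat (x := x) (y := 1 / x) (by positivity) (Or.inr (by simp)) _ (mul_pos hr hn)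
  have p1 : (0 : ℝ) < ((q / (2 * a) : ℚ) : ℝ) := by exact_mod_cast hr
  have p2 : (0 : ℝ) < ((q / (2 * a) * (a ^ 2 - b ^ 2 * p) : ℚ) : ℝ) := by
    exact_mod_cast mul_pos hr hn
  have t := Tl_h (by positivity) (by positivity) t1 t2
  have e : ((q / (2 * a) : ℚ) : ℝ) * x
      + ((q / (2 * a) * (a ^ 2 - b ^ 2 * p) : ℚ) : ℝ) * (1 / x) = q := by
    rw [Rat.cast_mul, hnr]
    have : ((q / (2 * a) : ℚ) : ℝ) = (q : ℝ) / (2 * a) := by push_cast; rfl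
    rw [this]
    have h2 : (a : ℝ) - (b : ℝ) * Real.sqrt p = 2 * a - x := by rw [hx]; ring
    rw [h2]
    field_simp
    ring
  rw [e] at t
  have hq' : (0 : ℝ) < q := by exact_mod_cast hq
  exact ⟨q, 1, _, ⟨hq', one_pos, 0, 0, rfl⟩, Or.inl (by simp), t 0 0⟩
end

section
/- Let p be a positive rational number with √p irrational, and let x₁, …, xₙ be positive real numbers each belonging to ℚ[√p]. Then every element of B(x₁, …, xₙ) belongs to ℚ[√p] and is positive; that is, B(x₁, …, xₙ) ⊆ ℚ[√p] ∩ ℝ⁺. -/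
open Filter Topology in
theorem aux_jump_s9 {ι R : Type*} [Fintype ι] [CommRing R] (d : ι → R) (t : ι → ℝ)
    (hF : ∀ x : ℝ, ∑ j, (if t j ≤ x then d j else 0) = 0) (g : ℝ → R) :
    ∑ j, d j * g (t j) = 0 := by
  classical
  have key : ∀ u : ℝ, ∑ j, (if t j = u then d j else 0) = 0 := by
    intro u
    have hev : ∀ᶠ v in 𝓝[<] u, ∀ j, t j < u → t j < v := by
      rw [eventually_all]
      intro j
      by_cases h : t j < u
      · filter_upwards [Ioo_mem_nhdsLT h] with v hv _ using hv.1
      · exact Eventually.of_forall fun v h' => absurd h' h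
    obtain ⟨v, hv, hvu⟩ := (hev.and self_mem_nhdsWithin).exists
    have hvu : v < u := hvu
    have h1 := hF u
    have h2 := hF v
    have h3 : ∑ j, ((if t j ≤ u then d j else 0) - (if t j ≤ v then d j else 0)) = 0 := by
      rw [Finset.sum_sub_distrib, h1, h2, sub_zero]
    refine (Finset.sum_congr rfl fun j _ => ?_).trans h3
    rcases lt_trichotomy (t j) u with h | h | h
    · have := hv j h
      simp [h.ne, h.le, this.le]
    · simp [h, not_le.2 hvu]
    · simp [h.ne', not_le.2 h, not_le.2 (hvu.trans h)]
  have : ∑ u ∈ Finset.univ.image t, (∑ j, (if t j = u then d j else 0)) * g u = 0 :=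
    Finset.sum_eq_zero fun u _ => by rw [key u, zero_mul]
  rw [← this]
  simp_rw [Finset.sum_mul]
  rw [Finset.sum_comm]
  refine Finset.sum_congr rfl fun j _ => ?_
  rw [Finset.sum_eq_single (t j)]
  · simp
  · intro b _ hb
    simp [hb.symm]
  · intro h
    exact absurd (Finset.mem_image_of_mem t (Finset.mem_univ j)) h

theorem aux_one {ι R : Type*} [Fintype ι] [CommRing R] (c : ι → R) (a b : ι → ℝ)
    (hab : ∀ i, a i ≤ b i)
    (hF : ∀ x : ℝ, ∑ j, (if a j ≤ x ∧ x < b j then c j else 0) = 0) (g : ℝ → R) :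
    ∑ j, c j * (g (b j) - g (a j)) = 0 := by
  classical
  have := aux_jump_s9 (ι := ι ⊕ ι) (Sum.elim c (fun i => - c i)) (Sum.elim a b) (by
    intro x
    rw [Fintype.sum_sum_type, ← Finset.sum_add_distrib]
    refine (Finset.sum_congr rfl fun j _ => ?_).trans (hF x)
    have := hab j
    simp only [Sum.elim_inl, Sum.elim_inr]
    by_cases h1 : a j ≤ x <;> by_cases h2 : b j ≤ x
    · simp [h1, h2]
    · simp [h1, h2, lt_of_not_ge h2]
    · exact absurd (this.trans h2) h1
    · simp [h1, h2]) g
  rw [Fintype.sum_sum_type, ← Finset.sum_add_distrib] at this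
  simp only [Sum.elim_inl, Sum.elim_inr] at this
  rw [← neg_eq_zero, ← Finset.sum_neg_distrib]
  exact (Finset.sum_congr rfl fun j _ => by ring).trans this

theorem aux_two {ι R : Type*} [Fintype ι] [CommRing R] (e : ι → R) (a b c d : ι → ℝ)
    (hab : ∀ i, a i ≤ b i) (hcd : ∀ i, c i ≤ d i)
    (hF : ∀ x y : ℝ, ∑ j, (if (a j ≤ x ∧ x < b j) ∧ (c j ≤ y ∧ y < d j) then e j else 0) = 0)
    (f g : ℝ → R) :
    ∑ j, e j * (f (b j) - f (a j)) * (g (d j) - g (c j)) = 0 := by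
  classical
  refine aux_one (fun j => e j * (f (b j) - f (a j))) c d hcd (fun y => ?_) g
  have := aux_one (fun j => if c j ≤ y ∧ y < d j then e j else 0) a b hab (fun x => ?_) f
  · refine (Finset.sum_congr rfl fun j _ => ?_).trans this
    split_ifs <;> simp
  · refine (Finset.sum_congr rfl fun j _ => ?_).trans (hF x y)
    exact (ite_and _ _ _ _).symm

open Filter Topology in
theorem aux_push {ι : Type*} [Finite ι] (a b : ι → ℝ) (x : ℝ) :
    ∃ x' : ℝ, ∀ i, ((a i ≤ x ∧ x < b i) → a i < x' ∧ x' < b i) ∧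
      ((a i ≤ x' ∧ x' ≤ b i) → a i ≤ x ∧ x < b i) := by
  have hev : ∀ᶠ v in 𝓝[>] x, ∀ i, (x < a i → v < a i) ∧ (x < b i → v < b i) := by
    rw [eventually_all]
    intro j
    refine Eventually.and ?_ ?_
    · by_cases h : x < a j
      · filter_upwards [Ioo_mem_nhdsGT h] with v hv _ using hv.2
      · exact Eventually.of_forall fun v h' => absurd h' h
    · by_cases h : x < b j
      · filter_upwards [Ioo_mem_nhdsGT h] with v hv _ using hv.2
      · exact Eventually.of_forall fun v h' => absurd h' h
  obtain ⟨v, hv, hvu⟩ := (hev.and self_mem_nhdsWithin).exists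
  have hvu : x < v := hvu
  refine ⟨v, fun i => ⟨fun h => ⟨by linarith, (hv i).2 h.2⟩, fun h => ⟨?_, by linarith⟩⟩⟩
  by_contra h'
  have := (hv i).1 (not_le.1 h')
  linarith

theorem aux_tile {R : Type*} [CommRing R] {m : ℕ} (a c w h : Fin m → ℝ) (A C W H : ℝ)
    (hw : ∀ i, 0 < w i) (hh : ∀ i, 0 < h i) (hW : 0 < W) (hH : 0 < H)
    (hU : (⋃ i, Set.Icc (a i) (a i + w i) ×ˢ Set.Icc (c i) (c i + h i)) =
      Set.Icc A (A + W) ×ˢ Set.Icc C (C + H))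
    (hD : Pairwise fun i j =>
      Disjoint (interior (Set.Icc (a i) (a i + w i) ×ˢ Set.Icc (c i) (c i + h i)))
        (interior (Set.Icc (a j) (a j + w j) ×ˢ Set.Icc (c j) (c j + h j))))
    (f g : ℝ →+ R) : ∑ i, f (w i) * g (h i) = f W * g H := by
  classical
  let a' : Option (Fin m) → ℝ := fun o => o.elim A a
  let b' : Option (Fin m) → ℝ := fun o => o.elim (A + W) (fun i => a i + w i)
  let c' : Option (Fin m) → ℝ := fun o => o.elim C c
  let d' : Option (Fin m) → ℝ := fun o => o.elim (C + H) (fun i => c i + h i)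
  have := aux_two (ι := Option (Fin m)) (R := R) (fun o => o.elim (-1) (fun _ => 1)) a' b' c' d'
    (by rintro (_ | i)
        · simp [a', b', hW.le]
        · simp [a', b', (hw i).le])
    (by rintro (_ | i)
        · simp [c', d', hH.le]
        · simp [c', d', (hh i).le])
    (by
      intro x y
      obtain ⟨x', hx'⟩ := aux_push a' b' x
      obtain ⟨y', hy'⟩ := aux_push c' d' y
      have hx0 := hx' none
      have hy0 := hy' none
      have hxs := fun i => hx' (some i)
      have hys := fun i => hy' (some i)
      simp only [a', b', c', d', Option.elim] at hx0 hy0 hxs hys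
      rw [Fintype.sum_option]
      change (if (A ≤ x ∧ x < A + W) ∧ (C ≤ y ∧ y < C + H) then (-1 : R) else 0) +
        ∑ i, (if (a i ≤ x ∧ x < a i + w i) ∧ (c i ≤ y ∧ y < c i + h i) then (1 : R) else 0) = 0
      by_cases hin : (A ≤ x ∧ x < A + W) ∧ (C ≤ y ∧ y < C + H)
      · rw [if_pos hin]
        have hmem : (x', y') ∈ Set.Icc A (A + W) ×ˢ Set.Icc C (C + H) := by
          have h1 := hx0.1 hin.1
          have h2 := hy0.1 hin.2
          exact ⟨⟨h1.1.le, h1.2.le⟩, ⟨h2.1.le, h2.2.le⟩⟩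
        rw [← hU] at hmem
        obtain ⟨i, hi⟩ := Set.mem_iUnion.1 hmem
        have hi1 := (hxs i).2 hi.1
        have hi2 := (hys i).2 hi.2
        rw [Finset.sum_eq_single i]
        · rw [if_pos ⟨hi1, hi2⟩]; simp
        · intro j _ hj
          rw [if_neg]
          rintro ⟨hj1, hj2⟩
          have hd := hD hj
          beta_reduce at hd
          rw [interior_prod_eq, interior_prod_eq, interior_Icc, interior_Icc, interior_Icc,
            interior_Icc] at hd
          exact (Set.disjoint_left.1 hd) (show (x', y') ∈ _ from
            ⟨(hxs j).1 hj1, (hys j).1 hj2⟩) ⟨(hxs i).1 hi1, (hys i).1 hi2⟩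
        · simp
      · rw [if_neg hin, zero_add]
        refine Finset.sum_eq_zero fun j _ => ?_
        rw [if_neg]
        rintro ⟨hj1, hj2⟩
        apply hin
        have h1 := (hxs j).1 hj1
        have h2 := (hys j).1 hj2
        have hmem : (x', y') ∈ Set.Icc A (A + W) ×ˢ Set.Icc C (C + H) := by
          rw [← hU]
          exact Set.mem_iUnion.2 ⟨j, ⟨h1.1.le, h1.2.le⟩, ⟨h2.1.le, h2.2.le⟩⟩
        exact ⟨hx0.2 hmem.1, hy0.2 hmem.2⟩)
    f g
  rw [Fintype.sum_option] at this
  simp only [a', b', c', d', Option.elim, map_add, add_sub_cancel_left, one_mul] at this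
  linear_combination this

theorem aux_field (K : Subfield ℝ) {m : ℕ} (a c w h : Fin m → ℝ) (A C W H : ℝ)
    (hw : ∀ i, 0 < w i) (hh : ∀ i, 0 < h i) (hW : 0 < W) (hH : 0 < H)
    (hK : ∀ i, w i / h i ∈ K)
    (hU : (⋃ i, Set.Icc (a i) (a i + w i) ×ˢ Set.Icc (c i) (c i + h i)) =
      Set.Icc A (A + W) ×ˢ Set.Icc C (C + H))
    (hD : Pairwise fun i j =>
      Disjoint (interior (Set.Icc (a i) (a i + w i) ×ˢ Set.Icc (c i) (c i + h i)))
        (interior (Set.Icc (a j) (a j + w j) ×ˢ Set.Icc (c j) (c j + h j)))) :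
    W / H ∈ K := by
  have key : ∀ f g : ℝ →ₗ[K] K, f W * g H = g W * f H := by
    intro f g
    have h1 := aux_tile a c w h A C W H hw hh hW hH hU hD f.toAddMonoidHom g.toAddMonoidHom
    have h2 := aux_tile a c w h A C W H hw hh hW hH hU hD g.toAddMonoidHom f.toAddMonoidHom
    simp only [LinearMap.toAddMonoidHom_coe] at h1 h2
    rw [← h1, ← h2]
    refine Finset.sum_congr rfl fun i _ => ?_
    have hwi : w i = (⟨w i / h i, hK i⟩ : K) • h i := by
      rw [Subfield.smul_def]
      simp [div_mul_cancel₀ _ (hh i).ne']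
    rw [hwi, map_smul, map_smul]
    simp only [smul_eq_mul]
    ring
  by_cases hmem : W ∈ Submodule.span K {H}
  · obtain ⟨k, hk⟩ := Submodule.mem_span_singleton.1 hmem
    rw [← hk, Subfield.smul_def, smul_eq_mul, mul_div_assoc, div_self hH.ne', mul_one]
    exact k.2
  · exfalso
    obtain ⟨f, hf, hfk⟩ := Submodule.exists_le_ker_of_notMem hmem
    have hfH : f H = 0 := hfk (Submodule.mem_span_singleton_self H)
    have h0 : H ∉ (⊥ : Submodule K ℝ) := by simpa using hH.ne'
    obtain ⟨g, hg, -⟩ := Submodule.exists_le_ker_of_notMem h0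
    have := key f g
    rw [hfH, mul_zero] at this
    exact (mul_ne_zero hf hg) this

/-- The field of all c + d √p. -/
def auxK (p : ℚ) (hp : 0 < p) (hirr : Irrational (Real.sqrt p)) : Subfield ℝ where
  carrier := {z | ∃ c d : ℚ, z = (c : ℝ) + (d : ℝ) * Real.sqrt p}
  zero_mem' := ⟨0, 0, by simp⟩
  one_mem' := ⟨1, 0, by simp⟩
  add_mem' := by
    rintro _ _ ⟨a, b, rfl⟩ ⟨c, d, rfl⟩
    exact ⟨a + c, b + d, by push_cast; ring⟩
  neg_mem' := by
    rintro _ ⟨a, b, rfl⟩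
    exact ⟨-a, -b, by push_cast; ring⟩
  mul_mem' := by
    rintro _ _ ⟨a, b, rfl⟩ ⟨c, d, rfl⟩
    have hs : Real.sqrt p * Real.sqrt p = (p : ℝ) := Real.mul_self_sqrt (by exact_mod_cast hp.le)
    exact ⟨a * c + b * d * p, a * d + b * c, by push_cast; linear_combination (b * d : ℝ) * hs⟩
  inv_mem' := by
    rintro _ ⟨a, b, rfl⟩
    have hs : Real.sqrt p * Real.sqrt p = (p : ℝ) := Real.mul_self_sqrt (by exact_mod_cast hp.le)
    by_cases h0 : (a : ℝ) + b * Real.sqrt p = 0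
    · exact ⟨0, 0, by simp [h0]⟩
    have h1 : (a : ℝ) - b * Real.sqrt p ≠ 0 := by
      intro h
      by_cases hb : b = 0
      · subst hb
        apply h0
        simpa using h
      · apply hirr
        refine ⟨a / b, ?_⟩
        have : (b : ℝ) ≠ 0 := by exact_mod_cast hb
        push_cast
        rw [div_eq_iff this]
        linear_combination h
    have h2 : (a : ℝ) ^ 2 - b ^ 2 * p ≠ 0 := by
      have := mul_ne_zero h0 h1
      intro h
      apply this
      linear_combination h - (b : ℝ) ^ 2 * hs
    refine ⟨a / (a ^ 2 - b ^ 2 * p), -b / (a ^ 2 - b ^ 2 * p), ?_⟩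
    push_cast
    rw [inv_eq_iff_eq_inv, eq_comm, inv_eq_iff_eq_inv]
    rw [eq_comm]
    apply inv_eq_of_mul_eq_one_right
    field_simp
    linear_combination -(b : ℝ) ^ 2 * hs

/-- Lemma 6: if `x₁, …, xₙ ∈ ℚ[√p] ∩ ℝ⁺`, then `B(x₁, …, xₙ) ⊆ ℚ[√p] ∩ ℝ⁺`. -/
theorem stmt_9 (p : ℚ) (hp : 0 < p) (hirr : Irrational (Real.sqrt p))
    (n : ℕ) (x : Fin n → ℝ) (hxpos : ∀ i, 0 < x i)
    (hxq : ∀ i, ∃ c d : ℚ, x i = (c : ℝ) + (d : ℝ) * Real.sqrt p) :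
    ∀ z ∈ BSet (Set.range x),
      (∃ e f : ℚ, z = (e : ℝ) + (f : ℝ) * Real.sqrt p) ∧ 0 < z := by
  rintro z ⟨W, H, R, ⟨hW, hH, A, C, rfl⟩, hz, m, T, w, h, hT, hr, hU, hD⟩
  choose hw hh a c hTe using hT
  obtain rfl : T = fun i => Set.Icc (a i) (a i + w i) ×ˢ Set.Icc (c i) (c i + h i) := funext hTe
  have hK : ∀ i, w i / h i ∈ auxK p hp hirr := by
    intro i
    rcases hr i with ⟨j, hj⟩ | ⟨j, hj⟩
    · rw [← hj]; exact hxq j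
    · rw [← inv_div, ← hj]
      exact (auxK p hp hirr).inv_mem (hxq j)
  have hWH := aux_field (auxK p hp hirr) a c w h A C W H hw hh hW hH hK hU hD
  rcases hz with rfl | rfl
  · exact ⟨hWH, by positivity⟩
  · refine ⟨?_, by positivity⟩
    rw [← inv_div]
    exact (auxK p hp hirr).inv_mem hWH
end

section
/- Let p be a positive rational number with √p irrational, and let A, B, C be arbitrary real numbers. For a rectangle whose side lengths are α + β√p and γ + δ√p with α, β, γ, δ ∈ ℚ, define its "area" as S := αγ·A + (βγ + αδ)·B + βδ·C (this is well defined since the rational coordinates of an element of ℚ[√p] are unique). If an axis-parallel rectangle R, both of whose side lengths lie in ℚ[√p], is tiled by finitely many axis-parallel rectangles R₁, …, R_m, each of whose side lengths also lie in ℚ[√p], then the "area" of R equals the sum of the "areas" of R₁, …, R_m. -/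
noncomputable def cornerF (x y w h : ℝ) : (ℝ × ℝ) →₀ ℝ :=
  Finsupp.single (x + w, y + h) 1 - Finsupp.single (x, y + h) 1
    - Finsupp.single (x + w, y) 1 + Finsupp.single (x, y) 1

open Classical in
noncomputable def evF (q : ℝ × ℝ) : ((ℝ × ℝ) →₀ ℝ) →ₗ[ℝ] ℝ :=
  Finsupp.linearCombination ℝ (fun st : ℝ × ℝ => if st ≤ q then (1:ℝ) else 0)

lemma evF_eq_zero (u : (ℝ × ℝ) →₀ ℝ) (hu : ∀ q, evF q u = 0) : u = 0 := by
  classical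
  by_contra hne
  have hs : u.support.Nonempty := Finsupp.support_nonempty_iff.mpr hne
  obtain ⟨q, hq⟩ := Finset.exists_minimal hs
  have h := hu q
  rw [evF, Finsupp.linearCombination_apply, Finsupp.sum, Finset.sum_eq_single q] at h
  · have := Finsupp.mem_support_iff.mp hq.1
    simp at h
    exact this h
  · intro b hb hbq
    have : ¬ b ≤ q := fun hle => hbq (le_antisymm hle (hq.2 hb hle))
    simp [this]
  · intro h'
    exact absurd hq.1 h'

open Classical in
lemma evF_corner (x y w h : ℝ) (hw : 0 < w) (hh : 0 < h) (a b : ℝ) :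
    evF (a, b) (cornerF x y w h) =
      if (x ≤ a ∧ a < x + w) ∧ (y ≤ b ∧ b < y + h) then 1 else 0 := by
  simp only [evF, cornerF, map_add, map_sub, Finsupp.linearCombination_single, Prod.mk_le_mk,
    one_smul]
  by_cases h1 : x ≤ a <;> by_cases h2 : x + w ≤ a <;> by_cases h3 : y ≤ b <;>
    by_cases h4 : y + h ≤ b <;> simp [h1, h2, h3, h4] <;> first | linarith | (intros; linarith) | skip

lemma ev_half (x w a : ℝ) : ∀ᶠ e in nhdsWithin (0:ℝ) (Set.Ioi 0),
    ((x ≤ a ∧ a < x + w) → a + e ∈ Set.Ioo x (x + w)) ∧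
    (a + e ∈ Set.Icc x (x + w) → (x ≤ a ∧ a < x + w)) := by
  have h1 : ∀ c : ℝ, ∀ᶠ e in nhdsWithin (0:ℝ) (Set.Ioi 0), a < c → a + e < c := by
    intro c
    by_cases hc : a < c
    · filter_upwards [Ioo_mem_nhdsGT (show (0:ℝ) < c - a by linarith)] with e he _
      linarith [he.2]
    · exact Filter.Eventually.of_forall fun e h => absurd h hc
  filter_upwards [h1 x, h1 (x + w), self_mem_nhdsWithin] with e h2 h3 h4
  have h4 : 0 < e := h4
  refine ⟨fun h => ⟨by linarith [h.1], h3 h.2⟩, fun h => ⟨?_, by linarith [h.2]⟩⟩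
  by_contra hc
  linarith [h2 (not_le.mp hc), h.1]

lemma tiling_corner {m : ℕ} (X Y W H : ℝ) (hW : 0 < W) (hH : 0 < H)
    (x y w h : Fin m → ℝ) (hw : ∀ i, 0 < w i) (hh : ∀ i, 0 < h i)
    (hcover : (⋃ i, Set.Icc (x i) (x i + w i) ×ˢ Set.Icc (y i) (y i + h i))
      = Set.Icc X (X + W) ×ˢ Set.Icc Y (Y + H))
    (hdisj : Pairwise fun i j =>
      Disjoint (Set.Ioo (x i) (x i + w i) ×ˢ Set.Ioo (y i) (y i + h i))
        (Set.Ioo (x j) (x j + w j) ×ˢ Set.Ioo (y j) (y j + h j))) :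
    cornerF X Y W H = ∑ i, cornerF (x i) (y i) (w i) (h i) := by
  classical
  rw [← sub_eq_zero]
  apply evF_eq_zero
  rintro ⟨a, b⟩
  rw [map_sub, map_sum, sub_eq_zero, evF_corner _ _ _ _ hW hH]
  simp_rw [evF_corner _ _ _ _ (hw _) (hh _)]
  obtain ⟨e, hX, hY, hx, hy⟩ := ((ev_half X W a).and ((ev_half Y H b).and
    ((Filter.eventually_all.2 fun i => ev_half (x i) (w i) a).and
      (Filter.eventually_all.2 fun i => ev_half (y i) (h i) b)))).exists
  by_cases hin : (X ≤ a ∧ a < X + W) ∧ (Y ≤ b ∧ b < Y + H)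
  · rw [if_pos hin]
    have hm : (a + e, b + e) ∈ Set.Icc X (X + W) ×ˢ Set.Icc Y (Y + H) :=
      ⟨Set.Ioo_subset_Icc_self (hX.1 hin.1), Set.Ioo_subset_Icc_self (hY.1 hin.2)⟩
    rw [← hcover, Set.mem_iUnion] at hm
    obtain ⟨i, hi⟩ := hm
    have hi' := And.intro ((hx i).2 hi.1) ((hy i).2 hi.2)
    rw [Finset.sum_eq_single i, if_pos hi']
    · intro j _ hj
      rw [if_neg]
      intro hj'
      exact Set.disjoint_left.mp (hdisj hj)
        (show (a + e, b + e) ∈ _ from ⟨(hx j).1 hj'.1, (hy j).1 hj'.2⟩)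
        ⟨(hx i).1 hi'.1, (hy i).1 hi'.2⟩
    · simp
  · rw [if_neg hin, Finset.sum_eq_zero]
    intro i _
    rw [if_neg]
    intro hi
    apply hin
    have hm : (a + e, b + e) ∈ Set.Icc X (X + W) ×ˢ Set.Icc Y (Y + H) := by
      rw [← hcover, Set.mem_iUnion]
      exact ⟨i, Set.Ioo_subset_Icc_self ((hx i).1 hi.1), Set.Ioo_subset_Icc_self ((hy i).1 hi.2)⟩
    exact ⟨hX.2 hm.1, hY.2 hm.2⟩

lemma exists_fun (u v : ℝ) (h : ∀ q : ℚ, (q : ℝ) * u ≠ v) :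
    ∃ f : ℝ →ₗ[ℚ] ℚ, f u = 0 ∧ f v = 1 := by
  have hv : v ∉ Submodule.span ℚ {u} := by
    rw [Submodule.mem_span_singleton]
    rintro ⟨q, hq⟩
    exact h q (by rw [← hq, Rat.smul_def])
  obtain ⟨f, hf, hk⟩ := Submodule.exists_le_ker_of_notMem hv
  refine ⟨(f v)⁻¹ • f, ?_, ?_⟩
  · have : f u = 0 := hk (Submodule.mem_span_singleton_self u)
    simp [this]
  · simp [hf]

/-- Lemma 7 ("areas"): if a rectangle with side lengths in `ℚ[√p]` is tiled by
rectangles with side lengths in `ℚ[√p]`, then for the "area"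
`S = αγ·A + (βγ + αδ)·B + βδ·C` of a rectangle with sides `α + β√p`, `γ + δ√p`,
the "area" of the big rectangle equals the sum of the "areas" of the tiles. -/
theorem stmt_10 (p : ℚ) (hp : 0 < p) (hirr : Irrational (Real.sqrt p))
    (A B C : ℝ) (α β γ δ : ℚ) (R : Set (ℝ × ℝ))
    (hR : IsRect R ((α : ℝ) + (β : ℝ) * Real.sqrt p) ((γ : ℝ) + (δ : ℝ) * Real.sqrt p))
    (m : ℕ) (T : Fin m → Set (ℝ × ℝ)) (α' β' γ' δ' : Fin m → ℚ)
    (hT : ∀ i, IsRect (T i)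
      ((α' i : ℝ) + (β' i : ℝ) * Real.sqrt p) ((γ' i : ℝ) + (δ' i : ℝ) * Real.sqrt p))
    (hcover : (⋃ i, T i) = R)
    (hdisj : Pairwise fun i j => Disjoint (interior (T i)) (interior (T j))) :
    ((α * γ : ℚ) : ℝ) * A + ((β * γ + α * δ : ℚ) : ℝ) * B + ((β * δ : ℚ) : ℝ) * C =
      ∑ i : Fin m, (((α' i * γ' i : ℚ) : ℝ) * A +
        ((β' i * γ' i + α' i * δ' i : ℚ) : ℝ) * B + ((β' i * δ' i : ℚ) : ℝ) * C) := by
  have ha : ∃ f : ℝ →ₗ[ℚ] ℚ, f (Real.sqrt p) = 0 ∧ f 1 = 1 := by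
    apply exists_fun
    intro q hq
    have hq0 : (q:ℝ) ≠ 0 := by rintro h; simp [h] at hq
    apply hirr
    refine ⟨q⁻¹, ?_⟩
    push_cast
    field_simp
    linarith
  have hb : ∃ f : ℝ →ₗ[ℚ] ℚ, f 1 = 0 ∧ f (Real.sqrt p) = 1 := by
    apply exists_fun
    intro q hq
    exact hirr ⟨q, by linarith⟩
  obtain ⟨f, hf0, hf1⟩ := ha
  obtain ⟨g, hg1, hg0⟩ := hb
  have hfv : ∀ s t : ℚ, f ((s:ℝ) + (t:ℝ) * Real.sqrt p) = s := by
    intro s t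
    have : ((s:ℝ) + (t:ℝ) * Real.sqrt p) = s • (1:ℝ) + t • Real.sqrt p := by
      simp [Rat.smul_def]
    rw [this, map_add, map_smul, map_smul, hf0, hf1]; simp
  have hgv : ∀ s t : ℚ, g ((s:ℝ) + (t:ℝ) * Real.sqrt p) = t := by
    intro s t
    have : ((s:ℝ) + (t:ℝ) * Real.sqrt p) = s • (1:ℝ) + t • Real.sqrt p := by
      simp [Rat.smul_def]
    rw [this, map_add, map_smul, map_smul, hg0, hg1]; simp
  let L : ((ℝ × ℝ) →₀ ℝ) →ₗ[ℝ] ℝ := Finsupp.linearCombination ℝ (fun st : ℝ × ℝ =>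
    ((f st.1 * f st.2 : ℚ) : ℝ) * A + ((g st.1 * f st.2 + f st.1 * g st.2 : ℚ) : ℝ) * B
      + ((g st.1 * g st.2 : ℚ) : ℝ) * C)
  have hL : ∀ x y w h : ℝ, L (cornerF x y w h) = ((f w * f h : ℚ) : ℝ) * A +
      ((g w * f h + f w * g h : ℚ) : ℝ) * B + ((g w * g h : ℚ) : ℝ) * C := by
    intro x y w h
    simp only [L, cornerF, map_add, map_sub, Finsupp.linearCombination_single, one_smul]
    push_cast
    ring
  obtain ⟨hW, hH, X, Y, rfl⟩ := hR
  choose hw hh x y hxy using hT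
  have key := tiling_corner X Y _ _ hW hH x y _ _ hw hh
    (by rw [← hcover]; exact Set.iUnion_congr fun i => (hxy i).symm)
    (by
      intro i j hij
      have := hdisj hij
      simpa only [hxy, interior_prod_eq, interior_Icc] using this)
  have := congrArg L key
  rw [map_sum] at this
  simpa only [hL, hfv, hgv] using this
end

section
/- Let α, β, γ, δ, p be rational numbers with p > 0, √p irrational and β ≠ 0 (i.e., β√p ∉ ℚ). Let u = α + β√p and suppose u > 0, and let v = δ·u + γ with v > 0. Then v ∈ B(u) if and only if either (γ = 0 and δ > 0) or else (α ≠ 0, γ·(α² − β²p)/α > 0, and δ + γ/(2α) ≥ 0). -/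
lemma aux_interp (φ : ℝ →+ ℝ) (S : Finset ℝ) :
    ∃ P : Polynomial ℝ, ∀ x ∈ S, P.eval x = φ x :=
  ⟨Lagrange.interpolate S id φ, fun x hx =>
    Lagrange.eval_interpolate_at_node (v := id) φ (Set.injOn_id _) hx⟩

lemma aux_int_s11 (P : Polynomial ℝ) (a b : ℝ) (h : a ≤ b) :
    ∫ x in Set.Icc a b, P.derivative.eval x = P.eval b - P.eval a := by
  rw [MeasureTheory.integral_Icc_eq_integral_Ioc, ← intervalIntegral.integral_of_le h]
  apply intervalIntegral.integral_eq_sub_of_hasDerivAt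
  · intro x _
    exact P.hasDerivAt x
  · exact (P.derivative.continuous).intervalIntegrable _ _

lemma aux_rect_int (P Q : Polynomial ℝ) (a b w h : ℝ) (hw : 0 < w) (hh : 0 < h) :
    ∫ z in Set.Icc a (a + w) ×ˢ Set.Icc b (b + h), P.derivative.eval z.1 * Q.derivative.eval z.2
     = (P.eval (a + w) - P.eval a) * (Q.eval (b + h) - Q.eval b) := by
  rw [MeasureTheory.Measure.volume_eq_prod,
    MeasureTheory.setIntegral_prod_mul (fun x => P.derivative.eval x)
      (fun x => Q.derivative.eval x), aux_int_s11 P _ _ (by linarith), aux_int_s11 Q _ _ (by linarith)]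

lemma tiling_add (φ ψ : ℝ →+ ℝ) (W H : ℝ) (R : Set (ℝ × ℝ)) (hR : IsRect R W H)
    (m : ℕ) (T : Fin m → Set (ℝ × ℝ)) (w h : Fin m → ℝ)
    (hT : ∀ i, IsRect (T i) (w i) (h i)) (hU : (⋃ i, T i) = R)
    (hd : Pairwise fun i j => Disjoint (interior (T i)) (interior (T j))) :
    φ W * ψ H = ∑ i, φ (w i) * ψ (h i) := by
  obtain ⟨hW, hH, X, Y, rfl⟩ := hR
  choose hw hh x y hxy using hT
  obtain ⟨P, hP⟩ := aux_interp φ ({X, X + W} ∪ (Finset.univ.image x ∪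
    Finset.univ.image fun i => x i + w i))
  obtain ⟨Q, hQ⟩ := aux_interp ψ ({Y, Y + H} ∪ (Finset.univ.image y ∪
    Finset.univ.image fun i => y i + h i))
  have key := MeasureTheory.integral_iUnion_ae (μ := MeasureTheory.volume) (s := T)
    (f := fun z : ℝ × ℝ => P.derivative.eval z.1 * Q.derivative.eval z.2) ?_ ?_ ?_
  · rw [hU, aux_rect_int P Q _ _ _ _ hW hH, tsum_fintype] at key
    rw [hP X (by simp), hP (X + W) (by simp), hQ Y (by simp), hQ (Y + H) (by simp)] at key
    simp only [map_add, add_sub_cancel_left] at key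
    rw [key]
    refine Finset.sum_congr rfl fun i _ => ?_
    rw [hxy i, aux_rect_int P Q _ _ _ _ (hw i) (hh i), hP (x i) (by simp),
      hP (x i + w i) (by simp), hQ (y i) (by simp), hQ (y i + h i) (by simp)]
    simp
  · intro i
    rw [hxy i]
    exact (measurableSet_Icc.prod measurableSet_Icc).nullMeasurableSet
  · intro i j hij
    have hf : ∀ i, MeasureTheory.volume (frontier (T i)) = 0 := by
      intro i
      apply Convex.addHaar_frontier
      rw [hxy i]
      exact (convex_Icc _ _).prod (convex_Icc _ _)
    refine MeasureTheory.measure_mono_null ?_ (MeasureTheory.measure_union_null (hf i) (hf j))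
    intro z hz
    by_contra hc
    simp only [Set.mem_union, not_or] at hc
    have h1 : ∀ k, z ∈ T k → z ∉ frontier (T k) → z ∈ interior (T k) := by
      intro k hk hk'
      by_contra h3
      exact hk' ⟨subset_closure hk, h3⟩
    exact Set.disjoint_left.1 (hd hij) (h1 i hz.1 hc.1) (h1 j hz.2 hc.2)
  · rw [hU]
    apply ContinuousOn.integrableOn_compact
    · exact isCompact_Icc.prod isCompact_Icc
    · apply Continuous.continuousOn
      exact (P.derivative.continuous.comp continuous_fst).mul
        (Q.derivative.continuous.comp continuous_snd)

/-- bilinear form with coefficients applied to coordinate pairs -/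
lemma form_nonneg (u s r : ℝ) (S N : ℝ) (φ ψ : ℝ →+ ℝ)
    (hψ : ∀ x, ψ x = φ (u * x)) (hq : ∀ x, ψ (u * x) = S * ψ x - N * φ x)
    (a b c d : ℝ)
    (hI : ∀ X Y : ℝ, 0 ≤ a * (Y * X) + b * (Y * Y) + c * ((S * Y - N * X) * X)
      + d * ((S * Y - N * X) * Y))
    (hII : ∀ X Y : ℝ, 0 ≤ a * (X * Y) + b * (X * (S * Y - N * X)) + c * (Y * Y)
      + d * (Y * (S * Y - N * X)))
    (R : Set (ℝ × ℝ)) (hR : IsRect R s r ∨ IsRect R r s) (hT : TiledBy R {u}) :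
    0 ≤ a * (φ s * φ r) + b * (φ s * ψ r) + c * (ψ s * φ r) + d * (ψ s * ψ r) := by
  obtain ⟨m, T, w, h, hT, hr, hU, hd⟩ := hT
  have hr' : ∀ i, w i = u * h i ∨ h i = u * w i := by
    intro i
    rcases hr i with h1 | h1
    · left
      have := (hT i).2.1
      rw [Set.mem_singleton_iff] at h1
      rw [← h1]; field_simp
    · right
      have := (hT i).1
      rw [Set.mem_singleton_iff] at h1
      rw [← h1]; field_simp
  rcases hR with hR | hR
  · rw [tiling_add φ φ _ _ R hR m T w h hT hU hd, tiling_add φ ψ _ _ R hR m T w h hT hU hd,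
      tiling_add ψ φ _ _ R hR m T w h hT hU hd, tiling_add ψ ψ _ _ R hR m T w h hT hU hd]
    simp only [Finset.mul_sum, ← Finset.sum_add_distrib]
    refine Finset.sum_nonneg fun i _ => ?_
    rcases hr' i with h1 | h1
    · rw [h1, hq, ← hψ]
      exact hI _ _
    · rw [h1, hq, ← hψ]
      exact hII _ _
  · rw [mul_comm (φ s), mul_comm (φ s), mul_comm (ψ s), mul_comm (ψ s),
      tiling_add φ φ _ _ R hR m T w h hT hU hd, tiling_add φ ψ _ _ R hR m T w h hT hU hd,
      tiling_add ψ φ _ _ R hR m T w h hT hU hd, tiling_add ψ ψ _ _ R hR m T w h hT hU hd]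
    simp only [Finset.mul_sum, ← Finset.sum_add_distrib]
    refine Finset.sum_nonneg fun i _ => ?_
    rcases hr' i with h1 | h1
    · rw [h1, hq, ← hψ]
      exact (hII (φ (h i)) (ψ (h i))).trans_eq (by ring)
    · rw [h1, hq, ← hψ]
      exact (hI (φ (w i)) (ψ (w i))).trans_eq (by ring)

lemma exists_functional (u r : ℝ) (hr : r ≠ 0) (hirr : Irrational u) :
    ∃ g : ℝ →ₗ[ℚ] ℝ, g r = 0 ∧ g (u * r) = 1 := by
  have hn : u * r ∉ Submodule.span ℚ {r} := by
    intro h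
    obtain ⟨q, hq⟩ := Submodule.mem_span_singleton.1 h
    rw [Rat.smul_def] at hq
    exact hirr ⟨q, mul_right_cancel₀ hr hq⟩
  obtain ⟨g, h1, h2⟩ := LinearMap.exists_extend_of_notMem (0 : Submodule.span ℚ {r} →ₗ[ℚ] ℝ) hn 1
  refine ⟨g, ?_, h2⟩
  have := congrArg (fun f => f ⟨r, Submodule.mem_span_singleton_self r⟩) h1
  simpa using this

lemma aux_union_s11 (s : ℕ → ℝ) (hs : Monotone s) (n : ℕ) :
    (⋃ i : Fin (n + 1), Set.Icc (s i) (s (i + 1))) = Set.Icc (s 0) (s (n + 1)) := by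
  ext x
  simp only [Set.mem_iUnion, Set.mem_Icc]
  constructor
  · rintro ⟨i, h1, h2⟩
    exact ⟨(hs (Nat.zero_le _)).trans h1, h2.trans (hs (by omega))⟩
  · rintro ⟨h1, h2⟩
    induction n with
    | zero => exact ⟨0, by simpa using h1, by simpa using h2⟩
    | succ k ih =>
      rcases le_total x (s (k + 1)) with h | h
      · obtain ⟨i, hi⟩ := ih h
        exact ⟨i.castSucc, by simpa using hi⟩
      · exact ⟨Fin.last _, by simpa using h, by simpa using h2⟩

lemma aux_disj_s11 (s : ℕ → ℝ) (hs : Monotone s) {i j : ℕ} (hij : i ≠ j) :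
    Disjoint (interior (Set.Icc (s i) (s (i + 1)))) (interior (Set.Icc (s j) (s (j + 1)))) := by
  rw [interior_Icc, interior_Icc, Set.disjoint_left]
  rintro x ⟨h1, h2⟩ ⟨h3, h4⟩
  rcases lt_or_gt_of_ne hij with h | h
  · have := hs (show i + 1 ≤ j from h)
    linarith
  · have := hs (show j + 1 ≤ i from h)
    linarith

lemma grid_tiling (u : ℝ) (c : ℕ → ℝ) (hc : ∀ i, 0 < c i) (hcu : ∀ i, c i = u ∨ 1 / c i = u)
    (n D : ℕ) : (∑ i ∈ Finset.range (n + 1), c i) / ((D + 1 : ℕ) : ℝ) ∈ BSet {u} := by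
  set s : ℕ → ℝ := fun k => ∑ i ∈ Finset.range k, c i with hs
  have hs1 : ∀ k, s (k + 1) = s k + c k := fun k => Finset.sum_range_succ _ _
  have hsm : Monotone s := monotone_nat_of_le_succ fun k => by rw [hs1]; linarith [hc k]
  have hs0 : s 0 = 0 := by simp [hs]
  have hsp : 0 < s (n + 1) := Finset.sum_pos (fun i _ => hc i) (by simp)
  have hcm : Monotone (fun k : ℕ => (k : ℝ)) := Nat.mono_cast
  refine ⟨s (n + 1), ((D + 1 : ℕ) : ℝ), Set.Icc (s 0) (s (n + 1)) ×ˢ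
    Set.Icc ((0 : ℕ) : ℝ) ((D + 1 : ℕ) : ℝ), ⟨hsp, by positivity, 0, 0, by simp [hs0]⟩, Or.inl rfl,
    (n + 1) * (D + 1), fun k => Set.Icc (s (finProdFinEquiv.symm k).1)
      (s ((finProdFinEquiv.symm k).1 + 1)) ×ˢ
      Set.Icc (((finProdFinEquiv.symm k).2 : ℕ) : ℝ) ((((finProdFinEquiv.symm k).2 : ℕ) + 1 : ℕ) : ℝ),
      fun k => c (finProdFinEquiv.symm k).1, fun k => 1, ?_, ?_, ?_, ?_⟩
  · intro k
    refine ⟨hc _, one_pos, s (finProdFinEquiv.symm k).1, (((finProdFinEquiv.symm k).2 : ℕ) : ℝ), ?_⟩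
    dsimp only
    rw [hs1]
    push_cast
    rfl
  · intro k
    simpa using hcu (finProdFinEquiv.symm k).1
  · rw [← aux_union_s11 s hsm n, ← aux_union_s11 _ hcm D]
    ext z
    simp only [Set.mem_iUnion, Set.mem_prod]
    constructor
    · rintro ⟨k, h1, h2⟩
      exact ⟨⟨_, h1⟩, ⟨_, h2⟩⟩
    · rintro ⟨⟨i, hi⟩, ⟨j, hj⟩⟩
      exact ⟨finProdFinEquiv (i, j), by
        rw [Equiv.symm_apply_apply]
        exact ⟨hi, hj⟩⟩
  · intro k l hkl
    have hne : finProdFinEquiv.symm k ≠ finProdFinEquiv.symm l :=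
      fun h => hkl (finProdFinEquiv.symm.injective h)
    dsimp only
    rw [interior_prod_eq, interior_prod_eq, Set.disjoint_prod]
    by_cases h1 : (finProdFinEquiv.symm k).1 = (finProdFinEquiv.symm l).1
    · right
      apply aux_disj_s11 _ hcm
      intro h2
      exact hne (Prod.ext h1 (Fin.ext h2))
    · left
      apply aux_disj_s11 s hsm
      intro h2
      exact h1 (Fin.ext h2)

lemma comb_mem (u : ℝ) (hu : 0 < u) (a b : ℚ) (ha : 0 ≤ a) (hb : 0 ≤ b)
    (hpos : 0 < (a : ℝ) * u + b / u) : (a : ℝ) * u + b / u ∈ BSet {u} := by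
  obtain ⟨A, hA⟩ := Int.eq_ofNat_of_zero_le (Rat.num_nonneg.2 ha)
  obtain ⟨C, hC⟩ := Int.eq_ofNat_of_zero_le (Rat.num_nonneg.2 hb)
  have hac : (a : ℝ) = A / a.den := by
    rw [Rat.cast_def, hA]; simp
  have hbc : (b : ℝ) = C / b.den := by
    rw [Rat.cast_def, hC]; simp
  have hda : (0 : ℝ) < a.den := by exact_mod_cast a.den_pos
  have hdb : (0 : ℝ) < b.den := by exact_mod_cast b.den_pos
  obtain ⟨D, hD⟩ := Nat.exists_eq_succ_of_ne_zero (mul_ne_zero a.den_nz b.den_nz)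
  set p := A * b.den with hp
  set q := C * a.den with hq
  have hv : (a : ℝ) * u + b / u = ((p : ℝ) * u + q * (1 / u)) / ((D + 1 : ℕ) : ℝ) := by
    rw [← Nat.succ_eq_add_one, ← hD, hac, hbc, hp, hq]
    push_cast
    field_simp
  have hsum : ∑ i ∈ Finset.range (p + q), (if i < p then u else 1 / u) =
      (p : ℝ) * u + q * (1 / u) := by
    rw [Finset.sum_range_add]
    congr 1
    · rw [Finset.sum_congr rfl (g := fun _ => u)]
      · simp
      · intro i hi
        simp [Finset.mem_range.1 hi]
    · simp
  rw [hv] at hpos ⊢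
  have hn : p + q ≠ 0 := by
    intro h
    rw [← hsum, h] at hpos
    simp at hpos
  obtain ⟨n, hn⟩ := Nat.exists_eq_succ_of_ne_zero hn
  rw [← hsum, hn]
  apply grid_tiling
  · intro i
    split_ifs <;> positivity
  · intro i
    split_ifs
    · left; rfl
    · right; simp

theorem stmt_11 (α β γ δ p : ℚ) (hp : 0 < p) (hirr : Irrational (Real.sqrt p))
    (hβ : β ≠ 0) (u v : ℝ)
    (hu : u = (α : ℝ) + (β : ℝ) * Real.sqrt p) (hupos : 0 < u)
    (hv : v = (δ : ℝ) * u + (γ : ℝ)) (hvpos : 0 < v) :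
    v ∈ BSet {u} ↔
      ((γ = 0 ∧ 0 < δ) ∨
        (α ≠ 0 ∧ 0 < γ * (α ^ 2 - β ^ 2 * p) / α ∧ 0 ≤ δ + γ / (2 * α))) := by
  have hsq : Real.sqrt p ^ 2 = p := Real.sq_sqrt (by exact_mod_cast hp.le)
  set N : ℚ := α ^ 2 - β ^ 2 * p with hN
  have hNr : (N : ℝ) = (α : ℝ) ^ 2 - β ^ 2 * p := by rw [hN]; push_cast; ring
  have hmin : u * u = 2 * α * u - N := by
    rw [hNr, hu]; linear_combination (β : ℝ) ^ 2 * hsq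
  have hui : Irrational u := by
    rw [hu]
    exact (hirr.ratCast_mul hβ).ratCast_add α
  have hN0 : N ≠ 0 := by
    intro h
    rw [h] at hmin
    have : u = 2 * α := by
      apply mul_right_cancel₀ hupos.ne'
      simpa using hmin
    apply hui
    exact ⟨2 * α, by push_cast; exact this.symm⟩
  have hdisc : (0 : ℚ) < α ^ 2 - N := by
    rw [hN]; have := sq_pos_of_ne_zero hβ; have := mul_pos this hp; linarith
  have hdisc' : (0 : ℝ) < (α : ℝ) ^ 2 - N := by exact_mod_cast hdisc
  constructor
  · rintro ⟨W, H, R, hR, hz, hT⟩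
    obtain ⟨s, r, hr, hs, hR'⟩ : ∃ s r : ℝ, 0 < r ∧ s = v * r ∧ (IsRect R s r ∨ IsRect R r s) := by
      rcases hz with hz | hz
      · exact ⟨W, H, hR.2.1, by have := hR.2.1; rw [hz]; field_simp, Or.inl hR⟩
      · exact ⟨H, W, hR.1, by have := hR.1; rw [hz]; field_simp, Or.inr hR⟩
    obtain ⟨g, hg0, hg1⟩ := exists_functional u r hr.ne' hui
    have hgm : ∀ (q : ℚ) (x : ℝ), g (q * x) = q * g x := by
      intro q x
      rw [← Rat.smul_def, map_smul, Rat.smul_def]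
    set φ : ℝ →+ ℝ := g.toAddMonoidHom with hφ
    set ψ : ℝ →+ ℝ := g.toAddMonoidHom.comp (AddMonoidHom.mulLeft u) with hψd
    have hφe : ∀ x, φ x = g x := fun x => rfl
    have hψ : ∀ x, ψ x = φ (u * x) := fun x => rfl
    have hq : ∀ x, ψ (u * x) = ((2 * α : ℚ) : ℝ) * ψ x - N * φ x := by
      intro x
      rw [hψ, hψ, hφe, hφe, hφe, ← hgm, ← hgm, ← map_sub]
      congr 1
      push_cast
      linear_combination x * hmin
    have hφr : φ r = 0 := hg0
    have hψr : ψ r = 1 := hg1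
    have hφs : φ s = δ := by
      rw [hs, hv, hφe, show ((δ : ℝ) * u + γ) * r = δ * (u * r) + γ * r by ring, map_add, hgm, hgm,
        hg0, hg1]; ring
    have hψs : ψ s = 2 * α * δ + γ := by
      rw [hs, hv, show ((δ : ℝ) * u + γ) * r = u * (δ * r) + γ * r by ring, map_add, hq, hψ, hψ,
        hφe, hφe, hφe, show u * ((δ : ℝ) * r) = δ * (u * r) by ring,
        show u * ((γ : ℝ) * r) = γ * (u * r) by ring, hgm, hgm, hgm, hg0, hg1]
      push_cast; ring
    have key := fun a b c d hI hII =>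
      form_nonneg u s r ((2 * α : ℚ) : ℝ) N φ ψ hψ hq a b c d hI hII R hR' hT
    simp only [hφr, hψr, hφs, hψs] at key
    push_cast at key
    by_cases hγ : γ = 0
    · left
      refine ⟨hγ, ?_⟩
      rw [hv, hγ] at hvpos
      have : (0 : ℝ) < δ := by
        apply pos_of_mul_pos_left _ hupos.le
        simpa using hvpos
      exact_mod_cast this
    · right
      have hα : α ≠ 0 := by
        intro h0
        apply hγ
        subst h0
        have k1 := key N 0 0 1 (fun X Y => by simp; ring_nf; rfl) (fun X Y => by simp; ring_nf; rfl)
        have k2 := key (-N) 0 0 (-1) (fun X Y => by simp; ring_nf; rfl)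
          (fun X Y => by simp; ring_nf; rfl)
        simp at k1 k2
        exact le_antisymm k2 k1
      refine ⟨hα, ?_, ?_⟩
      · have hNr0 : (N : ℝ) ≠ 0 := by exact_mod_cast hN0
        have k := key (N * (α / (2 * N)) - 2 * α * (1 - α ^ 2 / N)) (-2 * α * (α / (2 * N)))
          (1 - α ^ 2 / N) (α / (2 * N))
          (fun X Y => by
            have : 0 ≤ ((α : ℝ) ^ 2 - N) * X ^ 2 := by positivity
            refine this.trans_eq ?_
            field_simp
            ring)
          (fun X Y => by
            have : 0 ≤ (Y - α * X) ^ 2 := by positivity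
            refine this.trans_eq ?_
            field_simp
            ring)
        have k' : (0 : ℝ) ≤ α * γ / (2 * N) := by
          refine k.trans_eq ?_
          field_simp
          ring
        have k'' : 0 ≤ α * γ / (2 * N) := by exact_mod_cast k'
        have k3 : 0 ≤ γ * N / α := by
          have : γ * N / α = (α * γ / (2 * N)) * (2 * (N / α) ^ 2) := by field_simp
          rw [this]; positivity
        exact lt_of_le_of_ne k3 (by positivity)
      · have k := key (N * (α / 2)) 0 (-N) (α / 2)
          (fun X Y => by
            have : 0 ≤ (α * Y - N * X) ^ 2 := by positivity
            refine this.trans_eq ?_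
            ring)
          (fun X Y => by
            have : 0 ≤ ((α : ℝ) ^ 2 - N) * Y ^ 2 := by positivity
            refine this.trans_eq ?_
            ring)
        have k' : (0 : ℝ) ≤ α / 2 * (2 * α * δ + γ) := by
          refine k.trans_eq ?_
          ring
        have k'' : 0 ≤ α / 2 * (2 * α * δ + γ) := by exact_mod_cast k'
        have : δ + γ / (2 * α) = (α / 2 * (2 * α * δ + γ)) / α ^ 2 := by field_simp
        rw [this]; positivity
  · intro h
    obtain ⟨a, b, ha, hb, hab⟩ : ∃ a b : ℚ, 0 ≤ a ∧ 0 ≤ b ∧ v = (a : ℝ) * u + b / u := by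
      rcases h with ⟨h1, h2⟩ | ⟨h1, h2, h3⟩
      · exact ⟨δ, 0, h2.le, le_rfl, by rw [hv, h1]; simp⟩
      · refine ⟨δ + γ / (2 * α), γ * N / α / 2, h3, by positivity, ?_⟩
        have h1r : (α : ℝ) ≠ 0 := by exact_mod_cast h1
        rw [hv]
        push_cast
        field_simp
        linear_combination (-γ : ℝ) * hmin
    rw [hab] at hvpos ⊢
    exact comb_mem u hupos a b ha hb hvpos
end

section
/- Let α, β, γ, δ, p be rational numbers with p > 0, √p irrational and β ≠ 0. Let u = α + β√p and v = δ·u + γ, and suppose u > 0 and v > 0. Define M(u) = {e + f√p : e, f ∈ ℚ, e > 0, |f|/e ≤ |β|/α} and N(u) = {e + f√p : e, f ∈ ℚ, f > 0, |e|/f ≤ |α|/β}. Then exactly the following equivalence holds: [(α − β√p > 0 and v ∈ M(u)) or (α − β√p < 0 and v ∈ N(u))] if and only if [(γ = 0 and δ > 0) or (α ≠ 0 and γ·(α² − β²p)/α > 0 and δ + γ/(2α) ≥ 0)]. -/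
theorem aux_coord (p e f a b : ℚ) (hirr : Irrational (Real.sqrt p))
    (h : (a : ℝ) + (b : ℝ) * Real.sqrt p = (e : ℝ) + (f : ℝ) * Real.sqrt p) :
    e = a ∧ f = b := by
  have hf : f = b := by
    by_contra hne
    have hne' : (f : ℝ) - b ≠ 0 := by
      intro h0
      exact hne (by exact_mod_cast sub_eq_zero.mp h0)
    apply hirr
    refine ⟨(a - e) / (f - b), ?_⟩
    push_cast
    rw [div_eq_iff hne']
    linarith
  subst hf
  refine ⟨?_, rfl⟩
  have : (e : ℝ) = a := by linarith
  exact_mod_cast this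

theorem aux_A (α β γ δ D : ℚ) (hβ : β ≠ 0) (hα : 0 < α) (hD : 0 < D) :
    (0 < δ * α + γ ∧ |δ * β| / (δ * α + γ) ≤ |β| / α) ↔
      ((γ = 0 ∧ 0 < δ) ∨ (α ≠ 0 ∧ 0 < γ * D / α ∧ 0 ≤ δ + γ / (2 * α))) := by
  have hb : 0 < |β| := abs_pos.mpr hβ
  have h1 : 0 < γ * D / α ↔ 0 < γ := by
    rw [div_pos_iff_of_pos_right hα, mul_pos_iff_of_pos_right hD]
  have h2 : 0 ≤ δ + γ / (2 * α) ↔ 0 ≤ 2 * (δ * α) + γ := by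
    have : δ + γ / (2 * α) = (2 * (δ * α) + γ) / (2 * α) := by field_simp
    rw [this, le_div_iff₀ (by positivity), zero_mul]
  have h3 : 0 < δ * α + γ → (|δ * β| / (δ * α + γ) ≤ |β| / α ↔ |δ * α| ≤ δ * α + γ) := by
    intro he
    rw [div_le_div_iff₀ he hα, abs_mul, abs_mul, abs_of_pos hα,
      show |δ| * |β| * α = |β| * (|δ| * α) by ring, mul_le_mul_iff_right₀ hb]
  have h4 : 0 < δ ↔ 0 < δ * α := (mul_pos_iff_of_pos_right hα).symm
  rw [h1, h2, and_congr_right h3, h4, abs_le]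
  constructor
  · rintro ⟨he, h5, h6⟩
    rcases eq_or_ne γ 0 with h | h
    · left; exact ⟨h, by linarith⟩
    · right; exact ⟨hα.ne', lt_of_le_of_ne (by linarith) h.symm, by linarith⟩
  · rintro (⟨h, h'⟩ | ⟨_, h, h'⟩)
    · refine ⟨?_, ?_, ?_⟩ <;> linarith
    · refine ⟨?_, ?_, ?_⟩ <;> linarith

theorem aux_B (α β γ δ D : ℚ) (hβ : 0 < β) (hD : D < 0) :
    (0 < δ * β ∧ |δ * α + γ| / (δ * β) ≤ |α| / β) ↔
      ((γ = 0 ∧ 0 < δ) ∨ (α ≠ 0 ∧ 0 < γ * D / α ∧ 0 ≤ δ + γ / (2 * α))) := by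
  have h3 : 0 < δ → (|δ * α + γ| / (δ * β) ≤ |α| / β ↔ |δ * α + γ| ≤ δ * |α|) := by
    intro he
    rw [div_le_div_iff₀ (by positivity) hβ,
      show |α| * (δ * β) = (δ * |α|) * β by ring, mul_le_mul_iff_left₀ hβ]
  rw [mul_pos_iff_of_pos_right hβ, and_congr_right h3]
  rcases lt_trichotomy α 0 with hα | hα | hα
  · have h1 : 0 < γ * D / α ↔ 0 < γ := by
      have : γ * D / α = γ * (D / α) := by ring
      rw [this, mul_pos_iff_of_pos_right (div_pos_of_neg_of_neg hD hα)]
    have h2 : 0 ≤ δ + γ / (2 * α) ↔ 2 * (δ * α) + γ ≤ 0 := by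
      have : δ + γ / (2 * α) = (-(2 * (δ * α) + γ)) / (2 * -α) := by
        have := hα.ne
        field_simp
        try ring
      rw [this, le_div_iff₀ (by linarith), zero_mul]
      constructor <;> intro h <;> linarith
    rw [h1, h2, abs_of_neg hα, abs_le]
    constructor
    · rintro ⟨he, h5, h6⟩
      rcases eq_or_ne γ 0 with h | h
      · left; exact ⟨h, he⟩
      · right; exact ⟨hα.ne, lt_of_le_of_ne (by linarith) h.symm, by linarith⟩
    · rintro (⟨h, h'⟩ | ⟨_, h, h'⟩)
      · have := mul_neg_of_pos_of_neg h' hα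
        refine ⟨h', ?_, ?_⟩ <;> linarith
      · refine ⟨?_, ?_, ?_⟩
        · exact pos_of_mul_neg_left (by linarith : δ * α < 0) hα.le
        · linarith
        · linarith
  · subst hα
    simp only [mul_zero, zero_add, abs_zero, abs_nonpos_iff, ne_eq, not_true, false_and, or_false]
    exact and_comm
  · have h1 : 0 < γ * D / α ↔ γ < 0 := by
      have : γ * D / α = (-γ) * (-D / α) := by ring
      rw [this, mul_pos_iff_of_pos_right (div_pos (by linarith) hα), neg_pos]
    have h2 : 0 ≤ δ + γ / (2 * α) ↔ 0 ≤ 2 * (δ * α) + γ := by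
      have : δ + γ / (2 * α) = (2 * (δ * α) + γ) / (2 * α) := by field_simp
      rw [this, le_div_iff₀ (by positivity), zero_mul]
    rw [h1, h2, abs_of_pos hα, abs_le]
    constructor
    · rintro ⟨he, h5, h6⟩
      rcases eq_or_ne γ 0 with h | h
      · left; exact ⟨h, he⟩
      · right; exact ⟨hα.ne', lt_of_le_of_ne (by linarith) h, by linarith⟩
    · rintro (⟨h, h'⟩ | ⟨_, h, h'⟩)
      · have := mul_pos h' hα
        refine ⟨h', ?_, ?_⟩ <;> linarith
      · refine ⟨?_, ?_, ?_⟩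
        · exact (mul_pos_iff_of_pos_right hα).mp (by linarith)
        · linarith
        · linarith

/-- Equivalence of the conditions of Theorem 6 with membership in `M(u)` or
`N(u)`: purely algebraic statement. -/
theorem stmt_12 (α β γ δ p : ℚ) (hp : 0 < p) (hirr : Irrational (Real.sqrt p))
    (hβ : β ≠ 0) (u v : ℝ)
    (hu : u = (α : ℝ) + (β : ℝ) * Real.sqrt p) (hupos : 0 < u)
    (hv : v = (δ : ℝ) * u + (γ : ℝ)) (hvpos : 0 < v) :
    ((0 < (α : ℝ) - (β : ℝ) * Real.sqrt p ∧
        ∃ e f : ℚ, v = (e : ℝ) + (f : ℝ) * Real.sqrt p ∧ 0 < e ∧ |f| / e ≤ |β| / α) ∨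
     ((α : ℝ) - (β : ℝ) * Real.sqrt p < 0 ∧
        ∃ e f : ℚ, v = (e : ℝ) + (f : ℝ) * Real.sqrt p ∧ 0 < f ∧ |e| / f ≤ |α| / β)) ↔
      ((γ = 0 ∧ 0 < δ) ∨
        (α ≠ 0 ∧ 0 < γ * (α ^ 2 - β ^ 2 * p) / α ∧ 0 ≤ δ + γ / (2 * α))) := by
  have hp0 : (0 : ℝ) < p := by exact_mod_cast hp
  have hs : 0 < Real.sqrt p := Real.sqrt_pos.mpr hp0
  have hsq : Real.sqrt p * Real.sqrt p = p := Real.mul_self_sqrt hp0.le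
  have hv' : v = ((δ * α + γ : ℚ) : ℝ) + ((δ * β : ℚ) : ℝ) * Real.sqrt p := by
    rw [hv, hu]; push_cast; ring
  have hD : ((α ^ 2 - β ^ 2 * p : ℚ) : ℝ) = u * ((α : ℝ) - (β : ℝ) * Real.sqrt p) := by
    rw [hu]; push_cast; linear_combination (β : ℝ) ^ 2 * hsq
  have hex : ∀ P : ℚ → ℚ → Prop,
      (∃ e f : ℚ, v = (e : ℝ) + (f : ℝ) * Real.sqrt p ∧ P e f) ↔ P (δ * α + γ) (δ * β) := by
    intro P
    constructor
    · rintro ⟨e, f, h, hP⟩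
      obtain ⟨h1, h2⟩ := aux_coord p e f _ _ hirr (hv'.symm.trans h)
      rwa [h1, h2] at hP
    · intro h
      exact ⟨_, _, hv', h⟩
  rw [hex (fun e f => 0 < e ∧ |f| / e ≤ |β| / α), hex (fun e f => 0 < f ∧ |e| / f ≤ |α| / β)]
  rcases lt_trichotomy ((α : ℝ) - (β : ℝ) * Real.sqrt p) 0 with h | h | h
  · have hb : 0 < β := by
      have : 0 < (β : ℝ) * Real.sqrt p := by linarith
      exact_mod_cast (mul_pos_iff_of_pos_right hs).mp this
    have hD' : α ^ 2 - β ^ 2 * p < 0 := by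
      have := mul_neg_of_pos_of_neg hupos h
      rw [← hD] at this
      exact_mod_cast this
    rw [← aux_B α β γ δ _ hb hD']
    simp only [h, h.le.not_gt, false_and, true_and, false_or]
  · exfalso
    obtain ⟨_, h2⟩ := aux_coord p 0 0 α (-β) hirr (by push_cast; linarith)
    exact hβ (by linarith)
  · have ha : 0 < α := by
      have : (0 : ℝ) < α := by linarith
      exact_mod_cast this
    have hD' : 0 < α ^ 2 - β ^ 2 * p := by
      have := mul_pos hupos h
      rw [← hD] at this
      exact_mod_cast this
    rw [← aux_A α β γ δ _ hβ ha hD']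
    simp only [h, h.le.not_gt, false_and, true_and, or_false]
end
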